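/- arXiv:2301.09104 — 4 statements merged into one kernel-verified Lean document; each statement's English description precedes it below -/
import Mathlib

section
/- Let n ≥ 2 and let C be the cycle graph on the 2n vertices u_1, w_1, u_2, w_2, …, u_n, w_n with edge set {{u_i,w_i} : 1 ≤ i ≤ n} ∪ {{w_j,u_{j+1}} : 1 ≤ j ≤ n−1} ∪ {{w_n,u_1}}, and let Π = {{w_n,u_1}} ∪ {{w_j,u_{j+1}} : 1 ≤ j ≤ n−1} with sink {w_n,u_1}. Then the toppling ideal I_Π of the parcycle (C,Π), an ideal of K[x_{u_1},…,x_{u_n}, x_{w_1},…,x_{w_n}], equals the binomial edge ideal of the complete graph K_n, i.e. I_Π = ⟨x_{u_i} x_{w_j} − x_{u_j} x_{w_i} : 1 ≤ i < j ≤ n⟩. -/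
noncomputable section

open MvPolynomial

/-- Row of the Laplacian matrix of the `n`-cycle on `Fin n`
(vertex `j` of the paper corresponds to index `j-1`). -/
def cycLap (n : ℕ) [NeZero n] (j : Fin n) : Fin n → ℤ :=
  fun l => if l = j then 2 else if l = j + 1 ∨ j = l + 1 then -1 else 0

/-- The cycle graph `C_n` on `Fin n`. -/
def cycleG (n : ℕ) [NeZero n] : SimpleGraph (Fin n) :=
  SimpleGraph.fromRel (fun i j => j = i + 1)

/-- The lattice ideal of a lattice `L ⊆ ℤ^n` in `K[x_1,…,x_n]`. -/
def latticeIdeal (n : ℕ) (K : Type*) [Field K] (L : Submodule ℤ (Fin n → ℤ)) :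
    Ideal (MvPolynomial (Fin n) K) :=
  Ideal.span { f | ∃ u v : Fin n → ℕ,
    ((fun i => (u i : ℤ)) - fun i => (v i : ℤ)) ∈ L ∧
    f = (∏ i, X i ^ u i) - ∏ i, X i ^ v i }

open Classical in
/-- The exponent vector of the monomial `x^{S → S̄}`: the `i`-th entry is the number
of edges of the cycle joining `i ∈ S` to the complement of `S`. -/
def outVec (n : ℕ) [NeZero n] (S : Set (Fin n)) (i : Fin n) : ℕ :=
  if i ∈ S then (if i + 1 ∈ S then 0 else 1) + (if i - 1 ∈ S then 0 else 1) else 0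

/-- The monomial `x^{S → S̄}`. -/
def outMono (n : ℕ) (K : Type*) [NeZero n] [Field K] (S : Set (Fin n)) :
    MvPolynomial (Fin n) K :=
  ∏ i, X i ^ outVec n S i

open Classical in
/-- `b_V = ∑_{j ∈ V} b_j`, sum of Laplacian rows over a set of vertices. -/
def bPart (n : ℕ) [NeZero n] (S : Set (Fin n)) : Fin n → ℤ :=
  ∑ j : Fin n, if j ∈ S then cycLap n j else 0

/-- The toppling ideal of the parcycle `(C_n, {V_1,…,V_k})`: the lattice ideal of the
lattice generated by the vectors `b_{V_j}`. -/
def topplingPar (n k : ℕ) (K : Type*) [NeZero n] [Field K] (V : Fin k → Set (Fin n)) :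
    Ideal (MvPolynomial (Fin n) K) :=
  latticeIdeal n K (Submodule.span ℤ (Set.range fun j => bPart n (V j)))

/-- `S` is a connected-parset of the parcycle `(C_n, V)`: a union of parts inducing a
connected subgraph of the cycle. -/
def isConnParset (n k : ℕ) [NeZero n] (V : Fin k → Set (Fin n)) (S : Set (Fin n)) : Prop :=
  (∃ T : Set (Fin k), S = ⋃ j ∈ T, V j) ∧ ((cycleG n).induce S).Connected

/-- The `G`-parking function ideal of a parcycle with sink part `V sink`. -/
def gparkIdeal (n k : ℕ) (K : Type*) [NeZero n] [Field K] (V : Fin k → Set (Fin n))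
    (sink : Fin k) : Ideal (MvPolynomial (Fin n) K) :=
  Ideal.span { f | ∃ S : Set (Fin n), isConnParset n k V S ∧ ¬ V sink ⊆ S ∧
    f = outMono n K S }

/-- The index in `Fin (n+1)` of the paper's variable `x_m`, `1 ≤ m ≤ n+1`. -/
def xIdx (n : ℕ) (m : ℕ) : Fin (n + 1) := ⟨(m - 1) % (n + 1), Nat.mod_lt _ (Nat.succ_pos n)⟩

/-- The defining ideal `P_n ⊆ K[x_1,…,x_{n+1}]` of the rational normal curve of degree `n`. -/
def Pideal (n : ℕ) (K : Type*) [Field K] : Ideal (MvPolynomial (Fin (n + 1)) K) :=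
  Ideal.span { f | ∃ i j : ℕ, 2 ≤ i ∧ i ≤ j ∧ j ≤ n ∧
    f = X (xIdx n i) * X (xIdx n j) - X (xIdx n (i - 1)) * X (xIdx n (j + 1)) }

open Classical in
/-- The `λ`-weight of an exponent vector. -/
def wdeg (n : ℕ) (lam : Fin n → ℕ) (u : Fin n →₀ ℕ) : ℕ := ∑ i, lam i * u i

open Classical in
/-- The `λ`-initial form of a polynomial: the sum of its terms of maximal `λ`-weight. -/
def initForm (n : ℕ) (K : Type*) [Field K] (lam : Fin n → ℕ) (f : MvPolynomial (Fin n) K) :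
    MvPolynomial (Fin n) K :=
  ∑ u ∈ f.support.filter (fun u => wdeg n lam u = f.support.sup (wdeg n lam)),
    monomial u (coeff u f)

/-- The `λ`-initial ideal of an ideal. -/
def initIdeal (n : ℕ) (K : Type*) [Field K] (lam : Fin n → ℕ)
    (I : Ideal (MvPolynomial (Fin n) K)) : Ideal (MvPolynomial (Fin n) K) :=
  Ideal.span { g | ∃ f ∈ I, f ≠ 0 ∧ g = initForm n K lam f }

/-- The index in `Fin (2n)` of the vertex `u_i` (`1 ≤ i ≤ n`) of the cycle
`u_1, w_1, u_2, w_2, …, u_n, w_n`. -/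
def uIdx (n : ℕ) [NeZero n] (i : ℕ) : Fin (2 * n) :=
  ⟨(2 * (i - 1)) % (2 * n),
    Nat.mod_lt _ (by have := Nat.pos_of_ne_zero (NeZero.ne n); omega)⟩

/-- The index in `Fin (2n)` of the vertex `w_i` (`1 ≤ i ≤ n`). -/
def wIdx (n : ℕ) [NeZero n] (i : ℕ) : Fin (2 * n) :=
  ⟨(2 * (i - 1) + 1) % (2 * n),
    Nat.mod_lt _ (by have := Nat.pos_of_ne_zero (NeZero.ne n); omega)⟩

/- HELPERS -/
theorem aux_monomial_eq {R : Type*} [CommRing R] {n : ℕ} (x y : Fin n → R)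
    (hxy : ∀ i j, x i * y j = x j * y i) (N : ℕ) :
    ∀ a b a' b' : Fin n → ℕ, ∑ i, a i = N → ∑ i, a' i = N → (∀ i, a i + b i = a' i + b' i) →
      ∏ i, (x i ^ a i * y i ^ b i) = ∏ i, (x i ^ a' i * y i ^ b' i) := by
  classical
  have hM : ∀ (a b : Fin n → ℕ) (i j : Fin n),
      ∏ k, (x k ^ (a + Pi.single i 1 : Fin n → ℕ) k * y k ^ (b + Pi.single j 1 : Fin n → ℕ) k) =
        (∏ k, (x k ^ a k * y k ^ b k)) * (x i * y j) := by
    intro a b i j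
    have h1 : ∀ (z : Fin n → R) (i : Fin n), ∏ k, z k ^ (Pi.single i 1 : Fin n → ℕ) k = z i := by
      intro z i
      rw [Finset.prod_eq_single i]
      · simp
      · intro k _ hk
        simp [Pi.single_eq_of_ne hk]
      · simp
    simp only [Pi.add_apply, pow_add, Finset.prod_mul_distrib, h1]
    ring
  have hsub : ∀ (a : Fin n → ℕ) (i : Fin n), 0 < a i →
      ∃ a0 : Fin n → ℕ, a = a0 + Pi.single i 1 := by
    intro a i h
    refine ⟨a - Pi.single i 1, ?_⟩
    ext k
    by_cases hk : k = i
    · subst hk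
      simp
      omega
    · simp [Pi.single_eq_of_ne hk]
  induction N with
  | zero =>
    intro a b a' b' ha ha' h
    have h1 : ∀ i, a i = 0 := fun i => by simpa using (Finset.sum_eq_zero_iff.1 ha) i
    have h2 : ∀ i, a' i = 0 := fun i => by simpa using (Finset.sum_eq_zero_iff.1 ha') i
    refine Finset.prod_congr rfl fun i _ => ?_
    have := h i
    rw [h1, h2] at *
    rw [show b i = b' i by omega]
  | succ N ih =>
    intro a b a' b' ha ha' h
    by_cases hle : ∀ i, a i ≤ a' i
    · have he : ∀ i, a i = a' i := fun i =>
        (Finset.sum_eq_sum_iff_of_le (fun i _ => hle i)).1 (ha.trans ha'.symm) i (Finset.mem_univ i)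
      refine Finset.prod_congr rfl fun i _ => ?_
      have := h i
      rw [he] at *
      rw [show b i = b' i by omega]
    by_cases hge : ∀ i, a' i ≤ a i
    · have he : ∀ i, a' i = a i := fun i =>
        (Finset.sum_eq_sum_iff_of_le (fun i _ => hge i)).1 (ha'.trans ha.symm) i (Finset.mem_univ i)
      refine Finset.prod_congr rfl fun i _ => ?_
      have := h i
      rw [he] at *
      rw [show b i = b' i by omega]
    push Not at hle hge
    obtain ⟨i, hi⟩ := hle
    obtain ⟨j, hj⟩ := hge
    have h_i := h i
    have h_j := h j
    obtain ⟨a, rfl⟩ := hsub a i (by omega)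
    obtain ⟨b, rfl⟩ := hsub b j (by omega)
    obtain ⟨a', rfl⟩ := hsub a' j (by omega)
    obtain ⟨b', rfl⟩ := hsub b' i (by omega)
    rw [hM, hM, hxy i j]
    congr 1
    simp only [Pi.add_apply, Finset.sum_add_distrib, Finset.sum_pi_single', Finset.mem_univ,
      if_true] at ha ha'
    apply ih
    · simpa using ha
    · simpa using ha'
    · intro k
      have := h k
      simp only [Pi.add_apply] at this
      omega

def auxU {n : ℕ} (i : Fin n) : Fin (2 * n) := ⟨2 * i, by omega⟩

def auxW {n : ℕ} (i : Fin n) : Fin (2 * n) := ⟨2 * i + 1, by omega⟩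

theorem auxU_inj {n : ℕ} (i j : Fin n) : auxU i = auxU j ↔ i = j := by
  simp only [auxU, Fin.ext_iff]; omega

theorem auxW_inj {n : ℕ} (i j : Fin n) : auxW i = auxW j ↔ i = j := by
  simp only [auxW, Fin.ext_iff]; omega

theorem auxU_ne {n : ℕ} (i j : Fin n) : auxU i ≠ auxW j := by
  simp only [auxU, auxW, ne_eq, Fin.ext_iff]; omega

theorem auxW_ne {n : ℕ} (i j : Fin n) : auxW i ≠ auxU j := (auxU_ne j i).symm

theorem aux_cases {n : ℕ} (l : Fin (2 * n)) : (∃ i, l = auxU i) ∨ (∃ i, l = auxW i) := by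
  rcases Nat.even_or_odd' (l : ℕ) with ⟨c, hc | hc⟩
  · exact Or.inl ⟨⟨c, by omega⟩, by simp [auxU, Fin.ext_iff, hc]⟩
  · exact Or.inr ⟨⟨c, by omega⟩, by simp [auxW, Fin.ext_iff, hc]⟩

theorem aux_prod {R : Type*} [CommRing R] {n : ℕ} (f : Fin (2 * n) → R) :
    ∏ p, f p = ∏ i : Fin n, (f (auxU i) * f (auxW i)) := by
  have hb : Function.Bijective (Sum.elim auxU auxW : Fin n ⊕ Fin n → Fin (2 * n)) := by
    constructor
    · rintro (i | i) (j | j) h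
      · exact congrArg _ ((auxU_inj i j).1 h)
      · exact absurd h (auxU_ne i j)
      · exact absurd h (auxW_ne i j)
      · exact congrArg _ ((auxW_inj i j).1 h)
    · intro l
      rcases aux_cases l with ⟨i, rfl⟩ | ⟨i, rfl⟩
      · exact ⟨Sum.inl i, rfl⟩
      · exact ⟨Sum.inr i, rfl⟩
  rw [← (Equiv.ofBijective _ hb).prod_comp, Fintype.prod_sum_type, Finset.prod_mul_distrib]
  rfl

theorem aux_uIdx {n : ℕ} [NeZero n] (i : Fin n) : uIdx n ((i : ℕ) + 1) = auxU i := by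
  simp only [uIdx, auxU, Fin.ext_iff, Nat.add_sub_cancel]
  exact Nat.mod_eq_of_lt (by omega)

theorem aux_wIdx {n : ℕ} [NeZero n] (i : Fin n) : wIdx n ((i : ℕ) + 1) = auxW i := by
  simp only [wIdx, auxW, Fin.ext_iff, Nat.add_sub_cancel]
  exact Nat.mod_eq_of_lt (by omega)

theorem aux_uIdx' {n : ℕ} [NeZero n] (i : Fin n) : uIdx n ((i : ℕ) + 2) = auxU (i + 1) := by
  simp only [uIdx, auxU, Fin.ext_iff, Fin.val_add, Fin.val_one', Nat.add_mod_mod]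
  rw [← Nat.mul_mod_mul_left]
  rfl

theorem auxU_succ {n : ℕ} [NeZero n] [NeZero (2 * n)] (i : Fin n) :
    auxU i + 1 = auxW i := by
  simp only [auxU, auxW, Fin.ext_iff, Fin.val_add, Fin.val_one', Nat.add_mod_mod]
  exact Nat.mod_eq_of_lt (by omega)

theorem auxW_succ {n : ℕ} [NeZero n] [NeZero (2 * n)] (i : Fin n) :
    auxW i + 1 = auxU (i + 1) := by
  simp only [auxU, auxW, Fin.ext_iff, Fin.val_add, Fin.val_one', Nat.add_mod_mod]
  rw [← Nat.mul_mod_mul_left]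
  rfl

def auxD {n : ℕ} (i : Fin n) : Fin (2 * n) → ℤ := Pi.single (auxU i) 1 - Pi.single (auxW i) 1

theorem auxD_U {n : ℕ} (i j : Fin n) : auxD i (auxU j) = if j = i then 1 else 0 := by
  simp [auxD, Pi.single_apply, auxU_inj, auxU_ne]

theorem auxD_W {n : ℕ} (i j : Fin n) : auxD i (auxW j) = if j = i then -1 else 0 := by
  simp only [auxD, Pi.sub_apply, Pi.single_apply, auxW_inj, auxW_ne, if_false]
  split_ifs <;> simp

theorem aux_bPart {n : ℕ} [NeZero n] [NeZero (2 * n)] (hn : 2 ≤ n) (j : Fin n) :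
    bPart (2 * n) ({wIdx n ((j : ℕ) + 1), uIdx n ((j : ℕ) + 2)} : Set (Fin (2 * n))) =
      auxD (j + 1) - auxD j := by
  classical
  have hne : j + 1 ≠ j := by
    intro h
    have h1 : (1 : Fin n) = 0 := by simpa using h
    have := congrArg Fin.val h1
    rw [Fin.val_one', Fin.val_zero, Nat.mod_eq_of_lt (by omega)] at this
    omega
  rw [aux_wIdx, aux_uIdx']
  have h : bPart (2 * n) ({auxW j, auxU (j + 1)} : Set (Fin (2 * n))) =
      cycLap (2 * n) (auxW j) + cycLap (2 * n) (auxU (j + 1)) := by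
    unfold bPart
    rw [← Finset.sum_pair (auxW_ne j (j + 1)),
      ← Finset.sum_subset (Finset.subset_univ ({auxW j, auxU (j + 1)} : Finset (Fin (2 * n))))]
    · refine Finset.sum_congr rfl fun p hp => if_pos ?_
      simpa using hp
    · intro p _ hp
      refine if_neg ?_
      simpa using hp
  rw [h]
  ext l
  rcases aux_cases l with ⟨i, rfl⟩ | ⟨i, rfl⟩
  · simp only [Pi.add_apply, Pi.sub_apply, cycLap, auxD_U, auxU_succ, auxW_succ, auxU_inj,
      auxW_inj, auxU_ne, auxW_ne, if_false, or_false, false_or]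
    by_cases h1 : i = j + 1
    · subst h1
      simp [hne]
    · by_cases h2 : i = j
      · subst h2
        simp [hne.symm]
      · simp [h1, h2, Ne.symm h2]
  · simp only [Pi.add_apply, Pi.sub_apply, cycLap, auxD_W, auxU_succ, auxW_succ, auxU_inj,
      auxW_inj, auxU_ne, auxW_ne, if_false, or_false, false_or]
    by_cases h1 : i = j + 1
    · subst h1
      simp [hne]
    · by_cases h2 : i = j
      · subst h2
        simp [hne.symm]
      · simp [h1, h2, Ne.symm h2]

theorem aux_lattice_mem {n : ℕ} [NeZero n] (L : Submodule ℤ (Fin (2 * n) → ℤ))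
    (hL : ∀ j : Fin n, auxD (j + 1) - auxD j ∈ L) (i j : Fin n) : auxD i - auxD j ∈ L := by
  have key : ∀ (k : ℕ), auxD (Fin.ofNat n k) - auxD (0 : Fin n) ∈ L := by
    intro k
    induction k with
    | zero =>
      have : Fin.ofNat n 0 = 0 := rfl
      simp [this]
    | succ k ih =>
      have h : Fin.ofNat n (k + 1) = Fin.ofNat n k + 1 := by
        simp [Fin.ext_iff, Fin.val_add, Fin.ofNat]
      have := L.add_mem (hL (Fin.ofNat n k)) ih
      rw [h]
      simpa using this
  have h : ∀ i : Fin n, Fin.ofNat n i = i := fun i => by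
    simp [Fin.ext_iff, Fin.ofNat, Nat.mod_eq_of_lt i.2]
  have := L.sub_mem (key i) (key j)
  rw [h, h] at this
  simpa using this

theorem aux_lattice_inv {n : ℕ} [NeZero n] (x : Fin (2 * n) → ℤ)
    (hx : x ∈ Submodule.span ℤ (Set.range fun j : Fin n => auxD (j + 1) - auxD j)) :
    (∀ i : Fin n, x (auxU i) + x (auxW i) = 0) ∧ ∑ i : Fin n, x (auxU i) = 0 := by
  induction hx using Submodule.span_induction with
  | mem x h =>
    obtain ⟨j, rfl⟩ := h
    constructor
    · intro i
      simp only [Pi.sub_apply, auxD_U, auxD_W]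
      split_ifs <;> simp
    · simp [auxD_U]
  | zero => simp
  | add x y _ _ hx hy =>
    refine ⟨fun i => ?_, ?_⟩
    · have := hx.1 i
      have := hy.1 i
      simp only [Pi.add_apply]
      omega
    · simp [Finset.sum_add_distrib, hx.2, hy.2]
  | smul a x _ hx =>
    refine ⟨fun i => ?_, ?_⟩
    · simp [← mul_add, hx.1 i]
    · simp [← Finset.mul_sum, hx.2]

/-- The toppling ideal of the parcycle on the `2n`-cycle
`u_1, w_1, …, u_n, w_n` with parts `{w_n, u_1}` (the sink) and `{w_j, u_{j+1}}`
(`1 ≤ j ≤ n-1`) equals the binomial edge ideal of the complete graph `K_n`. -/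
theorem statement_9 (K : Type*) [Field K] (n : ℕ) [NeZero n] [NeZero (2 * n)]
    (hn : 2 ≤ n) :
    latticeIdeal (2 * n) K
      (Submodule.span ℤ (Set.range fun j : Fin n =>
        bPart (2 * n) ({wIdx n ((j : ℕ) + 1), uIdx n ((j : ℕ) + 2)} : Set (Fin (2 * n)))))
    = Ideal.span { f | ∃ i j : ℕ, 1 ≤ i ∧ i < j ∧ j ≤ n ∧
        f = X (uIdx n i) * X (wIdx n j) - X (uIdx n j) * X (wIdx n i) } := by
  have hset : (fun j : Fin n =>
      bPart (2 * n) ({wIdx n ((j : ℕ) + 1), uIdx n ((j : ℕ) + 2)} : Set (Fin (2 * n)))) =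
      fun j : Fin n => auxD (j + 1) - auxD j := funext fun j => aux_bPart hn j
  rw [hset]
  apply le_antisymm
  · set J := Ideal.span { f : MvPolynomial (Fin (2 * n)) K | ∃ i j : ℕ, 1 ≤ i ∧ i < j ∧ j ≤ n ∧
        f = X (uIdx n i) * X (wIdx n j) - X (uIdx n j) * X (wIdx n i) } with hJ
    have hlt : ∀ i j : Fin n, i < j →
        (X (auxU i) * X (auxW j) - X (auxU j) * X (auxW i) : MvPolynomial (Fin (2 * n)) K) ∈ J := by
      intro i j hij
      refine Ideal.subset_span ⟨(i : ℕ) + 1, (j : ℕ) + 1, by omega, by omega, by omega, ?_⟩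
      simp only [aux_uIdx, aux_wIdx]
    have hq : ∀ i j : Fin n,
        Ideal.Quotient.mk J (X (auxU i)) * Ideal.Quotient.mk J (X (auxW j)) =
        Ideal.Quotient.mk J (X (auxU j)) * Ideal.Quotient.mk J (X (auxW i)) := by
      intro i j
      rcases lt_trichotomy i j with h | rfl | h
      · rw [← map_mul, ← map_mul]
        exact Ideal.Quotient.eq.2 (hlt i j h)
      · rfl
      · rw [← map_mul, ← map_mul]
        exact (Ideal.Quotient.eq.2 (hlt j i h)).symm
    unfold latticeIdeal
    rw [Ideal.span_le]
    rintro f ⟨u, v, huv, rfl⟩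
    obtain ⟨h1, h2⟩ := aux_lattice_inv _ huv
    simp only [Pi.sub_apply, Finset.sum_sub_distrib] at h1 h2
    refine Ideal.Quotient.eq.1 ?_
    rw [aux_prod, aux_prod]
    simp only [map_prod, map_mul, map_pow]
    refine aux_monomial_eq (fun i => Ideal.Quotient.mk J (X (auxU i)))
      (fun i => Ideal.Quotient.mk J (X (auxW i))) hq (∑ i : Fin n, u (auxU i))
      (fun i => u (auxU i)) (fun i => u (auxW i)) (fun i => v (auxU i)) (fun i => v (auxW i))
      rfl ?_ ?_
    · have : ((∑ i : Fin n, u (auxU i) : ℕ) : ℤ) = ((∑ i : Fin n, v (auxU i) : ℕ) : ℤ) := by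
        push_cast
        linarith
      exact_mod_cast this.symm
    · intro i
      have := h1 i
      omega
  · rw [Ideal.span_le]
    rintro f ⟨i, j, hi, hij, hj, rfl⟩
    obtain ⟨i, rfl⟩ : ∃ i' : Fin n, i = (i' : ℕ) + 1 := ⟨⟨i - 1, by omega⟩, by simp; omega⟩
    obtain ⟨j, rfl⟩ : ∃ j' : Fin n, j = (j' : ℕ) + 1 := ⟨⟨j - 1, by omega⟩, by simp; omega⟩
    simp only [aux_uIdx, aux_wIdx]
    refine Ideal.subset_span ⟨Pi.single (auxU i) 1 + Pi.single (auxW j) 1,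
      Pi.single (auxU j) 1 + Pi.single (auxW i) 1, ?_, ?_⟩
    · have := aux_lattice_mem (Submodule.span ℤ (Set.range fun j : Fin n => auxD (j + 1) - auxD j))
        (fun j => Submodule.subset_span ⟨j, rfl⟩) i j
      convert this using 1
      ext l
      simp only [auxD, Pi.sub_apply, Pi.add_apply, Pi.single_apply]
      push_cast
      ring
    · have h1 : ∀ p : Fin (2 * n), ∏ k, (X k : MvPolynomial (Fin (2 * n)) K) ^
          (Pi.single p 1 : Fin (2 * n) → ℕ) k = X p := by
        intro p
        rw [Finset.prod_eq_single p]
        · simp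
        · intro k _ hk
          simp [Pi.single_eq_of_ne hk]
        · simp
      simp only [Pi.add_apply, pow_add, Finset.prod_mul_distrib, h1]
end
end

section
/- Let (C_n,Π) be a parcycle with Π = {V_1,…,V_k} and sink V_k. Then for every i ≥ 0 the Betti numbers of the quotients by the toppling ideal and by the G-parking function ideal agree: β_i(R_n/I_Π) = β_i(R_n/M_Π). Moreover, β_0 = 1 and for every i ≥ 1 this common value equals i·C(k, i+1) (binomial coefficient, so in particular both Betti numbers vanish for i ≥ k). -/
noncomputable section

open MvPolynomial

open CategoryTheory in
/-- `Tor_i^{R_n}(R_n/⟨x_1,…,x_n⟩, R_n/N)` as a module over `R_n = K[x_1,…,x_n]`. -/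
def TorKN (n : ℕ) (K : Type*) [Field K] (i : ℕ) (N : Ideal (MvPolynomial (Fin n) K)) :
    ModuleCat (MvPolynomial (Fin n) K) :=
  ((Tor (ModuleCat (MvPolynomial (Fin n) K)) i).obj
      (ModuleCat.of _ (MvPolynomial (Fin n) K ⧸ (Ideal.span (Set.range X) :
        Ideal (MvPolynomial (Fin n) K))))).obj
    (ModuleCat.of _ (MvPolynomial (Fin n) K ⧸ N))



section Cx

variable (K : Type*) [Field K] {n m : ℕ} (p q : Fin m → Fin n) (ε : K)

/-- rank of `j` in `A` -/
def rk {m : ℕ} (A : Finset (Fin m)) (j : Fin m) : ℕ := (A.filter (· < j)).card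

lemma rk_erase {m : ℕ} (A : Finset (Fin m)) {j j' : Fin m} (hj : j ∈ A) :
    rk (A.erase j) j' + (if j < j' then 1 else 0) = rk A j' := by
  unfold rk
  rw [Finset.filter_erase]
  split_ifs with h
  · exact Finset.card_erase_add_one (by simp [hj, h])
  · rw [Finset.erase_eq_of_notMem (by simp [h])]; rfl

lemma rk_lt {m : ℕ} (A : Finset (Fin m)) {j j' : Fin m} (hj : j ∈ A) (h : j < j') :
    rk A j < rk A j' := by
  unfold rk
  apply Finset.card_lt_card
  rw [Finset.ssubset_iff_of_subset]
  · exact ⟨j, by simp [hj, h], by simp⟩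
  · intro x; simp only [Finset.mem_filter]; rintro ⟨h1, h2⟩; exact ⟨h1, h2.trans h⟩

variable {K}

def cP (A : Finset (Fin m)) (a : ℤ) (j : Fin m) : K := if (rk A j : ℤ) ≤ a then 1 else ε
def cQ (A : Finset (Fin m)) (a : ℤ) (j : Fin m) : K := if a + 1 ≤ (rk A j : ℤ) then 1 else ε

lemma cPP (hε : ε = 0 ∨ ε = 1) (A : Finset (Fin m)) (a : ℤ) {j j' : Fin m} (hj : j ∈ A)
    (hj' : j' ∈ A) (h : j ≠ j') :
    cP ε A a j * cP ε (A.erase j) (a-1) j' = cP ε A a j' * cP ε (A.erase j') (a-1) j := by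
  have h1 := rk_erase A (j' := j') hj
  have h2 := rk_erase A (j' := j) hj'
  unfold cP
  rcases hε with rfl | rfl
  · rcases lt_or_gt_of_ne h with h | h
    · have h3 := rk_lt A hj h
      rw [if_pos h] at h1; rw [if_neg (asymm h)] at h2
      split_ifs <;> first | omega | simp
    · have h3 := rk_lt A hj' h
      rw [if_pos h] at h2; rw [if_neg (asymm h)] at h1
      split_ifs <;> first | omega | simp
  · simp

lemma cQQ (hε : ε = 0 ∨ ε = 1) (A : Finset (Fin m)) (a : ℤ) {j j' : Fin m} (hj : j ∈ A)
    (hj' : j' ∈ A) (h : j ≠ j') :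
    cQ ε A a j * cQ ε (A.erase j) a j' = cQ ε A a j' * cQ ε (A.erase j') a j := by
  have h1 := rk_erase A (j' := j') hj
  have h2 := rk_erase A (j' := j) hj'
  unfold cQ
  rcases hε with rfl | rfl
  · rcases lt_or_gt_of_ne h with h | h
    · have h3 := rk_lt A hj h
      rw [if_pos h] at h1; rw [if_neg (asymm h)] at h2
      split_ifs <;> first | omega | simp
    · have h3 := rk_lt A hj' h
      rw [if_pos h] at h2; rw [if_neg (asymm h)] at h1
      split_ifs <;> first | omega | simp
  · simp

lemma cPQ (hε : ε = 0 ∨ ε = 1) (A : Finset (Fin m)) (a : ℤ) {j j' : Fin m} (hj : j ∈ A)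
    (hj' : j' ∈ A) (h : j ≠ j') :
    cP ε A a j * cQ ε (A.erase j) (a-1) j' = cQ ε A a j' * cP ε (A.erase j') a j := by
  have h1 := rk_erase A (j' := j') hj
  have h2 := rk_erase A (j' := j) hj'
  unfold cP cQ
  rcases hε with rfl | rfl
  · rcases lt_or_gt_of_ne h with h | h
    · have h3 := rk_lt A hj h
      rw [if_pos h] at h1; rw [if_neg (asymm h)] at h2
      split_ifs <;> first | omega | simp
    · have h3 := rk_lt A hj' h
      rw [if_pos h] at h2; rw [if_neg (asymm h)] at h1
      split_ifs <;> first | omega | simp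
  · simp

/-- antisymmetrisation lemma -/
lemma antisym_sum {R M : Type*} [CommRing R] [AddCommGroup M] [Module R M]
    (A : Finset (Fin m)) (T : Fin m → Fin m → M)
    (hT : ∀ j ∈ A, ∀ j' ∈ A, j ≠ j' → T j j' = T j' j) :
    ∑ j ∈ A, (-1 : R)^(rk A j) • ∑ j' ∈ A.erase j, (-1 : R)^(rk (A.erase j) j') • T j j' = 0 := by
  simp_rw [Finset.smul_sum, smul_smul]
  rw [Finset.sum_sigma']
  refine Finset.sum_involution (fun x _ => ⟨x.2, x.1⟩) ?_ ?_ ?_ ?_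
  · rintro ⟨j, j'⟩ h
    simp only [Finset.mem_sigma, Finset.mem_erase] at h
    obtain ⟨h1, h2, h3⟩ := h
    dsimp only
    rw [hT j h1 j' h3 (Ne.symm h2), ← add_smul]
    have e1 := rk_erase A (j' := j') h1
    have e2 := rk_erase A (j' := j) h3
    convert zero_smul R _
    rcases lt_or_gt_of_ne h2 with h | h
    · rw [if_pos h] at e2; rw [if_neg (asymm h)] at e1
      rw [← e1, ← e2]; ring
    · rw [if_pos h] at e1; rw [if_neg (asymm h)] at e2
      rw [← e1, ← e2]; ring
  · rintro ⟨j, j'⟩ h _ h'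
    simp only [Finset.mem_sigma, Finset.mem_erase] at h
    simp only [Sigma.mk.injEq] at h'
    exact h.2.1 h'.1
  · rintro ⟨j, j'⟩ h
    simp only [Finset.mem_sigma, Finset.mem_erase] at h ⊢
    exact ⟨h.2.2, Ne.symm h.2.1, h.1⟩
  · rintro ⟨j, j'⟩ h; rfl

/-- Index types of the Eagon-Northcott complex. -/
def EIdx (m : ℕ) : ℕ → Type
  | 0 => Unit
  | i+1 => {A : Finset (Fin m) // A.card = i+2} × Fin (i+1)

instance (m : ℕ) : ∀ i, Fintype (EIdx m i)
  | 0 => inferInstanceAs (Fintype Unit)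
  | i+1 => inferInstanceAs (Fintype ({A : Finset (Fin m) // A.card = i+2} × Fin (i+1)))

instance (m : ℕ) : ∀ i, DecidableEq (EIdx m i)
  | 0 => inferInstanceAs (DecidableEq Unit)
  | i+1 => inferInstanceAs (DecidableEq ({A : Finset (Fin m) // A.card = i+2} × Fin (i+1)))

lemma card_EIdx (m i : ℕ) :
    Fintype.card (EIdx m i) = if i = 0 then 1 else i * Nat.choose m (i+1) := by
  cases i with
  | zero => rfl
  | succ i =>
    change Fintype.card ({A : Finset (Fin m) // A.card = i+2} × Fin (i+1)) = _
    rw [Fintype.card_prod, Fintype.card_finset_len]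
    simp [mul_comm]

local notation "RR" => MvPolynomial (Fin n) K

def ee (i : ℕ) (A : Finset (Fin m)) (a : ℤ) : EIdx m (i+1) → RR :=
  fun β => if β.1.1 = A ∧ ((β.2 : ℕ) : ℤ) = a then 1 else 0

def Dv (i : ℕ) (A : Finset (Fin m)) (a : ℤ) : EIdx m (i+1) → RR :=
  ∑ j ∈ A, (-1 : RR)^(rk A j) • ((C (cP ε A a j) * X (p j)) • ee i (A.erase j) (a-1) +
    (C (cQ ε A a j) * X (q j)) • ee i (A.erase j) a)

def D0 (A : Finset (Fin m)) : RR :=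
  ∑ j ∈ A, (-1 : RR)^(rk A j) • ∑ j' ∈ A.erase j, C (cP ε A 0 j) * X (p j) * X (q j')

def dd : ∀ i, (EIdx m (i+1) → RR) →ₗ[RR] (EIdx m i → RR)
  | 0 => Fintype.linearCombination RR (fun α => (fun _ => D0 p q ε α.1.1 : EIdx m 0 → RR))
  | i+1 => Fintype.linearCombination RR (fun α => Dv p q ε i α.1.1 (α.2 : ℕ))

lemma ee_eq_single (i : ℕ) (α : EIdx m (i+1)) :
    (ee i α.1.1 (α.2 : ℕ) : EIdx m (i+1) → RR) = Pi.single α 1 := by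
  funext β
  rw [Pi.single_apply]
  unfold ee
  congr 1
  rw [eq_iff_iff]
  constructor
  · rintro ⟨h1, h2⟩
    exact Prod.ext (Subtype.ext h1) (Fin.ext (by exact_mod_cast h2))
  · rintro rfl; exact ⟨rfl, rfl⟩

lemma ee_eq_zero (i : ℕ) (A : Finset (Fin m)) (a : ℤ) (h : a < 0 ∨ (i : ℤ) < a) :
    (ee i A a : EIdx m (i+1) → RR) = 0 := by
  funext β
  unfold ee
  have := β.2.2
  rw [if_neg (by rintro ⟨-, h2⟩; omega)]; rfl

lemma ee_cases (i : ℕ) (A : Finset (Fin m)) (hA : A.card = i + 2) (a : ℤ) :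
    (a < 0 ∨ (i : ℤ) < a) ∨ ∃ α : EIdx m (i+1), α.1.1 = A ∧ ((α.2 : ℕ) : ℤ) = a := by
  by_cases h : a < 0 ∨ (i : ℤ) < a
  · exact Or.inl h
  · right
    exact ⟨(⟨A, hA⟩, ⟨a.toNat, by omega⟩), rfl, by simp; omega⟩

lemma dd_succ_single (i : ℕ) (α : EIdx m (i+2)) (f : RR) :
    dd p q ε (i+1) (Pi.single α f) = f • Dv p q ε i α.1.1 (α.2 : ℕ) := by
  simp only [dd]
  rw [Fintype.linearCombination_apply_single]

lemma dd_zero_single (α : EIdx m 1) (f : RR) :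
    dd p q ε 0 (Pi.single α f) = fun _ => f * D0 p q ε α.1.1 := by
  simp only [dd]
  rw [Fintype.linearCombination_apply_single]; rfl

lemma dd_ee (i : ℕ) (A : Finset (Fin m)) (hA : A.card = i + 3) (a : ℤ) :
    dd p q ε (i+1) (ee (i+1) A a) = Dv p q ε i A a := by
  rcases ee_cases (i+1) A hA a with h | ⟨α, rfl, rfl⟩
  · rw [ee_eq_zero _ _ _ h, map_zero]
    unfold Dv
    symm
    refine Finset.sum_eq_zero fun j _ => ?_
    rw [ee_eq_zero _ _ _ (by omega), ee_eq_zero _ _ _ (by omega)]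
    simp
  · rw [ee_eq_single, dd_succ_single, one_smul]

lemma dd_zero_ee (A : Finset (Fin m)) (hA : A.card = 2) (a : ℤ) :
    dd p q ε 0 (ee 0 A a) = fun _ => if a = 0 then D0 p q ε A else 0 := by
  rcases ee_cases 0 A hA a with h | ⟨α, rfl, rfl⟩
  · rw [ee_eq_zero _ _ _ h, map_zero, if_neg (by omega)]; rfl
  · rw [ee_eq_single, dd_zero_single, one_mul, if_pos (by
      have h : (α.2 : ℕ) < 1 := α.2.2
      omega)]

lemma D0_pair {s t : Fin m} (h : s < t) :
    D0 p q ε {s, t} = X (p s) * X (q t) - C ε * X (p t) * X (q s) := by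
  have h1 : rk {s, t} s = 0 := by
    unfold rk; rw [Finset.card_eq_zero, Finset.filter_eq_empty_iff]
    simp [h.le]
  have h2 : rk {s, t} t = 1 := by
    unfold rk
    rw [Finset.card_eq_one]; refine ⟨s, ?_⟩
    ext x; simp only [Finset.mem_filter, Finset.mem_insert, Finset.mem_singleton]
    constructor
    · rintro ⟨rfl | rfl, h'⟩
      · rfl
      · exact absurd h' (lt_irrefl _)
    · rintro rfl; exact ⟨Or.inl rfl, h⟩
  have e1 : ({s, t} : Finset (Fin m)).erase s = {t} := by
    ext x; simp; grind
  have e2 : ({s, t} : Finset (Fin m)).erase t = {s} := by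
    ext x; simp; grind
  unfold D0
  rw [Finset.sum_pair h.ne, e1, e2, h1, h2]
  simp [cP, h1, h2]
  ring

lemma D0_alt (A : Finset (Fin m)) (hA : A.card = 2) :
    D0 p q ε A =
      - ∑ j ∈ A, (-1 : RR)^(rk A j) • ∑ j' ∈ A.erase j, C (cQ ε A 0 j) * X (q j) * X (p j') := by
  obtain ⟨s, t, h, rfl⟩ : ∃ s t, s < t ∧ A = {s, t} := by
    obtain ⟨s, t, h, rfl⟩ := Finset.card_eq_two.1 hA
    rcases lt_or_gt_of_ne h with h | h
    · exact ⟨s, t, h, rfl⟩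
    · exact ⟨t, s, h, Finset.pair_comm _ _⟩
  rw [D0_pair p q ε h]
  have h1 : rk {s, t} s = 0 := by
    unfold rk; rw [Finset.card_eq_zero, Finset.filter_eq_empty_iff]
    simp [h.le]
  have h2 : rk {s, t} t = 1 := by
    unfold rk
    rw [Finset.card_eq_one]; refine ⟨s, ?_⟩
    ext x; simp only [Finset.mem_filter, Finset.mem_insert, Finset.mem_singleton]
    constructor
    · rintro ⟨rfl | rfl, h'⟩
      · rfl
      · exact absurd h' (lt_irrefl _)
    · rintro rfl; exact ⟨Or.inl rfl, h⟩
  have e1 : ({s, t} : Finset (Fin m)).erase s = {t} := by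
    ext x; simp; grind
  have e2 : ({s, t} : Finset (Fin m)).erase t = {s} := by
    ext x; simp; grind
  rw [Finset.sum_pair h.ne, e1, e2, h1, h2]
  simp [cQ, h1, h2]
  ring

lemma ext_single {M : Type*} [AddCommGroup M] [Module RR M] {ι : Type*} [Fintype ι]
    [DecidableEq ι] (f : (ι → RR) →ₗ[RR] M) (h : ∀ α, f (Pi.single α 1) = 0) : f = 0 := by
  apply LinearMap.pi_ext'
  intro α
  ext
  simpa using h α

lemma dd_comp_succ (hε : ε = 0 ∨ ε = 1) (i : ℕ) :
    dd p q ε (i+1) ∘ₗ dd p q ε (i+2) = 0 := by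
  apply ext_single
  intro α
  rw [LinearMap.comp_apply, dd_succ_single, one_smul]
  obtain ⟨⟨A, hA⟩, a⟩ := α
  generalize ((a : ℕ) : ℤ) = a
  dsimp only
  conv_lhs => rw [Dv, map_sum]
  have := antisym_sum (R := RR) A (fun j j' =>
    ((C (cP ε A a j) * X (p j)) * (C (cP ε (A.erase j) (a-1) j') * X (p j'))) •
      (ee i ((A.erase j).erase j') (a-1-1) : EIdx m (i+1) → RR) +
    ((C (cP ε A a j) * X (p j)) * (C (cQ ε (A.erase j) (a-1) j') * X (q j'))) •
      (ee i ((A.erase j).erase j') (a-1) : EIdx m (i+1) → RR) +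
    (((C (cQ ε A a j) * X (q j)) * (C (cP ε (A.erase j) a j') * X (p j'))) •
      (ee i ((A.erase j).erase j') (a-1) : EIdx m (i+1) → RR) +
    ((C (cQ ε A a j) * X (q j)) * (C (cQ ε (A.erase j) a j') * X (q j'))) •
      (ee i ((A.erase j).erase j') a : EIdx m (i+1) → RR))) ?_
  · rw [← this]
    refine Finset.sum_congr rfl fun j hj => ?_
    have hc : (A.erase j).card = i + 3 := by rw [Finset.card_erase_of_mem hj, hA]; rfl
    rw [map_smul, map_add, map_smul, map_smul, dd_ee _ _ _ _ _ hc, dd_ee _ _ _ _ _ hc]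
    congr 1
    rw [Dv, Dv, Finset.smul_sum, Finset.smul_sum, ← Finset.sum_add_distrib]
    refine Finset.sum_congr rfl fun j' _ => ?_
    module
  · intro j hj j' hj' hne
    have e1 := congrArg (C (σ := Fin n)) (cPP ε hε A a hj hj' hne)
    have e2 := congrArg (C (σ := Fin n)) (cPQ ε hε A a hj hj' hne)
    have e3 := congrArg (C (σ := Fin n)) (cQQ ε hε A a hj hj' hne)
    have e4 := congrArg (C (σ := Fin n)) (cPQ ε hε A a hj' hj hne.symm)
    simp only [map_mul] at e1 e2 e3 e4
    rw [Finset.erase_right_comm (a := j') (b := j)]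
    have a1 : (C (cP ε A a j) * X (p j)) * (C (cP ε (A.erase j) (a-1) j') * X (p j')) =
      (C (cP ε A a j') * X (p j')) * (C (cP ε (A.erase j') (a-1) j) * X (p j) : RR) := by
      linear_combination X (p j) * X (p j') * e1
    have a2 : (C (cP ε A a j) * X (p j)) * (C (cQ ε (A.erase j) (a-1) j') * X (q j')) =
      (C (cQ ε A a j') * X (q j')) * (C (cP ε (A.erase j') a j) * X (p j) : RR) := by
      linear_combination X (p j) * X (q j') * e2
    have a3 : (C (cQ ε A a j) * X (q j)) * (C (cQ ε (A.erase j) a j') * X (q j')) =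
      (C (cQ ε A a j') * X (q j')) * (C (cQ ε (A.erase j') a j) * X (q j) : RR) := by
      linear_combination X (q j) * X (q j') * e3
    have a4 : (C (cP ε A a j') * X (p j')) * (C (cQ ε (A.erase j') (a-1) j) * X (q j)) =
      (C (cQ ε A a j) * X (q j)) * (C (cP ε (A.erase j) a j') * X (p j') : RR) := by
      linear_combination X (p j') * X (q j) * e4
    rw [a1, a2, a3, a4]
    module

set_option maxHeartbeats 1000000 in
lemma dd_comp_zero (hε : ε = 0 ∨ ε = 1) :
    dd p q ε 0 ∘ₗ dd p q ε 1 = 0 := by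
  apply ext_single
  intro α
  rw [LinearMap.comp_apply, dd_succ_single, one_smul]
  obtain ⟨⟨A, hA⟩, a⟩ := α
  dsimp only
  rw [Dv, map_sum]
  funext u
  rw [Finset.sum_apply]
  have hc : ∀ j ∈ A, (A.erase j).card = 2 := fun j hj => by
    rw [Finset.card_erase_of_mem hj, hA]
  have ha : ((a : ℕ) : ℤ) = 0 ∨ ((a : ℕ) : ℤ) = 1 := by
    have h : (a : ℕ) < 2 := a.2
    omega
  rcases ha with ha | ha <;> rw [ha]
  · have := antisym_sum (R := RR) A (fun j j' =>
      ∑ k ∈ (A.erase j).erase j', (C (cQ ε A 0 j) * X (q j)) *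
        (C (cQ ε (A.erase j) 0 j') * X (q j')) * (X (p k) : RR)) ?_
    · have this' := congrArg (fun z => -z) this
      rw [neg_zero, ← Finset.sum_neg_distrib] at this'
      rw [Pi.zero_apply, ← this']
      refine Finset.sum_congr rfl fun j hj => ?_
      rw [map_smul, map_add, map_smul, map_smul, dd_zero_ee _ _ _ _ (hc j hj),
        dd_zero_ee _ _ _ _ (hc j hj)]
      simp only [Pi.smul_apply, Pi.add_apply]
      rw [if_neg (by omega), if_pos trivial, D0_alt _ _ _ _ (hc j hj), ← smul_neg]
      refine congrArg (fun z => (-1 : RR)^(rk A j) • z) ?_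
      rw [smul_zero, zero_add, smul_neg, Finset.smul_sum]
      congr 1
      refine Finset.sum_congr rfl fun j' _ => ?_
      rw [smul_comm, Finset.smul_sum]
      refine congrArg (fun z => (-1 : RR)^(rk (A.erase j) j') • z) ?_
      refine Finset.sum_congr rfl fun k _ => ?_
      rw [smul_eq_mul]; ring
    · intro j hj j' hj' hne
      have e3 := congrArg (C (σ := Fin n)) (cQQ ε hε A 0 hj hj' hne)
      simp only [map_mul] at e3
      rw [Finset.erase_right_comm (a := j') (b := j)]
      refine Finset.sum_congr rfl fun k _ => ?_
      linear_combination X (q j) * X (q j') * X (p k) * e3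
  · have := antisym_sum (R := RR) A (fun j j' =>
      ∑ k ∈ (A.erase j).erase j', (C (cP ε A 1 j) * X (p j)) *
        (C (cP ε (A.erase j) 0 j') * X (p j')) * (X (q k) : RR)) ?_
    · rw [Pi.zero_apply, ← this]
      refine Finset.sum_congr rfl fun j hj => ?_
      rw [map_smul, map_add, map_smul, map_smul, dd_zero_ee _ _ _ _ (hc j hj),
        dd_zero_ee _ _ _ _ (hc j hj)]
      simp only [Pi.smul_apply, Pi.add_apply]
      rw [if_pos (by omega), if_neg (by omega), D0]
      refine congrArg (fun z => (-1 : RR)^(rk A j) • z) ?_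
      rw [smul_zero, add_zero, Finset.smul_sum]
      refine Finset.sum_congr rfl fun j' _ => ?_
      rw [smul_comm, Finset.smul_sum]
      refine congrArg (fun z => (-1 : RR)^(rk (A.erase j) j') • z) ?_
      refine Finset.sum_congr rfl fun k _ => ?_
      rw [smul_eq_mul]; ring
    · intro j hj j' hj' hne
      have e3 := congrArg (C (σ := Fin n)) (cPP ε hε A 1 hj hj' hne)
      simp only [map_mul, sub_self] at e3
      rw [Finset.erase_right_comm (a := j') (b := j)]
      refine Finset.sum_congr rfl fun k _ => ?_
      linear_combination X (p j) * X (p j') * X (q k) * e3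

lemma dd_comp (hε : ε = 0 ∨ ε = 1) : ∀ i, dd p q ε i ∘ₗ dd p q ε (i+1) = 0
  | 0 => dd_comp_zero p q ε hε
  | i+1 => dd_comp_succ p q ε hε i

lemma Dv_apply (i : ℕ) (A : Finset (Fin m)) (a : ℤ) (β : EIdx m (i+1)) :
    (Dv p q ε i A a : EIdx m (i+1) → RR) β = ∑ j ∈ A, (-1 : RR)^(rk A j) *
      ((if β.1.1 = A.erase j ∧ ((β.2 : ℕ) : ℤ) = a - 1 then C (cP ε A a j) * X (p j) else 0) +
      (if β.1.1 = A.erase j ∧ ((β.2 : ℕ) : ℤ) = a then C (cQ ε A a j) * X (q j) else 0)) := by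
  unfold Dv
  rw [Finset.sum_apply]
  refine Finset.sum_congr rfl fun j _ => ?_
  simp only [Pi.smul_apply, Pi.add_apply, ee, smul_eq_mul, mul_ite, mul_one, mul_zero]

lemma dd_min (i : ℕ) (x : EIdx m (i+1) → RR) (j : EIdx m i) :
    dd p q ε i x j ∈ (Ideal.span (Set.range X) : Ideal RR) := by
  have hX : ∀ v : Fin n, (X v : RR) ∈ (Ideal.span (Set.range X) : Ideal RR) :=
    fun v => Ideal.subset_span ⟨v, rfl⟩
  cases i with
  | zero =>
    simp only [dd, Fintype.linearCombination_apply, Finset.sum_apply, Pi.smul_apply]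
    refine Ideal.sum_mem _ fun α _ => Ideal.mul_mem_left _ _ ?_
    refine Ideal.sum_mem _ fun α _ => Ideal.mul_mem_left _ _ ?_
    refine Ideal.sum_mem _ fun α _ => Ideal.mul_mem_left _ _ (hX _)
  | succ i =>
    simp only [dd, Fintype.linearCombination_apply, Finset.sum_apply, Pi.smul_apply]
    refine Ideal.sum_mem _ fun α _ => Ideal.mul_mem_left _ _ ?_
    rw [Dv_apply]
    refine Ideal.sum_mem _ fun α _ => Ideal.mul_mem_left _ _ ?_
    refine Ideal.add_mem _ ?_ ?_
    · split_ifs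
      · exact Ideal.mul_mem_left _ _ (hX _)
      · exact Ideal.zero_mem _
    · split_ifs
      · exact Ideal.mul_mem_left _ _ (hX _)
      · exact Ideal.zero_mem _

end Cx


section Lead

variable {K : Type*} [Field K]

/-- `x` has leading basis vector `τ`. -/
def LeadAt {β κ M : Type*} [AddCommGroup M] [Module K M] [LT κ] (bb : Module.Basis β K M)
    (kb : β → κ) (x : M) (τ : β) : Prop :=
  ∃ c : K, c ≠ 0 ∧ x - c • bb τ ∈ Submodule.span K (bb '' {t | kb t < kb τ})

lemma LeadAt.repr_self {β κ M : Type*} [AddCommGroup M] [Module K M] [Preorder κ]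
    {bb : Module.Basis β K M} {kb : β → κ} {x : M} {τ : β} (h : LeadAt bb kb x τ) :
    bb.repr x τ ≠ 0 := by
  obtain ⟨c, hc, h⟩ := h
  have h2 := (bb.mem_span_image).1 h
  have h3 : bb.repr (x - c • bb τ) τ = 0 := by
    by_contra h4
    have := h2 (Finsupp.mem_support_iff.2 h4)
    exact lt_irrefl _ this
  rw [map_sub, map_smul, Module.Basis.repr_self, Finsupp.sub_apply, Finsupp.smul_apply,
    Finsupp.single_eq_same, smul_eq_mul, mul_one, sub_eq_zero] at h3
  rw [h3]; exact hc

lemma LeadAt.repr_other {β κ M : Type*} [AddCommGroup M] [Module K M] [Preorder κ]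
    {bb : Module.Basis β K M} {kb : β → κ} {x : M} {τ : β} (h : LeadAt bb kb x τ) (σ : β)
    (hσ : σ ≠ τ) (hk : ¬ kb σ < kb τ) : bb.repr x σ = 0 := by
  obtain ⟨c, hc, h⟩ := h
  have h2 := (bb.mem_span_image).1 h
  have h3 : bb.repr (x - c • bb τ) σ = 0 := by
    by_contra h4
    exact hk (h2 (Finsupp.mem_support_iff.2 h4))
  rw [map_sub, map_smul, Module.Basis.repr_self, Finsupp.sub_apply, Finsupp.smul_apply,
    Finsupp.single_eq_of_ne hσ, smul_zero, sub_zero] at h3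
  exact h3

lemma exact_of_lead {α β γ Ma Mb Mc κ κ' : Type*} [AddCommGroup Ma] [Module K Ma]
    [AddCommGroup Mb] [Module K Mb] [AddCommGroup Mc] [Module K Mc]
    [LinearOrder κ] [WellFoundedLT κ] [LinearOrder κ']
    (ba : Module.Basis α K Ma) (bb : Module.Basis β K Mb) (bc : Module.Basis γ K Mc)
    (f : Ma →ₗ[K] Mb) (g : Mb →ₗ[K] Mc) (kb : β → κ) (kc : γ → κ')
    (Rf : α → β → Prop) (Rg : β → γ → Prop)
    (hf : ∀ a b, Rf a b → LeadAt bb kb (f (ba a)) b)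
    (hg' : ∀ b c, Rg b c → LeadAt bc kc (g (bb b)) c)
    (htot : ∀ b, ∃ c, Rg b c)
    (hinj' : ∀ b b' c, (¬ ∃ a, Rf a b) → (¬ ∃ a, Rf a b') → Rg b c → Rg b' c → b = b')
    (hgf : ∀ y, g (f y) = 0) (x : Mb) (hx : g x = 0) : ∃ y, f y = x := by
  choose μg hμg using htot
  have hg : ∀ b, LeadAt bc kc (g (bb b)) (μg b) := fun b => hg' _ _ (hμg b)
  have hinj : ∀ b b', (¬ ∃ a, Rf a b) → (¬ ∃ a, Rf a b') → μg b = μg b' → b = b' := by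
    intro b b' h h' e
    exact hinj' b b' (μg b) h h' (hμg b) (e ▸ hμg b')
  set U : Set β := {b | ¬ ∃ a, Rf a b}
  set S : Submodule K Mb := LinearMap.range f ⊔ Submodule.span K (bb '' U)
  have hS : ∀ b, bb b ∈ S := by
    intro b
    induction hb : kb b using WellFoundedLT.induction generalizing b with
    | ind k ih =>
      subst hb
      by_cases h : ∃ a, Rf a b
      · obtain ⟨a, ha⟩ := h
        obtain ⟨c, hc, h⟩ := hf a b ha
        have h1 : Submodule.span K (bb '' {t | kb t < kb b}) ≤ S := by
          rw [Submodule.span_le]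
          rintro _ ⟨t, ht, rfl⟩
          exact ih _ ht t rfl
        have h2 : f (ba a) ∈ S := Submodule.mem_sup_left ⟨_, rfl⟩
        have h3 := S.sub_mem h2 (h1 h)
        rw [sub_sub_cancel] at h3
        exact (S.smul_mem_iff hc).1 h3
      · exact Submodule.mem_sup_right (Submodule.subset_span ⟨b, h, rfl⟩)
  have hSt : x ∈ S := by
    have : (⊤ : Submodule K Mb) ≤ S := by
      rw [← bb.span_eq, Submodule.span_le]
      rintro _ ⟨b, rfl⟩; exact hS b
    exact this trivial
  obtain ⟨_, ⟨y, rfl⟩, z, hz, hyz⟩ := Submodule.mem_sup.1 hSt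
  have hgz : g z = 0 := by
    rw [← hyz, map_add, hgf, zero_add] at hx; exact hx
  suffices z = 0 by exact ⟨y, by rw [← hyz, this, add_zero]⟩
  by_contra hz0
  have hsupp : (bb.repr z).support.Nonempty := by
    rw [Finsupp.support_nonempty_iff]
    simpa using hz0
  have hU := (bb.mem_span_image).1 hz
  obtain ⟨b0, hb0, hmax⟩ := Finset.exists_max_image _ (fun b => kc (μg b)) hsupp
  have h1 : bc.repr (g z) (μg b0) = 0 := by rw [hgz]; simp
  rw [← bb.linearCombination_repr z, Finsupp.linearCombination_apply, Finsupp.sum, map_sum,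
    map_sum, Finsupp.finsetSum_apply, Finset.sum_eq_single b0] at h1
  · rw [map_smul, map_smul, Finsupp.smul_apply, smul_eq_zero] at h1
    rcases h1 with h1 | h1
    · exact (Finsupp.mem_support_iff.1 hb0) h1
    · exact (hg b0).repr_self h1
  · intro b hb hne
    rw [map_smul, map_smul, Finsupp.smul_apply, (hg b).repr_other, smul_zero]
    · intro h
      exact hne (hinj _ _ (hU hb) (hU hb0) h.symm)
    · exact not_lt.2 (hmax b hb)
  · intro h; exact absurd hb0 h

end Lead


section App

variable {K : Type*} [Field K] {n m : ℕ} (p q : Fin m → Fin n) (ε : K) (lam : Fin n → ℕ)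

local notation "RR" => MvPolynomial (Fin n) K

def bs (n : ℕ) (K : Type*) [Field K] (ι : Type) [Fintype ι] [DecidableEq ι] :
    Module.Basis (Σ _ : ι, Fin n →₀ ℕ) K (ι → MvPolynomial (Fin n) K) :=
  Pi.basis (fun _ => basisMonomials (Fin n) K)

lemma bs_apply {ι : Type} [Fintype ι] [DecidableEq ι] (b : Σ _ : ι, Fin n →₀ ℕ) :
    bs n K ι b = Pi.single b.1 (monomial b.2 1) := by
  obtain ⟨α, u⟩ := b
  simp [bs, Pi.basis_apply]

def wt (A : Finset (Fin m)) (a : ℤ) : ℕ :=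
  ∑ j ∈ A, if (rk A j : ℤ) ≤ a then lam (p j) else lam (q j)

lemma wt_p (A : Finset (Fin m)) (a : ℤ) {j : Fin m} (hj : j ∈ A) (h : (rk A j : ℤ) ≤ a) :
    lam (p j) + wt p q lam (A.erase j) (a-1) = wt p q lam A a := by
  unfold wt
  rw [← Finset.add_sum_erase _ _ hj, if_pos h]
  congr 1
  refine Finset.sum_congr rfl fun j' hj' => ?_
  obtain ⟨hne, hj'A⟩ := Finset.mem_erase.1 hj'
  have e := rk_erase A (j' := j') hj
  congr 1
  rw [eq_iff_iff]
  rcases lt_or_gt_of_ne hne with hlt | hlt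
  · rw [if_neg (asymm hlt)] at e
    have := rk_lt A hj'A hlt
    omega
  · rw [if_pos hlt] at e
    omega

lemma wt_q (A : Finset (Fin m)) (a : ℤ) {j : Fin m} (hj : j ∈ A) (h : a + 1 ≤ (rk A j : ℤ)) :
    lam (q j) + wt p q lam (A.erase j) a = wt p q lam A a := by
  unfold wt
  rw [← Finset.add_sum_erase _ _ hj, if_neg (by omega)]
  congr 1
  refine Finset.sum_congr rfl fun j' hj' => ?_
  obtain ⟨hne, hj'A⟩ := Finset.mem_erase.1 hj'
  have e := rk_erase A (j' := j') hj
  congr 1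
  rw [eq_iff_iff]
  rcases lt_or_gt_of_ne hne with hlt | hlt
  · rw [if_neg (asymm hlt)] at e
    omega
  · rw [if_pos hlt] at e
    have := rk_lt A hj hlt
    omega

lemma exists_rk (A : Finset (Fin m)) (r : ℕ) (hr : r < A.card) : ∃ j ∈ A, rk A j = r := by
  have hinj : Set.InjOn (rk A) A := by
    intro x hx y hy h
    by_contra hne
    rcases lt_or_gt_of_ne hne with hlt | hlt
    · exact (rk_lt A hx hlt).ne h
    · exact (rk_lt A hy hlt).ne h.symm
  have h1 : A.image (rk A) ⊆ Finset.range A.card := by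
    intro x hx
    obtain ⟨y, hy, rfl⟩ := Finset.mem_image.1 hx
    rw [Finset.mem_range]
    apply Finset.card_lt_card
    rw [Finset.ssubset_iff_of_subset (Finset.filter_subset _ _)]
    exact ⟨y, hy, by simp⟩
  have h2 := Finset.eq_of_subset_of_card_le h1 (by
    rw [Finset.card_range, Finset.card_image_of_injOn hinj])
  have : r ∈ A.image (rk A) := by rw [h2]; simpa using hr
  simpa using this

lemma rk_lt_card (A : Finset (Fin m)) {j : Fin m} (hj : j ∈ A) : rk A j < A.card := by
  apply Finset.card_lt_card
  rw [Finset.ssubset_iff_of_subset (Finset.filter_subset _ _)]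
  exact ⟨j, hj, by simp⟩

lemma lt_of_rk_lt (A : Finset (Fin m)) {j j' : Fin m} (hj' : j' ∈ A)
    (h : rk A j < rk A j') : j < j' := by
  by_contra hne
  rcases (not_lt.1 hne).lt_or_eq with h1 | h1
  · have := rk_lt A hj' h1; omega
  · subst h1; omega

variable (hlam : ∀ s t, s < t → lam (p t) + lam (q s) < lam (p s) + lam (q t))

lemma wt_p_lt (hlam : ∀ s t, s < t → lam (p t) + lam (q s) < lam (p s) + lam (q t))
    (A : Finset (Fin m)) (a : ℤ) (ha : 0 ≤ a) {j : Fin m} (hj : j ∈ A) (h : a < (rk A j : ℤ)) :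
    lam (p j) + wt p q lam (A.erase j) (a-1) < wt p q lam A a := by
  have hc := rk_lt_card A hj
  obtain ⟨j0, hj0, hr⟩ := exists_rk A a.toNat (by omega)
  have hlt : j0 < j := lt_of_rk_lt A hj (by omega)
  have e1 := rk_erase A (j' := j) hj0
  have e2 := rk_erase A (j' := j0) hj
  rw [if_pos hlt] at e1
  rw [if_neg (asymm hlt)] at e2
  rw [← wt_p p q lam A a hj0 (by omega),
    ← wt_q p q lam (A.erase j0) (a-1) (j := j) (Finset.mem_erase.2 ⟨hlt.ne', hj⟩) (by omega),
    ← wt_q p q lam (A.erase j) (a-1) (j := j0) (Finset.mem_erase.2 ⟨hlt.ne, hj0⟩) (by omega),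
    Finset.erase_right_comm]
  have := hlam _ _ hlt
  omega

lemma wt_q_lt (hlam : ∀ s t, s < t → lam (p t) + lam (q s) < lam (p s) + lam (q t))
    (A : Finset (Fin m)) (a : ℤ) (ha : 0 ≤ a) (ha' : a + 1 < A.card) {j : Fin m} (hj : j ∈ A)
    (h : (rk A j : ℤ) ≤ a) :
    lam (q j) + wt p q lam (A.erase j) a < wt p q lam A a := by
  obtain ⟨j0, hj0, hr⟩ := exists_rk A (a+1).toNat (by omega)
  have hlt : j < j0 := lt_of_rk_lt A hj0 (by omega)
  have e1 := rk_erase A (j' := j) hj0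
  have e2 := rk_erase A (j' := j0) hj
  rw [if_pos hlt] at e2
  rw [if_neg (asymm hlt)] at e1
  rw [← wt_q p q lam A a hj0 (by omega),
    ← wt_p p q lam (A.erase j0) a (j := j) (Finset.mem_erase.2 ⟨hlt.ne, hj⟩) (by omega),
    ← wt_p p q lam (A.erase j) a (j := j0) (Finset.mem_erase.2 ⟨hlt.ne', hj0⟩) (by omega),
    Finset.erase_right_comm]
  have := hlam _ _ hlt
  omega

lemma wt_p_le (hlam : ∀ s t, s < t → lam (p t) + lam (q s) < lam (p s) + lam (q t))
    (A : Finset (Fin m)) (a : ℤ) (ha : 0 ≤ a) {j : Fin m} (hj : j ∈ A) :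
    lam (p j) + wt p q lam (A.erase j) (a-1) ≤ wt p q lam A a := by
  rcases le_or_gt (rk A j : ℤ) a with h | h
  · exact (wt_p p q lam A a hj h).le
  · exact (wt_p_lt p q lam hlam A a ha hj h).le

lemma wt_q_le (hlam : ∀ s t, s < t → lam (p t) + lam (q s) < lam (p s) + lam (q t))
    (A : Finset (Fin m)) (a : ℤ) (ha : 0 ≤ a) (ha' : a + 1 < A.card) {j : Fin m} (hj : j ∈ A) :
    lam (q j) + wt p q lam (A.erase j) a ≤ wt p q lam A a := by
  rcases le_or_gt (rk A j : ℤ) a with h | h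
  · exact (wt_q_lt p q lam hlam A a ha ha' hj h).le
  · exact (wt_q p q lam A a hj h).le

abbrev KeyT (m : ℕ) := ℕ ×ₗ (WithTop (Fin m) ×ₗ (WithBot (Fin m))ᵒᵈ)

instance (m : ℕ) : WellFoundedLT (KeyT m) := inferInstance

def keyf (u : Fin n →₀ ℕ) (A : Finset (Fin m)) (a : ℤ) : KeyT m :=
  toLex (Finsupp.weight lam u + wt p q lam A a, toLex (A.min, OrderDual.toDual A.max))

lemma key_lt_W {u u' : Fin n →₀ ℕ} {A A' : Finset (Fin m)} {a a' : ℤ}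
    (h : Finsupp.weight lam u + wt p q lam A a < Finsupp.weight lam u' + wt p q lam A' a') :
    keyf p q lam u A a < keyf p q lam u' A' a' := by
  unfold keyf
  rw [Prod.Lex.toLex_lt_toLex]; exact Or.inl h

lemma key_lt_min {u u' : Fin n →₀ ℕ} {A A' : Finset (Fin m)} {a a' : ℤ}
    (h : Finsupp.weight lam u + wt p q lam A a ≤ Finsupp.weight lam u' + wt p q lam A' a')
    (h2 : A.min < A'.min) :
    keyf p q lam u A a < keyf p q lam u' A' a' := by
  rcases h.lt_or_eq with h | h
  · exact key_lt_W p q lam h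
  · unfold keyf
    rw [Prod.Lex.toLex_lt_toLex]; right
    exact ⟨h, by rw [Prod.Lex.toLex_lt_toLex]; exact Or.inl h2⟩

lemma key_lt_max {u u' : Fin n →₀ ℕ} {A A' : Finset (Fin m)} {a a' : ℤ}
    (h : Finsupp.weight lam u + wt p q lam A a ≤ Finsupp.weight lam u' + wt p q lam A' a')
    (h2 : A.min ≤ A'.min) (h3 : A'.max < A.max) :
    keyf p q lam u A a < keyf p q lam u' A' a' := by
  rcases h.lt_or_eq with h | h
  · exact key_lt_W p q lam h
  · rcases h2.lt_or_eq with h2 | h2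
    · exact key_lt_min p q lam h.le h2
    · unfold keyf
      rw [Prod.Lex.toLex_lt_toLex]; right
      refine ⟨h, ?_⟩
      rw [Prod.Lex.toLex_lt_toLex]; right
      exact ⟨h2, OrderDual.toDual_lt_toDual.2 h3⟩

def key1 (i : ℕ) (t : Σ _ : EIdx m (i+1), Fin n →₀ ℕ) : KeyT m :=
  keyf p q lam t.2 t.1.1.1 (t.1.2 : ℕ)

def bv (i : ℕ) (A : Finset (Fin m)) (a : ℤ) (u : Fin n →₀ ℕ) : EIdx m (i+1) → RR :=
  (monomial u (1 : K) : RR) • ee i A a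

lemma bv_eq (i : ℕ) (α : EIdx m (i+1)) (u : Fin n →₀ ℕ) :
    (bv i α.1.1 (α.2 : ℕ) u : EIdx m (i+1) → RR) = bs n K _ ⟨α, u⟩ := by
  rw [bv, ee_eq_single, bs_apply, ← Pi.single_smul, smul_eq_mul, mul_one]

lemma bv_mem (i : ℕ) (A : Finset (Fin m)) (hA : A.card = i + 2) (a : ℤ) (u : Fin n →₀ ℕ)
    (k0 : KeyT m) (h : 0 ≤ a → a ≤ i → keyf p q lam u A a < k0) :
    (bv i A a u : EIdx m (i+1) → RR) ∈
      Submodule.span K (bs n K (EIdx m (i+1)) '' {t | key1 p q lam i t < k0}) := by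
  rcases ee_cases i A hA a with h1 | ⟨α, rfl, rfl⟩
  · rw [bv, ee_eq_zero _ _ _ h1, smul_zero]; exact Submodule.zero_mem _
  · rw [bv_eq]
    apply Submodule.subset_span
    refine ⟨_, ?_, rfl⟩
    have := α.2.2
    exact h (by omega) (by omega)

def sg (r : ℕ) : K := (-1)^r

def tP (i : ℕ) (A : Finset (Fin m)) (a : ℤ) (u : Fin n →₀ ℕ) (j : Fin m) :
    EIdx m (i+1) → RR :=
  (sg (rk A j) * cP ε A a j) • bv i (A.erase j) (a-1) (u + Finsupp.single (p j) 1)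
def tQ (i : ℕ) (A : Finset (Fin m)) (a : ℤ) (u : Fin n →₀ ℕ) (j : Fin m) :
    EIdx m (i+1) → RR :=
  (sg (rk A j) * cQ ε A a j) • bv i (A.erase j) a (u + Finsupp.single (q j) 1)

lemma aux_smul {ι : Type*} (c d : K) (v : Fin n) (u : Fin n →₀ ℕ) (x : ι → RR) :
    (monomial u (1 : K) : RR) • ((C d : RR) • ((C c * X v : RR) • x)) =
      (d * c) • ((monomial (u + Finsupp.single v 1) (1 : K) : RR) • x) := by
  rw [smul_smul, smul_smul, ← algebraMap_smul RR (d*c), smul_smul]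
  congr 1
  rw [X, algebraMap_eq, C_mul_monomial, C_mul_monomial, mul_assoc, C_mul_monomial, monomial_mul]
  ring_nf

lemma dd_bs (i : ℕ) (b : Σ _ : EIdx m (i+2), Fin n →₀ ℕ) :
    dd p q ε (i+1) (bs n K _ b) = ∑ j ∈ b.1.1.1, (tP p ε i b.1.1.1 (b.1.2 : ℕ) b.2 j +
      tQ q ε i b.1.1.1 (b.1.2 : ℕ) b.2 j) := by
  rw [bs_apply, dd_succ_single, Dv, Finset.smul_sum]
  refine Finset.sum_congr rfl fun j _ => ?_
  have : ((-1 : RR)^(rk b.1.1.1 j)) = C (sg (rk b.1.1.1 j)) := by simp [sg]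
  rw [this, smul_add, smul_add, aux_smul, aux_smul]
  rfl

/-- the leading term relation -/
def Rel2 (i : ℕ) (b : Σ _ : EIdx m (i+2), Fin n →₀ ℕ) (c : Σ _ : EIdx m (i+1), Fin n →₀ ℕ) :
    Prop :=
  (∃ s ∈ b.1.1.1, (∀ x ∈ b.1.1.1, s ≤ x) ∧ c.1.1.1 = b.1.1.1.erase s ∧
    (b.1.2 : ℕ) = (c.1.2 : ℕ) + 1 ∧ c.2 = b.2 + Finsupp.single (p s) 1) ∨
  ((b.1.2 : ℕ) = 0 ∧ (c.1.2 : ℕ) = 0 ∧ ∃ t ∈ b.1.1.1, (∀ x ∈ b.1.1.1, x ≤ t) ∧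
    c.1.1.1 = b.1.1.1.erase t ∧ c.2 = b.2 + Finsupp.single (q t) 1)

lemma sg_ne (r : ℕ) : (sg r : K) ≠ 0 := by unfold sg; simp

lemma min_erase_self (A : Finset (Fin m)) (s : Fin m) (hs : ∀ x ∈ A, s ≤ x) :
    (s : WithTop (Fin m)) < (A.erase s).min := by
  refine lt_of_le_of_ne (Finset.le_min_iff.2 fun x hx => ?_) fun h => ?_
  · exact_mod_cast hs x (Finset.mem_of_mem_erase hx)
  · exact Finset.notMem_erase s A (Finset.mem_of_min h.symm)

lemma max_erase_self (A : Finset (Fin m)) (t : Fin m) (ht : ∀ x ∈ A, x ≤ t) :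
    (A.erase t).max < (t : WithBot (Fin m)) := by
  refine lt_of_le_of_ne (Finset.max_le fun x hx => ?_) fun h => ?_
  · exact_mod_cast ht x (Finset.mem_of_mem_erase hx)
  · exact Finset.notMem_erase t A (Finset.mem_of_max h)

lemma lead2 (hlam : ∀ s t, s < t → lam (p t) + lam (q s) < lam (p s) + lam (q t))
    (i : ℕ) (b : Σ _ : EIdx m (i+2), Fin n →₀ ℕ) (c : Σ _ : EIdx m (i+1), Fin n →₀ ℕ)
    (h : Rel2 p q i b c) :
    LeadAt (bs n K _) (key1 p q lam i) (dd p q ε (i+1) (bs n K _ b)) c := by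
  have hw : ∀ (u : Fin n →₀ ℕ) v, Finsupp.weight lam (u + Finsupp.single v 1) =
      Finsupp.weight lam u + lam v := by
    intro u v; rw [map_add, Finsupp.weight_single]; simp
  rw [dd_bs]
  obtain ⟨⟨⟨A, hA⟩, ⟨a, ha⟩⟩, u⟩ := b
  have hcard : ∀ j ∈ A, (A.erase j).card = i + 2 := fun j hj => by
    rw [Finset.card_erase_of_mem hj, hA]; rfl
  unfold LeadAt
  unfold Rel2 at h
  dsimp only at h ⊢
  have hbs : bs n K _ c = (bv i c.1.1.1 ((c.1.2 : ℕ) : ℤ) c.2 : EIdx m (i+1) → RR) :=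
    (bv_eq i c.1 c.2).symm
  have hkey : key1 p q lam i c = keyf p q lam c.2 c.1.1.1 ((c.1.2 : ℕ) : ℤ) := rfl
  rw [hbs, hkey]
  clear hbs hkey
  generalize (c.1.2 : ℕ) = a' at *
  rcases h with ⟨s, hs, hmin, h1, h2, h3⟩ | ⟨h1, h2, t, ht, hmax, h3, h4⟩
  · have hrk : rk A s = 0 := by
      unfold rk; rw [Finset.card_eq_zero, Finset.filter_eq_empty_iff]
      intro x hx; exact not_lt.2 (hmin x hx)
    refine ⟨sg (rk A s) * cP ε A a s, mul_ne_zero (sg_ne _) ?_, ?_⟩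
    · unfold cP; rw [if_pos (by omega)]; exact one_ne_zero
    · have e : (a' : ℤ) = (a : ℤ) - 1 := by omega
      have hW := wt_p p q lam A a hs (by omega)
      rw [e, h1, h3, ← Finset.add_sum_erase _ _ hs]
      rw [add_assoc, tP, add_sub_cancel_left]
      refine Submodule.add_mem _ ?_ (Submodule.sum_mem _ fun j hj => Submodule.add_mem _ ?_ ?_)
      · refine Submodule.smul_mem _ _ (bv_mem _ _ _ _ _ (hcard _ hs) _ _ _ fun _ h' => ?_)
        apply key_lt_W
        have := wt_q_lt p q lam hlam A a (by omega) (by omega) hs (by omega)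
        rw [hw, hw]; omega
      · obtain ⟨hj1, hj2⟩ := Finset.mem_erase.1 hj
        refine Submodule.smul_mem _ _ (bv_mem _ _ _ _ _ (hcard _ hj2) _ _ _ fun _ h' => ?_)
        apply key_lt_min
        · have := wt_p_le p q lam hlam A a (by omega) hj2
          rw [hw, hw]; omega
        · exact lt_of_le_of_lt (Finset.min_le (Finset.mem_erase.2 ⟨Ne.symm hj1, hs⟩))
            (min_erase_self A s hmin)
      · obtain ⟨hj1, hj2⟩ := Finset.mem_erase.1 hj
        refine Submodule.smul_mem _ _ (bv_mem _ _ _ _ _ (hcard _ hj2) _ _ _ fun _ h' => ?_)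
        apply key_lt_min
        · have := wt_q_le p q lam hlam A a (by omega) (by omega) hj2
          rw [hw, hw]; omega
        · exact lt_of_le_of_lt (Finset.min_le (Finset.mem_erase.2 ⟨Ne.symm hj1, hs⟩))
            (min_erase_self A s hmin)
  · subst h1 h2
    have hrk : 1 ≤ rk A t := by
      obtain ⟨j, hj, hr⟩ := exists_rk A 1 (by omega)
      rcases (hmax j hj).lt_or_eq with h | h
      · have := rk_lt A hj h; omega
      · subst h; omega
    refine ⟨sg (rk A t) * cQ ε A (0 : ℕ) t, mul_ne_zero (sg_ne _) ?_, ?_⟩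
    · unfold cQ; rw [if_pos (by omega)]; exact one_ne_zero
    · have hW := wt_q p q lam A (0 : ℕ) ht (by omega)
      rw [h3, h4, ← Finset.add_sum_erase _ _ ht]
      rw [add_comm (tP _ _ _ _ _ _ _), add_assoc, tQ, add_sub_cancel_left]
      refine Submodule.add_mem _ ?_ (Submodule.sum_mem _ fun j hj => Submodule.add_mem _ ?_ ?_)
      · exact Submodule.smul_mem _ _ (bv_mem _ _ _ _ _ (hcard _ ht) _ _ _ fun _ h' => by omega)
      · obtain ⟨hj1, hj2⟩ := Finset.mem_erase.1 hj
        exact Submodule.smul_mem _ _ (bv_mem _ _ _ _ _ (hcard _ hj2) _ _ _ fun _ h' => by omega)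
      · obtain ⟨hj1, hj2⟩ := Finset.mem_erase.1 hj
        refine Submodule.smul_mem _ _ (bv_mem _ _ _ _ _ (hcard _ hj2) _ _ _ fun _ h' => ?_)
        rcases Nat.eq_zero_or_pos (rk A j) with h0 | h0
        · apply key_lt_W
          have := wt_q_lt p q lam hlam A (0 : ℕ) (by omega) (by omega) hj2 (by omega)
          rw [hw, hw]; omega
        · apply key_lt_max
          · have := wt_q_le p q lam hlam A (0 : ℕ) (by omega) (by omega) hj2
            rw [hw, hw]; omega
          · obtain ⟨x, hx, hr⟩ := exists_rk A 0 (by omega)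
            have hne : x ≠ j := by rintro rfl; omega
            refine (Finset.min_le (Finset.mem_erase.2 ⟨hne, hx⟩)).trans ?_
            rw [Finset.le_min_iff]
            intro y hy
            have hy' := Finset.mem_of_mem_erase hy
            by_contra hlt
            have hlt' : y < x := by
              rw [not_le] at hlt; exact_mod_cast hlt
            have := rk_lt A hy' hlt'
            omega
          · exact lt_of_lt_of_le (max_erase_self A t hmax)
              (Finset.le_max (Finset.mem_erase.2 ⟨Ne.symm hj1, ht⟩))

end App


section App2

variable {K : Type*} [Field K] {n m : ℕ} (p q : Fin m → Fin n) (ε : K) (lam : Fin n → ℕ)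

local notation "RR" => MvPolynomial (Fin n) K

def key0 (c : Σ _ : EIdx m 0, Fin n →₀ ℕ) : ℕ := Finsupp.weight lam c.2

def Rel1 (b : Σ _ : EIdx m 1, Fin n →₀ ℕ) (c : Σ _ : EIdx m 0, Fin n →₀ ℕ) : Prop :=
  ∃ s t, s < t ∧ b.1.1.1 = {s, t} ∧
    c.2 = b.2 + Finsupp.single (p s) 1 + Finsupp.single (q t) 1

lemma bs_zero (c : Σ _ : EIdx m 0, Fin n →₀ ℕ) :
    bs n K (EIdx m 0) c = fun _ => monomial c.2 1 := by
  rw [bs_apply]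
  funext x
  have : x = c.1 := Subsingleton.elim (α := Unit) _ _
  rw [this, Pi.single_eq_same]

lemma lead1 (hlam : ∀ s t, s < t → lam (p t) + lam (q s) < lam (p s) + lam (q t))
    (b : Σ _ : EIdx m 1, Fin n →₀ ℕ) (c : Σ _ : EIdx m 0, Fin n →₀ ℕ) (h : Rel1 p q b c) :
    LeadAt (bs n K _) (key0 lam) (dd p q ε 0 (bs n K _ b)) c := by
  obtain ⟨s, t, hst, h1, h2⟩ := h
  have e : dd p q ε 0 (bs n K _ b) = bs n K _ c - ε • bs n K (EIdx m 0)
      ⟨c.1, b.2 + Finsupp.single (p t) 1 + Finsupp.single (q s) 1⟩ := by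
    rw [bs_apply b, dd_zero_single, h1, D0_pair _ _ _ hst, bs_zero, bs_zero, h2]
    funext x
    simp only [Pi.sub_apply, Pi.smul_apply]
    rw [← C_mul', X, X, X, X, C_mul_monomial, monomial_mul, monomial_mul, C_mul_monomial, mul_sub,
      monomial_mul, monomial_mul]
    simp [add_assoc]
  refine ⟨1, one_ne_zero, ?_⟩
  rw [e, one_smul, sub_sub_cancel_left]
  refine Submodule.neg_mem _ (Submodule.smul_mem _ _ (Submodule.subset_span ⟨_, ?_, rfl⟩))
  change Finsupp.weight lam _ < Finsupp.weight lam _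
  rw [h2]
  simp only [map_add, Finsupp.weight_single, one_smul]
  have := hlam _ _ hst
  omega

lemma sig_ext {i : ℕ} (b b' : Σ _ : EIdx m (i+1), Fin n →₀ ℕ) (h1 : b.1.1.1 = b'.1.1.1)
    (h2 : (b.1.2 : ℕ) = (b'.1.2 : ℕ)) (h3 : b.2 = b'.2) : b = b' := by
  obtain ⟨α, u⟩ := b
  obtain ⟨α', u'⟩ := b'
  dsimp only at h1 h2 h3
  have : α = α' := Prod.ext (Subtype.ext h1) (Fin.ext h2)
  subst this h3; rfl

lemma notD (i : ℕ) (b : Σ _ : EIdx m (i+1), Fin n →₀ ℕ) (h : ¬ ∃ a, Rel2 p q i a b) :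
    (∀ s, (∀ x ∈ b.1.1.1, s < x) → b.2 (p s) = 0) ∧
    ((b.1.2 : ℕ) = 0 → ∀ t, (∀ x ∈ b.1.1.1, x < t) → b.2 (q t) = 0) := by
  have key : ∀ v, b.2 v ≠ 0 → b.2 - Finsupp.single v 1 + Finsupp.single v 1 = b.2 := by
    intro v hv
    refine tsub_add_cancel_of_le ?_
    rw [Finsupp.single_le_iff]; omega
  have ha := b.1.2.2
  have hA := b.1.1.2
  constructor
  · intro s hs
    by_contra h0
    have hns : s ∉ b.1.1.1 := fun h => lt_irrefl _ (hs s h)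
    refine h ⟨⟨(⟨insert s b.1.1.1, by rw [Finset.card_insert_of_notMem hns, hA]⟩,
      ⟨(b.1.2 : ℕ) + 1, by omega⟩), b.2 - Finsupp.single (p s) 1⟩, Or.inl ⟨s, ?_, ?_, ?_, rfl, ?_⟩⟩
    · exact Finset.mem_insert_self _ _
    · intro x hx
      rcases Finset.mem_insert.1 hx with rfl | hx
      · exact le_rfl
      · exact (hs x hx).le
    · exact (Finset.erase_insert hns).symm
    · exact (key _ h0).symm
  · intro ha0 t ht
    by_contra h0
    have hns : t ∉ b.1.1.1 := fun h => lt_irrefl _ (ht t h)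
    refine h ⟨⟨(⟨insert t b.1.1.1, by rw [Finset.card_insert_of_notMem hns, hA]⟩,
      ⟨0, by omega⟩), b.2 - Finsupp.single (q t) 1⟩, Or.inr ⟨rfl, ha0, t, ?_, ?_, ?_, ?_⟩⟩
    · exact Finset.mem_insert_self _ _
    · intro x hx
      rcases Finset.mem_insert.1 hx with rfl | hx
      · exact le_rfl
      · exact (ht x hx).le
    · exact (Finset.erase_insert hns).symm
    · exact (key _ h0).symm

lemma tot2 (i : ℕ) (b : Σ _ : EIdx m (i+2), Fin n →₀ ℕ) : ∃ c, Rel2 p q i b c := by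
  have ha := b.1.2.2
  have hA := b.1.1.2
  have hne : b.1.1.1.Nonempty := by rw [← Finset.card_pos]; omega
  rcases Nat.eq_zero_or_pos (b.1.2 : ℕ) with h0 | h0
  · refine ⟨⟨(⟨b.1.1.1.erase (b.1.1.1.max' hne), ?_⟩, ⟨0, by omega⟩),
      b.2 + Finsupp.single (q (b.1.1.1.max' hne)) 1⟩, Or.inr ⟨h0, rfl, _, ?_, ?_, rfl, rfl⟩⟩
    · rw [Finset.card_erase_of_mem (Finset.max'_mem _ _), hA]; rfl
    · exact Finset.max'_mem _ _
    · intro x hx; exact Finset.le_max' _ _ hx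
  · refine ⟨⟨(⟨b.1.1.1.erase (b.1.1.1.min' hne), ?_⟩, ⟨(b.1.2 : ℕ) - 1, by omega⟩),
      b.2 + Finsupp.single (p (b.1.1.1.min' hne)) 1⟩, Or.inl ⟨_, ?_, ?_, rfl, ?_, rfl⟩⟩
    · rw [Finset.card_erase_of_mem (Finset.min'_mem _ _), hA]; rfl
    · exact Finset.min'_mem _ _
    · intro x hx; exact Finset.min'_le _ _ hx
    · dsimp only; omega

lemma tot1 (b : Σ _ : EIdx m 1, Fin n →₀ ℕ) : ∃ c, Rel1 p q b c := by
  obtain ⟨s, t, h, e⟩ := Finset.card_eq_two.1 b.1.1.2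
  rcases lt_or_gt_of_ne h with h | h
  · exact ⟨⟨(), _⟩, s, t, h, e, rfl⟩
  · exact ⟨⟨(), _⟩, t, s, h, by rw [e, Finset.pair_comm], rfl⟩

lemma single_ne {u u' : Fin n →₀ ℕ} {v v' : Fin n} (h : u + Finsupp.single v 1 = u' + Finsupp.single v' 1)
    (hv : v ≠ v') : u' v ≠ 0 := by
  have := DFunLike.congr_fun h v
  rw [Finsupp.add_apply, Finsupp.add_apply, Finsupp.single_eq_same,
    Finsupp.single_eq_of_ne hv] at this
  omega

lemma inj2 (hp : Function.Injective p) (hq : Function.Injective q)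
    (hpq : ∀ s r t, s < r → r < t → p s ≠ q t) (i : ℕ)
    (b b' : Σ _ : EIdx m (i+2), Fin n →₀ ℕ) (c : Σ _ : EIdx m (i+1), Fin n →₀ ℕ)
    (hb : ¬ ∃ a, Rel2 p q (i+1) a b) (hb' : ¬ ∃ a, Rel2 p q (i+1) a b')
    (h : Rel2 p q i b c) (h' : Rel2 p q i b' c) : b = b' := by
  obtain ⟨n1, n2⟩ := notD p q _ b hb
  obtain ⟨n1', n2'⟩ := notD p q _ b' hb'
  have hcne : c.1.1.1.Nonempty := by
    rw [← Finset.card_pos, c.1.1.2]; omega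
  rcases h with ⟨s, hs, hmin, h1, h2, h3⟩ | ⟨h1, h2, t, ht, hmax, h3, h4⟩
  · rcases h' with ⟨s', hs', hmin', h1', h2', h3'⟩ | ⟨h1', h2', t', ht', hmax', h3', h4'⟩
    · have hss : s = s' := by
        by_contra hne
        have hE : b.1.1.1.erase s = b'.1.1.1.erase s' := h1.symm.trans h1'
        have h3e := h3.symm.trans h3'
        rcases lt_or_gt_of_ne hne with hlt | hlt
        · refine single_ne h3e (fun e => hne (hp e)) (n1' s fun x hx => ?_)
          exact lt_of_lt_of_le hlt (hmin' x hx)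
        · refine single_ne h3e.symm (fun e => hne (hp e).symm) (n1 s' fun x hx => ?_)
          exact lt_of_lt_of_le hlt (hmin x hx)
      subst hss
      refine sig_ext _ _ ?_ (by omega) ?_
      · rw [← Finset.insert_erase hs, ← h1, h1', Finset.insert_erase hs']
      · exact add_right_cancel (h3.symm.trans h3')
    · exfalso
      obtain ⟨r, hr⟩ := hcne
      have hsc : ∀ x ∈ c.1.1.1, s < x := by
        intro x hx
        rw [h1] at hx
        obtain ⟨hx1, hx2⟩ := Finset.mem_erase.1 hx
        exact lt_of_le_of_ne (hmin x hx2) (Ne.symm hx1)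
      have htc : ∀ x ∈ c.1.1.1, x < t' := by
        intro x hx
        rw [h3'] at hx
        obtain ⟨hx1, hx2⟩ := Finset.mem_erase.1 hx
        exact lt_of_le_of_ne (hmax' x hx2) hx1
      refine single_ne (h3.symm.trans h4') (hpq s r t' (hsc r hr) (htc r hr)) (n1' s fun x hx => ?_)
      by_cases hxt : x = t'
      · subst hxt; exact (hsc r hr).trans (htc r hr)
      · apply hsc; rw [h3']; exact Finset.mem_erase.2 ⟨hxt, hx⟩
  · rcases h' with ⟨s', hs', hmin', h1', h2', h3'⟩ | ⟨h1', h2', t', ht', hmax', h3', h4'⟩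
    · exfalso
      obtain ⟨r, hr⟩ := hcne
      have hsc : ∀ x ∈ c.1.1.1, s' < x := by
        intro x hx
        rw [h1'] at hx
        obtain ⟨hx1, hx2⟩ := Finset.mem_erase.1 hx
        exact lt_of_le_of_ne (hmin' x hx2) (Ne.symm hx1)
      have htc : ∀ x ∈ c.1.1.1, x < t := by
        intro x hx
        rw [h3] at hx
        obtain ⟨hx1, hx2⟩ := Finset.mem_erase.1 hx
        exact lt_of_le_of_ne (hmax x hx2) hx1
      refine single_ne (h3'.symm.trans h4) (hpq s' r t (hsc r hr) (htc r hr)) (n1 s' fun x hx => ?_)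
      by_cases hxt : x = t
      · subst hxt; exact (hsc r hr).trans (htc r hr)
      · apply hsc; rw [h3]; exact Finset.mem_erase.2 ⟨hxt, hx⟩
    · have htt : t = t' := by
        by_contra hne
        have h4e := h4.symm.trans h4'
        rcases lt_or_gt_of_ne hne with hlt | hlt
        · refine single_ne h4e.symm (fun e => hne (hq e).symm) (n2 h1 t' fun x hx => ?_)
          exact lt_of_le_of_lt (hmax x hx) hlt
        · refine single_ne h4e (fun e => hne (hq e)) (n2' h1' t fun x hx => ?_)
          exact lt_of_le_of_lt (hmax' x hx) hlt
      subst htt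
      refine sig_ext _ _ ?_ (by omega) ?_
      · rw [← Finset.insert_erase ht, ← h3, h3', Finset.insert_erase ht']
      · exact add_right_cancel (h4.symm.trans h4')

lemma inj1_aux (hp : Function.Injective p)
    (hpq : ∀ s r t, s < r → r < t → p s ≠ q t) {u u' : Fin n →₀ ℕ} {s t s' t' : Fin m}
    (hst' : s' < t')
    (h : u + Finsupp.single (p s) 1 + Finsupp.single (q t) 1 =
      u' + Finsupp.single (p s') 1 + Finsupp.single (q t') 1)
    (n1 : ∀ r, r < s' → u' (p r) = 0) : s' ≤ s := by
  by_contra hlt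
  rw [not_le] at hlt
  have := DFunLike.congr_fun h (p s)
  simp only [Finsupp.add_apply] at this
  rw [Finsupp.single_eq_same, n1 s hlt, Finsupp.single_eq_of_ne (hp.ne hlt.ne),
    Finsupp.single_eq_of_ne (hpq s s' t' hlt hst')] at this
  omega

lemma inj1 (hp : Function.Injective p) (hq : Function.Injective q)
    (hpq : ∀ s r t, s < r → r < t → p s ≠ q t)
    (b b' : Σ _ : EIdx m 1, Fin n →₀ ℕ) (c : Σ _ : EIdx m 0, Fin n →₀ ℕ)
    (hb : ¬ ∃ a, Rel2 p q 0 a b) (hb' : ¬ ∃ a, Rel2 p q 0 a b')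
    (h : Rel1 p q b c) (h' : Rel1 p q b' c) : b = b' := by
  obtain ⟨n1, n2⟩ := notD p q _ b hb
  obtain ⟨n1', n2'⟩ := notD p q _ b' hb'
  have a0 : (b.1.2 : ℕ) = 0 := Nat.lt_one_iff.1 b.1.2.2
  have a0' : (b'.1.2 : ℕ) = 0 := Nat.lt_one_iff.1 b'.1.2.2
  obtain ⟨s, t, hst, e1, e2⟩ := h
  obtain ⟨s', t', hst', e1', e2'⟩ := h'
  have E := e2.symm.trans e2'
  have m1 : ∀ r, r < s → b.2 (p r) = 0 := fun r hr => n1 r (by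
    rw [e1]; intro x hx
    simp only [Finset.mem_insert, Finset.mem_singleton] at hx
    rcases hx with rfl | rfl
    · exact hr
    · exact hr.trans hst)
  have m1' : ∀ r, r < s' → b'.2 (p r) = 0 := fun r hr => n1' r (by
    rw [e1']; intro x hx
    simp only [Finset.mem_insert, Finset.mem_singleton] at hx
    rcases hx with rfl | rfl
    · exact hr
    · exact hr.trans hst')
  have m2 : ∀ r, t < r → b.2 (q r) = 0 := fun r hr => n2 a0 r (by
    rw [e1]; intro x hx
    simp only [Finset.mem_insert, Finset.mem_singleton] at hx
    rcases hx with rfl | rfl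
    · exact hst.trans hr
    · exact hr)
  have m2' : ∀ r, t' < r → b'.2 (q r) = 0 := fun r hr => n2' a0' r (by
    rw [e1']; intro x hx
    simp only [Finset.mem_insert, Finset.mem_singleton] at hx
    rcases hx with rfl | rfl
    · exact hst'.trans hr
    · exact hr)
  have hss : s = s' := le_antisymm (inj1_aux p q hp hpq hst E.symm m1)
    (inj1_aux p q hp hpq hst' E m1')
  subst hss
  have E' : b.2 + Finsupp.single (q t) 1 = b'.2 + Finsupp.single (q t') 1 := by
    apply add_right_cancel (b := Finsupp.single (p s) 1)
    rw [add_right_comm, E, add_right_comm]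
  have htt : t = t' := by
    by_contra hne
    rcases lt_or_gt_of_ne hne with hlt | hlt
    · exact single_ne E'.symm (fun e => hne (hq e).symm) (m2 t' hlt)
    · exact single_ne E' (fun e => hne (hq e)) (m2' t hlt)
  subst htt
  exact sig_ext _ _ (e1.trans e1'.symm) (by omega) (add_right_cancel E')

lemma dd_exact (hε : ε = 0 ∨ ε = 1) (hp : Function.Injective p) (hq : Function.Injective q)
    (hpq : ∀ s r t, s < r → r < t → p s ≠ q t)
    (hlam : ∀ s t, s < t → lam (p t) + lam (q s) < lam (p s) + lam (q t)) (i : ℕ)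
    (x : EIdx m (i+1) → RR) (hx : dd p q ε i x = 0) : ∃ y, dd p q ε (i+1) y = x := by
  have hc : ∀ y, dd p q ε i (dd p q ε (i+1) y) = 0 := fun y => by
    rw [← LinearMap.comp_apply, dd_comp p q ε hε]; rfl
  cases i with
  | zero =>
    exact exact_of_lead (bs n K _) (bs n K _) (bs n K _) ((dd p q ε 1).restrictScalars K)
      ((dd p q ε 0).restrictScalars K) (key1 p q lam 0) (key0 lam) (Rel2 p q 0) (Rel1 p q)
      (fun a b h => lead2 p q ε lam hlam 0 a b h) (fun a b h => lead1 p q ε lam hlam a b h)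
      (tot1 p q) (inj1 p q hp hq hpq) hc x hx
  | succ i =>
    exact exact_of_lead (bs n K _) (bs n K _) (bs n K _) ((dd p q ε (i+2)).restrictScalars K)
      ((dd p q ε (i+1)).restrictScalars K) (key1 p q lam (i+1)) (key1 p q lam i)
      (Rel2 p q (i+1)) (Rel2 p q i)
      (fun a b h => lead2 p q ε lam hlam (i+1) a b h) (fun a b h => lead2 p q ε lam hlam i a b h)
      (tot2 p q i) (inj2 p q hp hq hpq i) hc x hx

end App2


section TorPart
set_option linter.unusedSectionVars false
open CategoryTheory

universe u
variable {R : Type u} [CommRing R] (I N : Ideal R) (Idx : ℕ → Type) [∀ i, Fintype (Idx i)]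
  [∀ i, DecidableEq (Idx i)]
  (d : ∀ i, (Idx (i+1) → R) →ₗ[R] (Idx i → R)) (hd : ∀ i, d i ∘ₗ d (i+1) = 0)

def resCx : ChainComplex (ModuleCat.{u} R) ℕ :=
  ChainComplex.of (fun i => ModuleCat.of R (Idx i → R)) (fun i => ModuleCat.ofHom (d i))
    (fun i => by rw [← ModuleCat.ofHom_comp, hd]; rfl)

lemma resCx_d (i : ℕ) : (resCx Idx d hd).d (i+1) i = ModuleCat.ofHom (d i) := by
  simp [resCx]

def resRes (hex : ∀ i x, d i x = 0 → ∃ y, d (i+1) y = x)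
    (π : (Idx 0 → R) →ₗ[R] R ⧸ N) (hπ : Function.Surjective π)
    (hπk : ∀ x, π x = 0 ↔ ∃ y, d 0 y = x) :
    ProjectiveResolution (ModuleCat.of R (R ⧸ N)) where
  complex := resCx Idx d hd
  projective i := by
    change Projective (ModuleCat.of R (Idx i → R))
    exact (IsProjective.iff_projective (R := R) (Idx i → R)).1 inferInstance
  π := (ChainComplex.toSingle₀Equiv _ _).symm ⟨ModuleCat.ofHom π, by
    rw [resCx_d]
    ext x
    exact (hπk _).2 ⟨x, rfl⟩⟩
  quasiIso := ⟨fun n => by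
    cases n with
    | zero =>
      rw [ChainComplex.quasiIsoAt₀_iff, ShortComplex.quasiIso_iff_of_zeros' _ rfl rfl rfl]
      constructor
      · rw [ShortComplex.moduleCat_exact_iff]
        intro x hx
        obtain ⟨y, hy⟩ := (hπk x).1 (by simpa using! hx)
        refine ⟨y, ?_⟩
        change (resCx Idx d hd).d 1 0 y = x
        rw [resCx_d]; exact hy
      · rw [ModuleCat.epi_iff_surjective]
        intro x
        obtain ⟨y, hy⟩ := hπ x
        exact ⟨y, by simpa using! hy⟩
    | succ m =>
      rw [quasiIsoAt_iff_exactAt' (hL := ChainComplex.exactAt_succ_single_obj ..),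
          HomologicalComplex.exactAt_iff' _ (m + 2) (m + 1) m (by simp) (by simp)]
      rw [ShortComplex.moduleCat_exact_iff]
      intro x hx
      change (resCx Idx d hd).d (m+1) m x = 0 at hx
      rw [resCx_d] at hx
      obtain ⟨y, hy⟩ := hex m x hx
      refine ⟨y, ?_⟩
      change (resCx Idx d hd).d (m+2) (m+1) y = x
      rw [resCx_d]; exact hy⟩

open scoped TensorProduct

lemma lTensor_zero_of_min {M : Type*} [AddCommGroup M] [Module R M] {ι : Type*} [Fintype ι]
    [DecidableEq ι]
    (f : M →ₗ[R] (ι → R)) (hf : ∀ x j, f x j ∈ I) : f.lTensor (R ⧸ I) = 0 := by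
  ext x y
  simp only [TensorProduct.AlgebraTensorModule.curry_apply, TensorProduct.curry_apply,
    LinearMap.lTensor_tmul, LinearMap.coe_restrictScalars, LinearMap.zero_apply]
  have : f y = ∑ j, f y j • Pi.single j (1:R) := by
    ext k; simp [Finset.sum_apply, Pi.single_apply]
  rw [this, TensorProduct.tmul_sum]
  refine Finset.sum_eq_zero fun j _ => ?_
  rw [TensorProduct.tmul_smul, TensorProduct.smul_tmul']
  have h0 : f y j • x = 0 := by
    obtain ⟨r, rfl⟩ := Ideal.Quotient.mk_surjective x
    rw [← Ideal.Quotient.mk_eq_mk, ← Submodule.Quotient.mk_smul, Submodule.Quotient.mk_eq_zero]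
    exact I.mul_mem_right _ (hf _ _)
  rw [h0, TensorProduct.zero_tmul]

theorem tor_of_res (hd : ∀ i, d i ∘ₗ d (i+1) = 0) (hex : ∀ i x, d i x = 0 → ∃ y, d (i+1) y = x)
    (π : (Idx 0 → R) →ₗ[R] R ⧸ N) (hπ : Function.Surjective π)
    (hπk : ∀ x, π x = 0 ↔ ∃ y, d 0 y = x)
    (hmin : ∀ i x j, d i x j ∈ I) (i : ℕ) :
    Nonempty (((Tor (ModuleCat R) i).obj (ModuleCat.of R (R ⧸ I))).obj (ModuleCat.of R (R ⧸ N))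
      ≃ₗ[R] (Idx i → R ⧸ I)) := by
  let P := resRes N Idx d hd hex π hπ hπk
  let F := (MonoidalCategory.tensoringLeft (ModuleCat R)).obj (ModuleCat.of R (R ⧸ I))
  have e1 := P.isoLeftDerivedObj F i
  let C := (F.mapHomologicalComplex (ComplexShape.down ℕ)).obj P.complex
  have hz : ∀ a b, C.d a b = 0 := by
    intro a b
    by_cases h : b + 1 = a
    · subst h
      change F.map ((resCx Idx d hd).d (b+1) b) = 0
      rw [resCx_d]
      have := lTensor_zero_of_min I (d b) (hmin b)
      apply ModuleCat.hom_ext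
      exact this
    · exact C.shape _ _ h
  let D := ShortComplex.HomologyData.ofZeros (C.sc i) (hz _ _) (hz _ _)
  have e2 : C.homology i ≅ C.X i := D.left.homologyIso
  have e3 : (C.X i : Type u) ≃ₗ[R] (Idx i → R ⧸ I) :=
    (TensorProduct.piScalarRight R R _ _ :
      ((R ⧸ I) ⊗[R] (Idx i → R)) ≃ₗ[R] (Idx i → R ⧸ I))
  exact ⟨(e1 ≪≫ e2).toLinearEquiv.trans e3⟩
end TorPart


section MainAlg

variable {K : Type*} [Field K] {n m : ℕ} (p q : Fin m → Fin n) (ε : K) (lam : Fin n → ℕ)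

local notation "RR" => MvPolynomial (Fin n) K

/-- the unique index in degree zero -/
def e0 (m : ℕ) : EIdx m 0 := ()

def JJ : Ideal RR :=
  Ideal.span {f | ∃ s t, s < t ∧ f = X (p s) * X (q t) - C ε * X (p t) * X (q s)}

lemma mem_JJ_iff (x : RR) : x ∈ JJ p q ε ↔ ∃ y, dd p q ε 0 y = fun _ => x := by
  constructor
  · intro hx
    have : JJ p q ε ≤ (LinearMap.range (LinearMap.proj (e0 m) ∘ₗ dd p q ε 0) :
        Submodule RR RR) := by
      unfold JJ
      rw [Ideal.span, Submodule.span_le]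
      rintro _ ⟨s, t, hst, rfl⟩
      refine ⟨ee 0 {s, t} 0, ?_⟩
      rw [LinearMap.comp_apply, dd_zero_ee _ _ _ _ (Finset.card_pair hst.ne),
        LinearMap.proj_apply, if_pos rfl, D0_pair _ _ _ hst]
    obtain ⟨y, hy⟩ := this hx
    refine ⟨y, ?_⟩
    funext z
    exact hy
  · rintro ⟨y, hy⟩
    have h := congrFun hy (e0 m)
    rw [← show _ = x from h]
    simp only [dd, Fintype.linearCombination_apply, Finset.sum_apply, Pi.smul_apply]
    refine Ideal.sum_mem _ fun α _ => Ideal.mul_mem_left _ _ ?_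
    obtain ⟨s, t, h, e⟩ := Finset.card_eq_two.1 α.1.2
    rw [e]
    rcases lt_or_gt_of_ne h with h | h
    · rw [D0_pair _ _ _ h]; exact Ideal.subset_span ⟨s, t, h, rfl⟩
    · rw [Finset.pair_comm, D0_pair _ _ _ h]; exact Ideal.subset_span ⟨t, s, h, rfl⟩

theorem tor_JJ (hε : ε = 0 ∨ ε = 1) (hp : Function.Injective p) (hq : Function.Injective q)
    (hpq : ∀ s r t, s < r → r < t → p s ≠ q t)
    (hlam : ∀ s t, s < t → lam (p t) + lam (q s) < lam (p s) + lam (q t)) (i : ℕ) :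
    Nonempty ((TorKN n K i (JJ p q ε)) ≃ₗ[RR]
      (Fin (if i = 0 then 1 else i * Nat.choose m (i + 1)) →
          RR ⧸ (Ideal.span (Set.range X) : Ideal RR))) := by
  obtain ⟨e⟩ := tor_of_res (Ideal.span (Set.range X) : Ideal RR) (JJ p q ε) (EIdx m)
    (dd p q ε) (dd_comp p q ε hε) (fun i x hx => dd_exact p q ε lam hε hp hq hpq hlam i x hx)
    ((Ideal.Quotient.mkₐ RR (JJ p q ε)).toLinearMap ∘ₗ LinearMap.proj (e0 m))
    (by
      intro z
      obtain ⟨w, rfl⟩ := Ideal.Quotient.mk_surjective z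
      exact ⟨fun _ => w, rfl⟩)
    (by
      intro x
      have hx : x = fun _ => x (e0 m) := by funext z; rfl
      rw [hx, ← mem_JJ_iff]
      exact Ideal.Quotient.eq_zero_iff_mem)
    (fun i x j => dd_min p q ε i x j) i
  have e2 : Fin (if i = 0 then 1 else i * Nat.choose m (i + 1)) ≃ EIdx m i :=
    (finCongr (card_EIdx m i).symm).trans (Fintype.equivFin _).symm
  exact ⟨e.trans (LinearEquiv.funCongrLeft RR _ e2)⟩

end MainAlg


section Comb

lemma val_add1 {n : ℕ} [NeZero n] (hn : 3 ≤ n) (x : Fin n) :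
    (x + 1).val = if x.val = n - 1 then 0 else x.val + 1 := by
  have h1 : ((1 : Fin n) : ℕ) = 1 := by
    rw [Fin.val_one', Nat.mod_eq_of_lt (by omega)]
  rw [Fin.val_add, h1]
  have := x.2
  split_ifs with h
  · rw [h, Nat.sub_add_cancel (by omega), Nat.mod_self]
  · exact Nat.mod_eq_of_lt (by omega)

lemma val_sub1 {n : ℕ} [NeZero n] (hn : 3 ≤ n) (x : Fin n) :
    (x - 1).val = if x.val = 0 then n - 1 else x.val - 1 := by
  have h := val_add1 hn (x - 1)
  rw [sub_add_cancel] at h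
  have := x.2
  have := (x - 1).2
  split_ifs at h ⊢ <;> omega

lemma cycle_adj {n : ℕ} [NeZero n] {x y : Fin n} (h : (cycleG n).Adj x y) :
    y = x + 1 ∨ x = y + 1 := by
  unfold cycleG at h
  rw [SimpleGraph.fromRel_adj] at h
  exact h.2

lemma conn_closed {n : ℕ} [NeZero n] (S T : Set (Fin n)) (hS : ((cycleG n).induce S).Connected)
    (hne : ∃ x ∈ T, x ∈ S)
    (hcl1 : ∀ x ∈ T, x ∈ S → x + 1 ∈ S → x + 1 ∈ T)
    (hcl2 : ∀ x ∈ T, x ∈ S → x - 1 ∈ S → x - 1 ∈ T) : S ⊆ T := by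
  intro y hy
  obtain ⟨x, hxT, hxS⟩ := hne
  have h := hS.preconnected ⟨x, hxS⟩ ⟨y, hy⟩
  rw [SimpleGraph.reachable_iff_reflTransGen] at h
  have : ∀ z : S, Relation.ReflTransGen ((cycleG n).induce S).Adj ⟨x, hxS⟩ z → z.1 ∈ T := by
    intro z hz
    induction hz with
    | refl => exact hxT
    | tail _ hadj ih =>
      rename_i a b _
      rcases cycle_adj (n := n) hadj with h | h
      · have h' : (b : Fin n) = (a : Fin n) + 1 := h
        rw [h']; exact hcl1 _ ih a.2 (h' ▸ b.2)
      · have h' : (b : Fin n) = (a : Fin n) - 1 := by rw [eq_sub_iff_add_eq]; exact h.symm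
        rw [h']; exact hcl2 _ ih a.2 (h' ▸ b.2)
  exact this _ h

variable {n k : ℕ} [NeZero n] (hn : 3 ≤ n) (c : Fin n → Fin k)

/-- Start points of parts. -/
def WW (c : Fin n → Fin k) : Finset (Fin n) := Finset.univ.filter (fun w => c (w - 1) ≠ c w)

lemma mem_WW (w : Fin n) : w ∈ WW c ↔ c (w - 1) ≠ c w := by simp [WW]

/-- parts do not cross cuts -/
lemma part_in_interval (hn : 3 ≤ n) (hconn : ∀ j, ((cycleG n).induce {x | c x = j}).Connected)
    {w w' : Fin n} (hw : w ∈ WW c) (hw' : w' ∈ WW c) {x y : Fin n}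
    (hx1 : w ≤ x) (hx2 : x < w') (hxy : c y = c x) : w ≤ y ∧ y < w' := by
  rw [mem_WW] at hw hw'
  have := conn_closed {z | c z = c x} {z | w ≤ z ∧ z < w'} (hconn (c x)) ⟨x, ⟨hx1, hx2⟩, rfl⟩ ?_ ?_
  · exact this hxy
  · rintro z ⟨hz1, hz2⟩ hz3 hz4
    simp only [Set.mem_ofPred_eq] at *
    have h1 : z + 1 ≠ w' := by
      rintro rfl
      rw [add_sub_cancel_right] at hw'
      exact hw' (hz3.trans hz4.symm)
    have e := val_add1 hn z
    rw [Ne, Fin.ext_iff] at h1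
    simp only [Fin.le_def, Fin.lt_def] at *
    have := w'.2
    split_ifs at e <;> omega
  · rintro z ⟨hz1, hz2⟩ hz3 hz4
    simp only [Set.mem_ofPred_eq] at *
    have h1 : z ≠ w := by
      rintro rfl
      exact hw (hz4.trans hz3.symm)
    have e := val_sub1 hn z
    rw [Ne, Fin.ext_iff] at h1
    simp only [Fin.le_def, Fin.lt_def] at *
    split_ifs at e <;> omega

lemma WW_inj (hn : 3 ≤ n) (hconn : ∀ j, ((cycleG n).induce {x | c x = j}).Connected) :
    Set.InjOn c (WW c) := by
  have key : ∀ w ∈ WW c, ∀ w' ∈ WW c, c w = c w' → ¬ w < w' := by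
    intro w hw w' hw' h hlt
    have := part_in_interval c hn hconn hw hw' le_rfl hlt h.symm
    exact lt_irrefl _ this.2
  intro w hw w' hw' h
  by_contra hne
  rcases lt_or_gt_of_ne hne with h1 | h1
  · exact key _ hw _ hw' h h1
  · exact key _ hw' _ hw h.symm h1

lemma WW_surj (hn : 3 ≤ n) (hk : 2 ≤ k) (hc : Function.Surjective c) (j : Fin k) : ∃ w ∈ WW c, c w = j := by
  by_contra hno
  push Not at hno
  obtain ⟨x, hx⟩ := hc j
  have h0 : ∀ z, c z = j → c (z - 1) = j := by
    intro z hz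
    have h2 : z ∉ WW c := fun h => hno _ h hz
    rw [mem_WW, not_not] at h2
    rw [h2, hz]
  have h1 : ∀ (v : ℕ) (z : Fin n), z.val = v → c z = j → ∀ y ≤ z, c y = j := by
    intro v
    induction v with
    | zero =>
      intro z hz hcz y hy
      have : y = z := by
        rw [Fin.ext_iff]; rw [Fin.le_def] at hy; omega
      rw [this, hcz]
    | succ v ih =>
      intro z hz hcz y hy
      have e := val_sub1 hn z
      rw [if_neg (by omega)] at e
      rcases hy.lt_or_eq with h | h
      · refine ih (z - 1) (by omega) (h0 z hcz) y ?_
        rw [Fin.le_def]; rw [Fin.lt_def] at h; omega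
      · rw [h, hcz]
  have h3 : ∀ y, c y = j := by
    intro y
    have c0 : c (0 : Fin n) = j := h1 _ x rfl hx 0 (Fin.zero_le _)
    refine h1 _ _ rfl (h0 _ c0) y ?_
    have e := val_sub1 hn (0 : Fin n)
    rw [if_pos (Fin.val_zero n)] at e
    rw [Fin.le_def, e]
    have := y.2
    omega
  obtain ⟨j', hj'⟩ : ∃ j' : Fin k, j' ≠ j := by
    have : Nontrivial (Fin k) := Fin.nontrivial_iff_two_le.2 hk
    exact exists_ne j
  obtain ⟨y, hy⟩ := hc j'
  exact hj' (hy ▸ h3 y)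

lemma WW_card (hn : 3 ≤ n) (hk : 1 ≤ k) (hc : Function.Surjective c)
    (hconn : ∀ j, ((cycleG n).induce {x | c x = j}).Connected) (i : ℕ) :
    (if i = 0 then 1 else i * Nat.choose (WW c).card (i + 1)) =
      if i = 0 then 1 else i * Nat.choose k (i + 1) := by
  rcases Nat.lt_or_ge 1 k with h | h
  · have : (WW c).card = k := by
      rw [← Finset.card_image_of_injOn (WW_inj c hn hconn)]
      have : (WW c).image c = Finset.univ := by
        ext j; simpa using WW_surj c hn h hc j
      rw [this, Finset.card_univ, Fintype.card_fin]
    rw [this]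
  · have hk1 : k = 1 := by omega
    subst hk1
    have : WW c = ∅ := by
      ext w; simp only [mem_WW, Finset.notMem_empty, iff_false, not_not]
      exact Subsingleton.elim _ _
    rw [this]
    split_ifs with hi
    · rfl
    · rw [Nat.choose_eq_zero_of_lt (by simp), Nat.choose_eq_zero_of_lt (by omega)]

def pp (s : Fin (WW c).card) : Fin n := (WW c).orderEmbOfFin rfl s
def qq (s : Fin (WW c).card) : Fin n := pp c s - 1

def lamb (n : ℕ) (x : Fin n) : ℕ := (x.val + 1) * (n - 1 - x.val)

lemma pp_mem (s : Fin (WW c).card) : pp c s ∈ WW c := Finset.orderEmbOfFin_mem _ _ _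
lemma pp_lt {s t : Fin (WW c).card} (h : s < t) : pp c s < pp c t :=
  ((WW c).orderEmbOfFin rfl).strictMono h
lemma pp_inj : Function.Injective (pp c) := ((WW c).orderEmbOfFin rfl).injective
lemma qq_inj : Function.Injective (qq c) := fun s t h => pp_inj c (sub_left_injective h)
lemma pp_surj {w w' : Fin n} (hw : w ∈ WW c) (hw' : w' ∈ WW c) (h : w < w') :
    ∃ s t, s < t ∧ pp c s = w ∧ pp c t = w' := by
  have hr := Finset.range_orderEmbOfFin (WW c) (rfl : (WW c).card = (WW c).card)
  have h1 : w ∈ Set.range ((WW c).orderEmbOfFin rfl) := by rw [hr]; exact hw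
  have h2 : w' ∈ Set.range ((WW c).orderEmbOfFin rfl) := by rw [hr]; exact hw'
  obtain ⟨s, hs⟩ := h1
  obtain ⟨t, ht⟩ := h2
  refine ⟨s, t, ?_, hs, ht⟩
  rw [← hs, ← ht] at h
  exact ((WW c).orderEmbOfFin rfl).lt_iff_lt.1 h

lemma pp_ne_qq (hn : 3 ≤ n) (s r t : Fin (WW c).card) (h1 : s < r) (h2 : r < t) :
    pp c s ≠ qq c t := by
  have a1 := pp_lt c h1
  have a2 := pp_lt c h2
  unfold qq
  have e := val_sub1 hn (pp c t)
  rw [Ne, Fin.ext_iff]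
  simp only [Fin.lt_def] at a1 a2
  split_ifs at e <;> omega

lemma lamb_lt (hn : 3 ≤ n) {w w' : Fin n} (h : w < w') :
    lamb n w' + lamb n (w - 1) < lamb n w + lamb n (w' - 1) := by
  have hw' := w'.2
  simp only [Fin.lt_def] at h
  have e1 := val_sub1 hn w
  have e2 := val_sub1 hn w'
  rw [if_neg (by omega)] at e2
  unfold lamb
  rw [e1, e2]
  generalize w.val = a at *
  generalize w'.val = b at *
  obtain ⟨d, rfl⟩ : ∃ d, b = a + d + 1 := ⟨b - a - 1, by omega⟩
  obtain ⟨r, rfl⟩ : ∃ r, n = a + d + r + 2 := ⟨n - (a + d + 2), by omega⟩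
  have s1 : a + d + r + 2 - 1 - (a + d + 1) = r := by omega
  have s2 : a + d + r + 2 - 1 - a = d + r + 1 := by omega
  have s3 : a + d + r + 2 - 1 - (a + d + 1 - 1) = r + 1 := by omega
  have s4 : a + d + 1 - 1 + 1 = a + d + 1 := by omega
  rw [s1, s2, s3, s4]
  split_ifs with h0
  · have s5 : a + d + r + 2 - 1 - (a + d + r + 2 - 1) = 0 := by omega
    rw [s5]; subst h0; nlinarith
  · have s5 : a + d + r + 2 - 1 - (a - 1) = d + r + 2 := by omega
    have s6 : a - 1 + 1 = a := by omega
    rw [s5, s6]; nlinarith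

end Comb


section Ideals

variable {n k : ℕ} [NeZero n] (c : Fin n → Fin k) {K : Type*} [Field K]

def Xp (K : Type*) [Field K] (u : Fin n → ℕ) : MvPolynomial (Fin n) K := ∏ i, X i ^ u i

lemma Xp_add (u v : Fin n → ℕ) : Xp K (u + v) = Xp K u * Xp K v := by
  simp [Xp, pow_add, Finset.prod_mul_distrib]

lemma Xp_single (w : Fin n) : Xp K (Pi.single w 1) = X w := by
  unfold Xp
  rw [Finset.prod_eq_single w]
  · simp
  · intro b _ hb; simp [hb]
  · simp

/-- exponent of the leading monomial -/
def e2 (w w' : Fin n) : Fin n → ℕ := Pi.single w 1 + Pi.single w' 1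

lemma Xp_e2 (w w' : Fin n) : Xp K (e2 w w') = X w * X w' := by
  rw [e2, Xp_add, Xp_single, Xp_single]

lemma e2_apply (w w' l : Fin n) :
    e2 w w' l = (if l = w then 1 else 0) + (if l = w' then 1 else 0) := by
  simp [e2, Pi.single_apply]

lemma gen_mem {w w' : Fin n} (hw : w ∈ WW c) (hw' : w' ∈ WW c) (h : w < w') (ε : K) :
    Xp K (e2 w (w' - 1)) - C ε * Xp K (e2 w' (w - 1)) ∈ JJ (pp c) (qq c) ε := by
  obtain ⟨s, t, hst, rfl, rfl⟩ := pp_surj c hw hw' h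
  refine Ideal.subset_span ⟨s, t, hst, ?_⟩
  rw [Xp_e2, Xp_e2, mul_assoc]; rfl

lemma interval_conn (hn : 3 ≤ n) {w w' : Fin n} (h : w < w') :
    ((cycleG n).induce {x | w ≤ x ∧ x < w'}).Connected := by
  set S : Set (Fin n) := {x | w ≤ x ∧ x < w'} with hS
  have hw : w ∈ S := ⟨le_rfl, h⟩
  have key : ∀ (v : ℕ) (x : Fin n) (hx : x ∈ S), x.val = v →
      ((cycleG n).induce S).Reachable ⟨w, hw⟩ ⟨x, hx⟩ := by
    intro v
    induction v with
    | zero =>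
      intro x hx hv
      have : x = w := by
        have := hx.1
        rw [Fin.le_def] at this
        rw [Fin.ext_iff]; omega
      subst this; exact SimpleGraph.Reachable.refl _
    | succ v ih =>
      intro x hx hv
      rcases hx.1.eq_or_lt with h1 | h1
      · subst h1; exact SimpleGraph.Reachable.refl _
      · have e := val_sub1 hn x
        rw [if_neg (by omega)] at e
        have h2 := hx.2
        have hm : x - 1 ∈ S := by
          constructor
          · rw [Fin.le_def]; rw [Fin.lt_def] at h1; omega
          · rw [Fin.lt_def] at h2 ⊢; omega
        refine (ih (x - 1) hm (by omega)).trans (SimpleGraph.Adj.reachable ?_)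
        change (cycleG n).Adj (x - 1) x
        unfold cycleG
        rw [SimpleGraph.fromRel_adj]
        refine ⟨?_, Or.inl (sub_add_cancel x 1).symm⟩
        rw [Ne, Fin.ext_iff]; omega
  haveI : Nonempty S := ⟨⟨w, hw⟩⟩
  refine SimpleGraph.Connected.mk ?_
  intro x y
  exact (key _ x.1 x.2 rfl).symm.trans (key _ y.1 y.2 rfl)

lemma outVec_interval (hn : 3 ≤ n) {w w' : Fin n} (h : w < w') :
    outVec n {x | w ≤ x ∧ x < w'} = e2 w (w' - 1) := by
  funext i
  rw [e2_apply]
  unfold outVec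
  have e := val_sub1 hn w'
  have e1 := val_sub1 hn i
  have e3 := val_add1 hn i
  have hi := i.2
  have hw' := w'.2
  simp only [Set.mem_ofPred_eq, Fin.le_def, Fin.lt_def, Fin.ext_iff] at *
  rw [if_neg (by omega)] at e
  split_ifs at * <;> omega

theorem gpark_eq (hn : 3 ≤ n) (hconn : ∀ j, ((cycleG n).induce {x | c x = j}).Connected)
    (sink : Fin k) (hsink : c ⟨n - 1, by omega⟩ = sink) :
    gparkIdeal n k K (fun j => {x | c x = j}) sink = JJ (pp c) (qq c) 0 := by
  apply le_antisymm
  · unfold gparkIdeal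
    rw [Ideal.span_le]
    rintro _ ⟨S, ⟨⟨T, hT⟩, hS⟩, hs, rfl⟩
    have hpar : ∀ x y, x ∈ S → c y = c x → y ∈ S := by
      intro x y hx hxy
      rw [hT] at hx ⊢
      simp only [Set.mem_iUnion, Set.mem_ofPred_eq, exists_prop] at hx ⊢
      obtain ⟨j, hj, rfl⟩ := hx
      exact ⟨_, hj, hxy⟩
    have hlast : (⟨n - 1, by omega⟩ : Fin n) ∉ S := by
      intro hl
      apply hs
      intro y hy
      exact hpar _ y hl (by rw [hsink]; exact hy)
    obtain ⟨⟨x0, hx0⟩⟩ := hS.nonempty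
    classical
    have hne : (Finset.univ.filter (· ∈ S)).Nonempty := ⟨x0, by simpa using hx0⟩
    obtain ⟨w, hw, hwmin⟩ := Finset.exists_min_image _ id hne
    obtain ⟨M, hM, hMmax⟩ := Finset.exists_max_image _ id hne
    simp only [Finset.mem_filter, Finset.mem_univ, true_and, id] at hw hwmin hM hMmax
    have hMn : M.val ≠ n - 1 := by
      intro h
      apply hlast
      rwa [show (⟨n - 1, by omega⟩ : Fin n) = M from Fin.ext h.symm]
    have eM := val_add1 hn M
    rw [if_neg hMn] at eM
    have ew := val_sub1 hn w
    have h1 : w - 1 ∉ S := by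
      intro h
      by_cases h0 : w.val = 0
      · rw [if_pos h0] at ew
        apply hlast
        rwa [show (⟨n - 1, by omega⟩ : Fin n) = w - 1 from Fin.ext ew.symm]
      · rw [if_neg h0] at ew
        have := hwmin _ h
        rw [Fin.le_def] at this
        omega
    have h2 : M + 1 ∉ S := by
      intro h
      have := hMmax _ h
      rw [Fin.le_def] at this
      omega
    have hwW : w ∈ WW c := by
      rw [mem_WW]; intro h; exact h1 (hpar _ _ hw h)
    have hMW : M + 1 ∈ WW c := by
      rw [mem_WW, add_sub_cancel_right]; intro h; exact h2 (hpar _ _ hM h.symm)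
    have hlt : w < M + 1 := by
      have := hwmin _ hM
      rw [Fin.le_def] at this
      rw [Fin.lt_def]; omega
    have hg := gen_mem c hwW hMW hlt (0 : K)
    rw [map_zero, zero_mul, sub_zero, add_sub_cancel_right] at hg
    have hle : e2 w M ≤ outVec n S := by
      intro l
      rw [e2_apply]
      unfold outVec
      by_cases a1 : l = w
      · subst a1
        by_cases a2 : l = M
        · subst a2; rw [if_pos hw, if_neg h1, if_neg h2]; simp
        · rw [if_pos hw, if_neg h1]; simp [a2]
      · by_cases a2 : l = M
        · subst a2; rw [if_pos hM, if_neg h2]; simp [a1]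
        · simp [a1, a2]
    change Xp K (outVec n S) ∈ JJ (pp c) (qq c) 0
    rw [← tsub_add_cancel_of_le hle, Xp_add]
    exact Ideal.mul_mem_left _ _ hg
  · unfold JJ
    rw [Ideal.span_le]
    rintro _ ⟨s, t, hst, rfl⟩
    have hlt := pp_lt c hst
    refine Ideal.subset_span ⟨{x | pp c s ≤ x ∧ x < pp c t}, ⟨⟨c '' {x | pp c s ≤ x ∧ x < pp c t},
      ?_⟩, interval_conn hn hlt⟩, ?_, ?_⟩
    · ext y
      simp only [Set.mem_iUnion, Set.mem_ofPred_eq, exists_prop, Set.mem_image]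
      constructor
      · intro hy; exact ⟨_, ⟨y, hy, rfl⟩, rfl⟩
      · rintro ⟨_, ⟨x, hx, rfl⟩, hy⟩
        exact part_in_interval c hn hconn (pp_mem c s) (pp_mem c t) hx.1 hx.2 hy
    · intro h
      have h1 := (h hsink).2
      rw [Fin.lt_def] at h1
      have := (pp c t).2
      simp only at h1
      omega
    · rw [map_zero, zero_mul, zero_mul, sub_zero]
      unfold outMono
      rw [outVec_interval hn hlt]
      exact (Xp_e2 _ _).symm

/-- the Laplacian -/
def Lap (g : Fin n → ℤ) : Fin n → ℤ := fun l => 2 * g l - g (l - 1) - g (l + 1)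

lemma sum_cycLap (hn : 3 ≤ n) (g : Fin n → ℤ) (l : Fin n) :
    ∑ x, g x * cycLap n x l = Lap g l := by
  have h1 : ∀ x, g x * cycLap n x l = (if x = l then 2 * g x else 0) -
      (if x = l - 1 then g x else 0) - (if x = l + 1 then g x else 0) := by
    intro x
    unfold cycLap
    have e1 := val_sub1 hn l
    have e2 := val_add1 hn l
    have e3 := val_add1 hn x
    have hl := l.2
    have hx := x.2
    have a1 : l = x + 1 ↔ x = l - 1 := by rw [eq_sub_iff_add_eq, eq_comm]
    simp only [a1]
    have n1 : ¬ (x = l ∧ x = l - 1) := by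
      rintro ⟨b1, b2⟩; rw [Fin.ext_iff] at b1 b2; split_ifs at * <;> omega
    have n2 : ¬ (x = l ∧ x = l + 1) := by
      rintro ⟨b1, b2⟩; rw [Fin.ext_iff] at b1 b2; split_ifs at * <;> omega
    have n3 : ¬ (x = l - 1 ∧ x = l + 1) := by
      rintro ⟨b1, b2⟩; rw [Fin.ext_iff] at b1 b2; split_ifs at * <;> omega
    clear e1 e2 e3
    by_cases b1 : x = l
    · rw [if_pos b1.symm, if_pos b1, if_neg (fun b => n1 ⟨b1, b⟩), if_neg (fun b => n2 ⟨b1, b⟩)]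
      ring
    · rw [if_neg (Ne.symm b1), if_neg b1]
      by_cases b2 : x = l - 1
      · rw [if_pos (Or.inl b2), if_pos b2, if_neg (fun b => n3 ⟨b2, b⟩)]; ring
      · by_cases b3 : x = l + 1
        · rw [if_pos (Or.inr b3), if_neg b2, if_pos b3]; ring
        · rw [if_neg (by tauto), if_neg b2, if_neg b3]; ring
  rw [Finset.sum_congr rfl fun x _ => h1 x, Finset.sum_sub_distrib, Finset.sum_sub_distrib]
  simp [Lap]

lemma mem_L (hn : 3 ≤ n) (x : Fin n → ℤ) :
    x ∈ Submodule.span ℤ (Set.range fun j => bPart n {x | c x = j}) ↔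
      ∃ h : Fin k → ℤ, x = Lap (h ∘ c) := by
  rw [Submodule.mem_span_range_iff_exists_fun]
  have key : ∀ h : Fin k → ℤ, ∑ j, h j • bPart n {x | c x = j} = Lap (h ∘ c) := by
    intro h
    funext l
    rw [← sum_cycLap hn]
    simp only [bPart, Finset.sum_apply, Pi.smul_apply, smul_eq_mul, Set.mem_ofPred_eq,
      Finset.mul_sum]
    rw [Finset.sum_comm]
    refine Finset.sum_congr rfl fun y _ => ?_
    rw [Finset.sum_eq_single (c y)]
    · simp
    · intro j _ hj; rw [if_neg (Ne.symm hj)]; simp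
    · simp
  constructor
  · rintro ⟨h, rfl⟩; exact ⟨h, key h⟩
  · rintro ⟨h, rfl⟩; exact ⟨h, key h⟩

def zc (u : Fin n → ℕ) : Fin n → ℤ := fun i => (u i : ℤ)

lemma gen_lattice (hn : 3 ≤ n) (hconn : ∀ j, ((cycleG n).induce {x | c x = j}).Connected)
    {w w' : Fin n} (hw : w ∈ WW c) (hw' : w' ∈ WW c) (h : w < w') :
    zc (e2 w (w' - 1)) - zc (e2 w' (w - 1)) ∈
      Submodule.span ℤ (Set.range fun j => bPart n {x | c x = j}) := by
  rw [mem_L c hn]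
  classical
  refine ⟨fun j => if ∃ x, (w ≤ x ∧ x < w') ∧ c x = j then 1 else 0, ?_⟩
  have hg : (fun j => if ∃ x, (w ≤ x ∧ x < w') ∧ c x = j then (1 : ℤ) else 0) ∘ c =
      fun y => if w ≤ y ∧ y < w' then 1 else 0 := by
    funext y
    simp only [Function.comp_apply]
    congr 1
    rw [eq_iff_iff]
    constructor
    · rintro ⟨x, hx, e⟩
      exact part_in_interval c hn hconn hw hw' hx.1 hx.2 e.symm
    · intro hy; exact ⟨y, hy, rfl⟩
  rw [hg]
  funext l
  simp only [Pi.sub_apply, zc, e2_apply, Lap]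
  have d1 : ∀ y : Fin n, ((if w ≤ y ∧ y < w' then 1 else 0 : ℤ) -
      (if w ≤ y - 1 ∧ y - 1 < w' then 1 else 0)) =
      (if y = w then 1 else 0) - (if y = w' then 1 else 0) := by
    intro y
    have e := val_sub1 hn y
    have hy := y.2
    have hw'2 := w'.2
    simp only [Fin.le_def, Fin.lt_def, Fin.ext_iff] at *
    split_ifs at * <;> omega
  have f1 := d1 l
  have f2 := d1 (l + 1)
  rw [add_sub_cancel_right] at f2
  have a1 : l + 1 = w ↔ l = w - 1 := by rw [eq_sub_iff_add_eq]
  have a2 : l + 1 = w' ↔ l = w' - 1 := by rw [eq_sub_iff_add_eq]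
  simp only [a1, a2] at f2
  push_cast
  linarith

/-- standard exponents -/
def Std (u : Fin n → ℕ) : Prop := ∀ w ∈ WW c, ∀ w' ∈ WW c, w < w' → ¬ e2 w (w' - 1) ≤ u

lemma reduce (hn : 3 ≤ n) (hconn : ∀ j, ((cycleG n).induce {x | c x = j}).Connected)
    (u : Fin n → ℕ) : ∃ v, Std c v ∧ Xp K u - Xp K v ∈ JJ (pp c) (qq c) (1 : K) ∧
      zc u - zc v ∈ Submodule.span ℤ (Set.range fun j => bPart n {x | c x = j}) := by
  induction hN : ∑ i, u i * lamb n i using Nat.strong_induction_on generalizing u with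
  | _ N ih =>
    subst hN
    by_cases hu : Std c u
    · exact ⟨u, hu, by simp, by simp⟩
    · unfold Std at hu
      push Not at hu
      obtain ⟨w, hw, w', hw', hlt, hle⟩ := hu
      obtain ⟨r, rfl⟩ : ∃ r, u = r + e2 w (w' - 1) := ⟨_, (tsub_add_cancel_of_le hle).symm⟩
      have hwt : ∀ a b : Fin n, ∑ i, (r + e2 a b) i * lamb n i =
          ∑ i, r i * lamb n i + (lamb n a + lamb n b) := by
        intro a b
        simp only [Pi.add_apply, e2_apply, add_mul, Finset.sum_add_distrib, ite_mul, one_mul,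
          zero_mul, Finset.sum_ite_eq', Finset.sum_ite_eq, Finset.mem_univ, if_true]
      obtain ⟨v, hv, h1, h2⟩ := ih _ (by
        rw [hwt w (w' - 1)]
        exact Nat.add_lt_add_left (lamb_lt hn hlt) _) (r + e2 w' (w - 1)) (hwt _ _)
      refine ⟨v, hv, ?_, ?_⟩
      · have hg := Ideal.mul_mem_left _ (Xp K r) (gen_mem c hw hw' hlt (1 : K))
        have := Ideal.add_mem _ hg h1
        convert this using 1
        rw [Xp_add, Xp_add, map_one]; ring
      · have hg := gen_lattice c hn hconn hw hw' hlt
        have := Submodule.add_mem _ hg h2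
        convert this using 1
        funext i
        simp only [zc, Pi.sub_apply, Pi.add_apply]
        push_cast; ring

lemma std_max (hn : 3 ≤ n) (u v : Fin n → ℕ) (hu : Std c u) (h : Fin k → ℤ)
    (huv : zc u - zc v = Lap (h ∘ c)) (x : Fin n) : h (c x) ≤ h (c ⟨n - 1, by omega⟩) := by
  by_contra hlt
  rw [not_le] at hlt
  set last : Fin n := ⟨n - 1, by omega⟩ with hlast
  set g : Fin n → ℤ := h ∘ c with hg
  obtain ⟨x0, -, hx0⟩ := Finset.exists_max_image Finset.univ g ⟨x, Finset.mem_univ _⟩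
  have hx0' : ∀ y, g y ≤ g x0 := fun y => hx0 y (Finset.mem_univ _)
  have hM : g last < g x0 := lt_of_lt_of_le hlt (hx0' x)
  obtain ⟨w, hw, hwmin⟩ := Finset.exists_min_image (Finset.univ.filter fun y => g y = g x0) id
    ⟨x0, by simp⟩
  simp only [Finset.mem_filter, Finset.mem_univ, true_and, id] at hw hwmin
  have hwl : w < last := by
    have h1 : w ≠ last := by rintro rfl; omega
    rw [Ne, Fin.ext_iff] at h1
    rw [Fin.lt_def]
    have := w.2
    simp only [hlast] at h1 ⊢
    omega
  obtain ⟨w', hw', hw'min⟩ := Finset.exists_min_image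
    (Finset.univ.filter fun y => w < y ∧ g y ≠ g x0) id
    ⟨last, by simp only [Finset.mem_filter, Finset.mem_univ, true_and]; exact ⟨hwl, hM.ne⟩⟩
  simp only [Finset.mem_filter, Finset.mem_univ, true_and, id] at hw' hw'min
  have ew := val_sub1 hn w
  have ew' := val_sub1 hn w'
  have hww := hw'.1
  rw [Fin.lt_def] at hww
  rw [if_neg (by omega)] at ew'
  have h1 : g (w - 1) < g x0 := by
    refine lt_of_le_of_ne (hx0' _) fun e => ?_
    by_cases h0 : w.val = 0
    · rw [if_pos h0] at ew
      have : w - 1 = last := Fin.ext ew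
      rw [this] at e; omega
    · rw [if_neg h0] at ew
      have := hwmin _ e
      rw [Fin.le_def] at this
      omega
  have h2 : g (w' - 1) = g x0 := by
    by_contra e
    have hne : w' - 1 ≠ w := by rintro e'; rw [e'] at e; exact e hw
    rw [Ne, Fin.ext_iff] at hne
    have := hw'min (w' - 1) ⟨by rw [Fin.lt_def]; omega, e⟩
    rw [Fin.le_def] at this
    omega
  have h3 : g w' < g x0 := lt_of_le_of_ne (hx0' _) hw'.2
  have hwW : w ∈ WW c := by
    rw [mem_WW]; intro e
    have : g (w - 1) = g w := by simp only [hg, Function.comp_apply, e]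
    omega
  have hwW' : w' ∈ WW c := by
    rw [mem_WW]; intro e
    have : g (w' - 1) = g w' := by simp only [hg, Function.comp_apply, e]
    omega
  refine hu w hwW w' hwW' hw'.1 ?_
  intro l
  change e2 w (w' - 1) l ≤ u l
  rw [e2_apply]
  have E : (u l : ℤ) - (v l : ℤ) = 2 * g l - g (l - 1) - g (l + 1) := congrFun huv l
  have b1 := hx0' (l + 1)
  have b2 := hx0' (l - 1)
  by_cases a1 : l = w
  · have c1 : g l = g x0 := by rw [a1]; exact hw
    have c2 : g (l - 1) < g x0 := by rw [a1]; exact h1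
    by_cases a2 : l = w' - 1
    · have c3 : g (l + 1) < g x0 := by rw [a2, sub_add_cancel]; exact h3
      rw [if_pos a1, if_pos a2]
      omega
    · rw [if_pos a1, if_neg a2]
      omega
  · by_cases a2 : l = w' - 1
    · have c3 : g (l + 1) < g x0 := by rw [a2, sub_add_cancel]; exact h3
      rw [if_neg a1, if_pos a2]
      have e : g l = g x0 := by rw [a2, h2]
      omega
    · rw [if_neg a1, if_neg a2]; omega

lemma std_unique (hn : 3 ≤ n) (u v : Fin n → ℕ) (hu : Std c u) (hv : Std c v)
    (huv : zc u - zc v ∈ Submodule.span ℤ (Set.range fun j => bPart n {x | c x = j})) : u = v := by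
  obtain ⟨h, e⟩ := (mem_L c hn _).1 huv
  have h1 := std_max c hn u v hu h e
  have h2 := std_max c hn v u hv (-h) (by
    rw [← neg_sub, e]
    funext l
    simp only [Lap, Pi.neg_apply, Function.comp_apply]; ring)
  have hc : ∀ x, h (c x) = h (c ⟨n - 1, by omega⟩) := by
    intro x
    have a1 := h1 x
    have a2 := h2 x
    simp only [Pi.neg_apply] at a2
    omega
  funext l
  have E := congrFun e l
  simp only [Lap, Pi.sub_apply, zc, Function.comp_apply] at E
  rw [hc l, hc (l - 1), hc (l + 1)] at E
  omega

theorem toppling_eq (hn : 3 ≤ n) (hconn : ∀ j, ((cycleG n).induce {x | c x = j}).Connected) :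
    topplingPar n k K (fun j => {x | c x = j}) = JJ (pp c) (qq c) 1 := by
  apply le_antisymm
  · unfold topplingPar latticeIdeal
    rw [Ideal.span_le]
    rintro _ ⟨u, v, huv, rfl⟩
    obtain ⟨u', hu1, hu2, hu3⟩ := reduce (K := K) c hn hconn u
    obtain ⟨v', hv1, hv2, hv3⟩ := reduce (K := K) c hn hconn v
    have huv' : zc u - zc v ∈ Submodule.span ℤ (Set.range fun j => bPart n {x | c x = j}) := huv
    have e : u' = v' := by
      refine std_unique c hn u' v' hu1 hv1 ?_
      have := Submodule.add_mem _ (Submodule.sub_mem _ huv' hu3) hv3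
      convert this using 1
      abel
    subst e
    have := Ideal.sub_mem _ hu2 hv2
    rw [sub_sub_sub_cancel_right] at this
    exact this
  · unfold JJ
    rw [Ideal.span_le]
    rintro _ ⟨s, t, hst, rfl⟩
    refine Ideal.subset_span ⟨e2 (pp c s) (pp c t - 1), e2 (pp c t) (pp c s - 1),
      gen_lattice c hn hconn (pp_mem c s) (pp_mem c t) (pp_lt c hst), ?_⟩
    change _ = Xp K _ - Xp K _
    rw [Xp_e2, Xp_e2, map_one, one_mul]; rfl

theorem tor_main (hn : 3 ≤ n) (hk : 1 ≤ k) (hc : Function.Surjective c)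
    (hconn : ∀ j, ((cycleG n).induce {x | c x = j}).Connected) (ε : K) (hε : ε = 0 ∨ ε = 1)
    (i : ℕ) :
    Nonempty ((TorKN n K i (JJ (pp c) (qq c) ε)) ≃ₗ[MvPolynomial (Fin n) K]
      (Fin (if i = 0 then 1 else i * Nat.choose k (i + 1)) →
          MvPolynomial (Fin n) K ⧸ (Ideal.span (Set.range X) :
            Ideal (MvPolynomial (Fin n) K)))) := by
  rw [← WW_card c hn hk hc hconn i]
  exact tor_JJ (pp c) (qq c) ε (lamb n) hε (pp_inj c) (qq_inj c) (pp_ne_qq c hn)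
    (fun s t hst => lamb_lt hn (pp_lt c hst)) i

end Ideals

/-- For a parcycle `(C_n, Π)` with `k` parts and sink `V_k`, the Betti
numbers of `R_n/I_Π` and `R_n/M_Π` agree; `β_0 = 1` and `β_i = i·C(k, i+1)` for `i ≥ 1`
(a Betti number `β` is expressed by `Tor_i ≅ (R_n/𝔪)^β` as `R_n`-modules, `𝔪` the
irrelevant maximal ideal). -/
theorem statement_10 (K : Type*) [Field K] (n k : ℕ) [NeZero n] (hn : 3 ≤ n) (hk : 1 ≤ k)
    (V : Fin k → Set (Fin n))
    (hcover : ∀ x : Fin n, ∃ j, x ∈ V j)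
    (hdisj : ∀ j₁ j₂ : Fin k, j₁ ≠ j₂ → Disjoint (V j₁) (V j₂))
    (hconn : ∀ j, ((cycleG n).induce (V j)).Connected)
    (hsink : (⟨n - 1, by omega⟩ : Fin n) ∈ V ⟨k - 1, by omega⟩) :
    (∀ i : ℕ,
      Nonempty ((TorKN n K i (topplingPar n k K V)) ≃ₗ[MvPolynomial (Fin n) K]
        (TorKN n K i (gparkIdeal n k K V ⟨k - 1, by omega⟩)))) ∧
    (∀ i : ℕ,
      Nonempty ((TorKN n K i (topplingPar n k K V)) ≃ₗ[MvPolynomial (Fin n) K]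
        (Fin (if i = 0 then 1 else i * Nat.choose k (i + 1)) →
          MvPolynomial (Fin n) K ⧸ (Ideal.span (Set.range X) :
            Ideal (MvPolynomial (Fin n) K))))) ∧
    (∀ i : ℕ,
      Nonempty ((TorKN n K i (gparkIdeal n k K V ⟨k - 1, by omega⟩))
        ≃ₗ[MvPolynomial (Fin n) K]
        (Fin (if i = 0 then 1 else i * Nat.choose k (i + 1)) →
          MvPolynomial (Fin n) K ⧸ (Ideal.span (Set.range X) :
            Ideal (MvPolynomial (Fin n) K))))) := by
  choose c hcov using hcover
  have hV : V = fun j => {x | c x = j} := by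
    funext j
    ext x
    constructor
    · intro hx
      by_contra hne
      exact Set.disjoint_left.1 (hdisj (c x) j hne) (hcov x) hx
    · intro hx
      have hx' : c x = j := hx
      rw [← hx']
      exact hcov x
  subst hV
  have hc : Function.Surjective c := by
    intro j
    obtain ⟨x⟩ := (hconn j).nonempty
    exact ⟨x.1, x.2⟩
  rw [toppling_eq c hn hconn, gpark_eq c hn hconn _ hsink]
  have A := fun i => tor_main c hn hk hc hconn (1 : K) (Or.inr rfl) i
  have B := fun i => tor_main c hn hk hc hconn (0 : K) (Or.inl rfl) i
  refine ⟨fun i => ?_, A, B⟩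
  obtain ⟨a⟩ := A i
  obtain ⟨b⟩ := B i
  exact ⟨a.trans b.symm⟩
end
end

section
/- Let A be a 2×m matrix each of whose entries is of the form c·x_i for some nonzero scalar c ∈ K and some variable x_i of R_p, such that within each row of A the entries involve pairwise distinct variables. Suppose the variable x_a occurs in exactly one entry of A, namely k_1 x_a in position (1,α), and the variable x_b occurs in exactly one entry of A, namely k_2 x_b in position (2,β), with α < β. Assume further that for all column indices γ and δ with γ < α and β < δ, the variable occurring in position (2,γ) is different from the variable occurring in position (1,δ). Let M ⊆ R_p be the ideal generated by all anti-diagonal products A_{2,i}·A_{1,j} with i < j. Then k_1 x_a − k_2 x_b is a nonzerodivisor on R_p/M; that is, for every f ∈ R_p, if (k_1 x_a − k_2 x_b)·f ∈ M then f ∈ M. -/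
noncomputable section

open MvPolynomial

theorem chain_aux {K : Type*} [Field K] {p : ℕ} (a b : Fin p) (hab : a ≠ b) (k1 k2 : K)
    (hk1 : k1 ≠ 0) (D : (Fin p →₀ ℕ) → Prop) (f : MvPolynomial (Fin p) K)
    (hf : ∀ u, ¬ D u → coeff u ((C k1 * X a - C k2 * X b) * f) = 0)
    (hD : ∀ w, D (w + Finsupp.single a 1 + Finsupp.single a 1) →
      D (w + Finsupp.single b 1 + Finsupp.single a 1)) :
    ∀ n : ℕ, ∀ u : Fin p →₀ ℕ, u b = n → ¬ D (u + Finsupp.single a 1) → coeff u f = 0 := by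
  intro n
  induction n with
  | zero =>
    intro u hu hDu
    have h := hf _ hDu
    rw [sub_mul, coeff_sub, mul_assoc, mul_assoc, coeff_C_mul, coeff_C_mul, coeff_X_mul',
      coeff_X_mul'] at h
    simpa [hu, hab, hk1, Finsupp.single_apply] using h
  | succ n ih =>
    intro u hu hDu
    obtain ⟨w, rfl⟩ : ∃ w, u = w + Finsupp.single b 1 := by
      refine ⟨u - Finsupp.single b 1, ?_⟩
      rw [tsub_add_cancel_of_le]
      rw [Finsupp.single_le_iff]
      omega
    have h := hf _ hDu
    have h2 := ih (w + Finsupp.single a 1) (by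
      simp [Finsupp.single_apply, hab] at hu ⊢; exact hu) (fun h => hDu (hD w h))
    have e : w + Finsupp.single b 1 + Finsupp.single a 1
        = Finsupp.single b 1 + (w + Finsupp.single a 1) := by abel
    rw [sub_mul, coeff_sub, mul_assoc, mul_assoc, coeff_C_mul, coeff_C_mul,
      add_comm _ (Finsupp.single a 1), coeff_X_mul, add_comm (Finsupp.single a 1), e,
      coeff_X_mul, h2] at h
    simpa [hk1] using h

theorem span_aux {K : Type*} [Field K] {p m : ℕ} 
    (cf : Fin 2 → Fin m → K) (v : Fin 2 → Fin m → Fin p)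
    (hcf : ∀ r c, cf r c ≠ 0) :
    Ideal.span { g : MvPolynomial (Fin p) K | ∃ i j : Fin m, i < j ∧
          g = (C (cf 1 i) * X (v 1 i)) * (C (cf 0 j) * X (v 0 j)) } =
    Ideal.span ((fun s => monomial s (1 : K)) '' { s : Fin p →₀ ℕ | ∃ i j : Fin m, i < j ∧
          s = Finsupp.single (v 1 i) 1 + Finsupp.single (v 0 j) 1 }) := by
  have key : ∀ i j, (C (cf 1 i) * X (v 1 i)) * (C (cf 0 j) * X (v 0 j)) =
      (C (cf 1 i * cf 0 j) : MvPolynomial (Fin p) K) *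
        monomial (Finsupp.single (v 1 i) 1 + Finsupp.single (v 0 j) 1) 1 := by
    intro i j
    rw [C_mul, ← mul_one (1 : K), ← monomial_mul]
    simp only [X]
    ring
  apply le_antisymm
  · rw [Ideal.span_le]
    rintro g ⟨i, j, hij, rfl⟩
    rw [key]
    exact Ideal.mul_mem_left _ _ (Ideal.subset_span ⟨_, ⟨i, j, hij, rfl⟩, rfl⟩)
  · rw [Ideal.span_le]
    rintro g ⟨_, ⟨i, j, hij, rfl⟩, rfl⟩
    have h : (monomial (Finsupp.single (v 1 i) 1 + Finsupp.single (v 0 j) 1) (1:K)) =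
        C ((cf 1 i * cf 0 j)⁻¹) * ((C (cf 1 i) * X (v 1 i)) * (C (cf 0 j) * X (v 0 j))) := by
      rw [key, ← mul_assoc, ← C_mul, inv_mul_cancel₀ (mul_ne_zero (hcf _ _) (hcf _ _)), C_1,
        one_mul]
    simp only [h]
    exact Ideal.mul_mem_left _ _ (Ideal.subset_span ⟨i, j, hij, rfl⟩)

/-- Let `A` be a `2 × m` matrix whose `(r,c)` entry is `cf r c • x_{v r c}`
with all `cf r c ≠ 0`, the variables in each row pairwise distinct, `x_a` occurring only in
position `(0, α)`, `x_b` occurring only in position `(1, β)`, `α < β`, and such that for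
`γ < α < β < δ` the variables in positions `(1, γ)` and `(0, δ)` differ.  If `M` is the
ideal generated by the anti-diagonal products `A_{1,i}·A_{0,j}` (`i < j`), then
`cf 0 α • x_a - cf 1 β • x_b` is a nonzerodivisor on `R_p/M`. -/
theorem statement_12 (K : Type*) [Field K] (p m : ℕ) (hp : 1 ≤ p) (hm : 2 ≤ m)
    (cf : Fin 2 → Fin m → K) (v : Fin 2 → Fin m → Fin p)
    (hcf : ∀ r c, cf r c ≠ 0)
    (hrow : ∀ r : Fin 2, Function.Injective (v r))
    (a b : Fin p) (α β : Fin m)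
    (ha : v 0 α = a) (haonce : ∀ r c, v r c = a → r = 0 ∧ c = α)
    (hb : v 1 β = b) (hbonce : ∀ r c, v r c = b → r = 1 ∧ c = β)
    (hαβ : α < β)
    (hsep : ∀ γ δ : Fin m, γ < α → β < δ → v 1 γ ≠ v 0 δ) :
    ∀ f : MvPolynomial (Fin p) K,
      (C (cf 0 α) * X a - C (cf 1 β) * X b) * f ∈
        Ideal.span { g : MvPolynomial (Fin p) K | ∃ i j : Fin m, i < j ∧
          g = (C (cf 1 i) * X (v 1 i)) * (C (cf 0 j) * X (v 0 j)) } →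
      f ∈ Ideal.span { g : MvPolynomial (Fin p) K | ∃ i j : Fin m, i < j ∧
          g = (C (cf 1 i) * X (v 1 i)) * (C (cf 0 j) * X (v 0 j)) } := by
  intro f hf
  rw [span_aux cf v hcf] at hf ⊢
  rw [mem_ideal_span_monomial_image] at hf ⊢
  set D : (Fin p →₀ ℕ) → Prop := fun u => ∃ si ∈ { s : Fin p →₀ ℕ | ∃ i j : Fin m, i < j ∧
          s = Finsupp.single (v 1 i) 1 + Finsupp.single (v 0 j) 1 }, si ≤ u with hDdef
  have hab : a ≠ b := by
    intro h
    have := (hbonce 0 α (ha.trans h)).1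
    exact absurd this (by decide)
  have hf1 : ∀ u, ¬ D u → coeff u ((C (cf 0 α) * X a - C (cf 1 β) * X b) * f) = 0 := by
    intro u hu
    by_contra hc
    exact hu (hf u (mem_support_iff.2 hc))
  have hf2 : ∀ u, ¬ D u → coeff u ((C (cf 1 β) * X b - C (cf 0 α) * X a) * f) = 0 := by
    intro u hu
    rw [← neg_sub, neg_mul, coeff_neg, hf1 u hu, neg_zero]
  have n1 : ∀ i, v 1 i ≠ a := fun i h => absurd (haonce 1 i h).1 (by decide)
  have n0 : ∀ i, v 0 i ≠ b := fun i h => absurd (hbonce 0 i h).1 (by decide)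
  have hDa : ∀ w, D (w + Finsupp.single a 1 + Finsupp.single a 1) →
      D (w + Finsupp.single b 1 + Finsupp.single a 1) := by
    rintro w ⟨_, ⟨i, j, hij, rfl⟩, hle⟩
    refine ⟨_, ⟨i, j, hij, rfl⟩, fun c => ?_⟩
    have h := hle c
    have := n1 i
    simp only [Finsupp.add_apply, Finsupp.single_apply] at h ⊢
    grind
  have hDb : ∀ w, D (w + Finsupp.single b 1 + Finsupp.single b 1) →
      D (w + Finsupp.single a 1 + Finsupp.single b 1) := by
    rintro w ⟨_, ⟨i, j, hij, rfl⟩, hle⟩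
    refine ⟨_, ⟨i, j, hij, rfl⟩, fun c => ?_⟩
    have h := hle c
    have := n0 j
    simp only [Finsupp.add_apply, Finsupp.single_apply] at h ⊢
    grind
  intro u hu
  change D u
  by_contra hDu
  have hu0 := mem_support_iff.1 hu
  have ga : D (u + Finsupp.single a 1) := by
    by_contra h
    exact hu0 (chain_aux a b hab _ _ (hcf 0 α) D f hf1 hDa _ u rfl h)
  have gb : D (u + Finsupp.single b 1) := by
    by_contra h
    exact hu0 (chain_aux b a hab.symm _ _ (hcf 1 β) D f hf2 hDb _ u rfl h)
  obtain ⟨_, ⟨i, j, hij, rfl⟩, hle⟩ := ga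
  obtain ⟨_, ⟨i', j', hij', rfl⟩, hle'⟩ := gb
  have hj : v 0 j = a := by
    by_contra hne
    refine hDu ⟨_, ⟨i, j, hij, rfl⟩, fun c => ?_⟩
    have h := hle c
    have := n1 i
    simp only [Finsupp.add_apply, Finsupp.single_apply] at h ⊢
    grind
  have hi' : v 1 i' = b := by
    by_contra hne
    refine hDu ⟨_, ⟨i', j', hij', rfl⟩, fun c => ?_⟩
    have h := hle' c
    have := n0 j'
    simp only [Finsupp.add_apply, Finsupp.single_apply] at h ⊢
    grind
  have ej := (haonce 0 j hj).2
  have ei := (hbonce 1 i' hi').2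
  subst ej ei
  have hs := hsep i j' hij hij'
  refine hDu ⟨_, ⟨i, j', hij.trans (hαβ.trans hij'), rfl⟩, fun c => ?_⟩
  have h1 := hle c
  have h2 := hle' c
  have := n1 i
  have := n0 j'
  simp only [Finsupp.add_apply, Finsupp.single_apply] at h1 h2 ⊢
  grind
end
end

section
/- The sequence 𝒜 = (x_{v_0} − x_{i_2}, x_{v_1} − x_{i_3}, …, x_{v_{k−2}} − x_{i_k}, x_{s_1} − x_{i_{k−1}}, x_{s_2} − x_{i_1}) is a regular sequence on S/M_{Π,M} and also a regular sequence on S/I_{Π,M}. -/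
noncomputable section

open MvPolynomial

/-- Variable type of `S = K[x_1,…,x_{n+1}, x_{v_0},…,x_{v_{k-2}}, x_{s_1}, x_{s_2}]`,
a polynomial ring in `n + k + 2` variables. -/
abbrev SVar (n k : ℕ) := Fin (n + 1) ⊕ (Fin (k - 1) ⊕ Fin 2)

/-- The variable `x_j` of `S` (`1 ≤ j ≤ n + 1`). -/
def xvS (n k : ℕ) (j : ℕ) : SVar n k :=
  Sum.inl ⟨(j - 1) % (n + 1), Nat.mod_lt _ (Nat.succ_pos n)⟩

/-- The variable `x_{v_j}` of `S` (`0 ≤ j ≤ k - 2`). -/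
def vvS (n k : ℕ) (j : ℕ) : SVar n k :=
  if h : j < k - 1 then Sum.inr (Sum.inl ⟨j, h⟩) else Sum.inl ⟨0, Nat.succ_pos n⟩

/-- The variable `x_{s_1}` of `S`. -/
def s1S (n k : ℕ) : SVar n k := Sum.inr (Sum.inr 0)

/-- The variable `x_{s_2}` of `S`. -/
def s2S (n k : ℕ) : SVar n k := Sum.inr (Sum.inr 1)

/-- `as` is a regular sequence on the module `R/N`:  each `as_j` is a nonzerodivisor on
`R/(N + (as_0, …, as_{j-1}))` and `R/(N + (as))` is nonzero. -/
def IsRegSeqOnQuot (R : Type*) [CommRing R] (as : List R) (N : Ideal R) : Prop :=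
  (∀ (j : ℕ) (hj : j < as.length) (f : R),
      as.get ⟨j, hj⟩ * f ∈ N ⊔ Ideal.span {a | a ∈ as.take j} →
      f ∈ N ⊔ Ideal.span {a | a ∈ as.take j}) ∧
  N ⊔ Ideal.span {a | a ∈ as} ≠ ⊤

theorem aux_sub_step {R F : Type*} [CommRing R] [FunLike F R R] [RingHomClass F R R] (φ : F) (N Q : Ideal R) (a : R)
    (h1 : ∀ q ∈ Q, φ q = 0) (h2 : ∀ f, φ f - f ∈ Q) (h3 : φ a = a)
    (h4 : ∀ f, a * f ∈ Ideal.map φ N → f ∈ Ideal.map φ N) (f : R)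
    (hf : a * f ∈ N ⊔ Q) : f ∈ N ⊔ Q := by
  have hle : Ideal.map φ N ≤ N ⊔ Q := by
    rw [Ideal.map_le_iff_le_comap]
    intro m hm
    rw [Ideal.mem_comap]
    have := Ideal.add_mem (N ⊔ Q) (Ideal.mem_sup_left hm) (Ideal.mem_sup_right (h2 m))
    simpa using this
  have h5 : φ (a * f) ∈ Ideal.map φ N := by
    obtain ⟨m, hm, q, hq, hmq⟩ := Submodule.mem_sup.1 hf
    rw [← hmq, map_add, h1 q hq, add_zero]
    exact Ideal.mem_map_of_mem φ hm
  rw [map_mul, h3] at h5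
  have h6 := hle (h4 _ h5)
  have := Ideal.sub_mem (N ⊔ Q) h6 (Ideal.mem_sup_right (h2 f))
  simpa using this

theorem aux_chain {V K : Type*} [Field K] (S : Set (V →₀ ℕ)) (x y : V) (hxy : x ≠ y)
    (f : MvPolynomial V K)
    (hf : ∀ u, (∀ s ∈ S, ¬ s ≤ u) → MvPolynomial.coeff u ((X y - X x) * f) = 0) :
    ∀ (N : ℕ) (u : V →₀ ℕ), u y = N → MvPolynomial.coeff u f ≠ 0 → (∀ s ∈ S, ¬ s ≤ u) →
      ∃ (l : ℕ) (w : V →₀ ℕ), u + l • Finsupp.single x 1 = w + l • Finsupp.single y 1 ∧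
        (∀ s ∈ S, ¬ s ≤ w) ∧ ∃ s ∈ S, s ≤ w + Finsupp.single x 1 := by
  classical
  intro N
  induction N with
  | zero =>
    intro u hu hc hM
    by_cases h : ∃ s ∈ S, s ≤ u + Finsupp.single x 1
    · exact ⟨0, u, by simp, hM, h⟩
    · push Not at h
      have := hf _ h
      rw [sub_mul, MvPolynomial.coeff_sub, MvPolynomial.coeff_X_mul', mul_comm,
        mul_comm, add_comm, MvPolynomial.coeff_X_mul] at this
      rw [if_neg] at this
      · simp at this; exact absurd this hc
      · simp [hu, hxy]
  | succ N ih =>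
    intro u hu hc hM
    by_cases h : ∃ s ∈ S, s ≤ u + Finsupp.single x 1
    · exact ⟨0, u, by simp, hM, h⟩
    · push Not at h
      have hle : Finsupp.single y 1 ≤ u := by
        rw [Finsupp.single_le_iff]; omega
      obtain ⟨v, rfl⟩ := exists_add_of_le hle
      have := hf _ h
      rw [sub_mul, MvPolynomial.coeff_sub, add_comm _ (Finsupp.single x 1),
        MvPolynomial.coeff_X_mul, add_left_comm, MvPolynomial.coeff_X_mul, sub_eq_zero] at this
      have h1 : ∀ s ∈ S, ¬ s ≤ Finsupp.single x 1 + v := by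
        intro s hs hsv
        apply h s hs
        refine hsv.trans ?_
        rw [add_assoc, add_comm v]
        exact le_add_self
      obtain ⟨l, w, e, hw, hw'⟩ := ih (Finsupp.single x 1 + v)
        (by simp [hxy] at hu ⊢; omega) (by rw [this]; exact hc) h1
      refine ⟨l + 1, w, ?_, hw, hw'⟩
      rw [add_smul, add_smul, ← add_assoc w, ← e]
      simp only [one_smul]
      abel

theorem aux_mono_nzd {V K : Type*} [Field K] (S : Set (V →₀ ℕ)) (x y : V) (hxy : x ≠ y)
    (H : ∀ u : V →₀ ℕ, (∃ s ∈ S, s ≤ u + Finsupp.single x 1) →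
      (∃ s ∈ S, s ≤ u + Finsupp.single y 1) → ∃ s ∈ S, s ≤ u)
    (f : MvPolynomial V K)
    (hf : (X y - X x) * f ∈ Ideal.span ((fun s => monomial s (1 : K)) '' S)) :
    f ∈ Ideal.span ((fun s => monomial s (1 : K)) '' S) := by
  classical
  rw [MvPolynomial.mem_ideal_span_monomial_image] at hf ⊢
  intro u hu
  by_contra hM
  push Not at hM
  rw [MvPolynomial.mem_support_iff] at hu
  have hf' : ∀ u, (∀ s ∈ S, ¬ s ≤ u) → MvPolynomial.coeff u ((X y - X x) * f) = 0 := by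
    intro u hu
    by_contra hne
    obtain ⟨s, hs, hsu⟩ := hf u (by rwa [MvPolynomial.mem_support_iff])
    exact hu s hs hsu
  have hf'' : ∀ u, (∀ s ∈ S, ¬ s ≤ u) → MvPolynomial.coeff u ((X x - X y) * f) = 0 := by
    intro u hu
    have := hf' u hu
    rw [← neg_sub, neg_mul, MvPolynomial.coeff_neg, this, neg_zero]
  obtain ⟨l, w, e, hw, hwx⟩ := aux_chain S x y hxy f hf' _ u rfl hu hM
  obtain ⟨l', w', e', hw', hwy⟩ := aux_chain S y x hxy.symm f hf'' _ u rfl hu hM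
  have up : ∀ {a b : V →₀ ℕ}, a ≤ b → (∃ s ∈ S, s ≤ a) → ∃ s ∈ S, s ≤ b :=
    fun hab ⟨s, hs, hsa⟩ => ⟨s, hs, hsa.trans hab⟩
  have k1 : ∀ p : ℕ, ¬ ∃ s ∈ S, s ≤ w + p • Finsupp.single y 1 := by
    intro p
    induction p with
    | zero => simpa using hw
    | succ p ih =>
      intro h
      apply ih
      apply H
      · refine up ?_ hwx
        rw [add_right_comm]; exact le_self_add
      · rw [add_assoc]
        simpa [add_smul] using h
  have ez : w + (l + l') • Finsupp.single y 1 = w' + (l + l') • Finsupp.single x 1 := by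
    rw [add_smul, ← add_assoc, ← e, add_smul, add_comm (l • Finsupp.single x 1) (l' • _),
      ← add_assoc, ← e']
    abel
  apply k1 (l + l')
  apply H
  · refine up ?_ hwx
    rw [add_right_comm]; exact le_self_add
  · rw [ez]
    refine up ?_ hwy
    rw [add_right_comm]; exact le_self_add

/-- nonzerodivisor lemma for the anti-diagonal ideals -/
theorem aux_M_nzd {V K C : Type*} [Field K] [LinearOrder C] (t b : C → V) (x y : V) (hxy : x ≠ y)
    (H : ∀ c1 c2 c3 c4, c1 < c2 → c3 < c4 → (b c1 = y ∨ t c2 = y) → (b c3 = x ∨ t c4 = x) →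
      (t c2 = y ∧ b c3 = x ∧ c1 < c4 ∧ b c1 ≠ t c4))
    (f : MvPolynomial V K)
    (hf : (X y - X x) * f ∈ Ideal.span { f : MvPolynomial V K | ∃ c₁ c₂ : C, c₁ < c₂ ∧ f = X (b c₁) * X (t c₂) }) :
    f ∈ Ideal.span { f : MvPolynomial V K | ∃ c₁ c₂ : C, c₁ < c₂ ∧ f = X (b c₁) * X (t c₂) } := by
  classical
  have e : { f : MvPolynomial V K | ∃ c₁ c₂ : C, c₁ < c₂ ∧ f = X (b c₁) * X (t c₂) } =
      (fun s => monomial s (1 : K)) '' {s | ∃ c₁ c₂ : C, c₁ < c₂ ∧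
        s = Finsupp.single (b c₁) 1 + Finsupp.single (t c₂) 1} := by
    ext g
    constructor
    · rintro ⟨c1, c2, h, rfl⟩
      exact ⟨_, ⟨c1, c2, h, rfl⟩, by simp [X, monomial_mul]⟩
    · rintro ⟨_, ⟨c1, c2, h, rfl⟩, rfl⟩
      exact ⟨c1, c2, h, by simp [X, monomial_mul]⟩
  rw [e] at hf ⊢
  refine aux_mono_nzd _ x y hxy ?_ f hf
  rintro u ⟨_, ⟨c3, c4, h34, rfl⟩, hx⟩ ⟨_, ⟨c1, c2, h12, rfl⟩, hy⟩
  have gen : ∀ (p q z : V), Finsupp.single p 1 + Finsupp.single q 1 ≤ u + Finsupp.single z 1 →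
      p ≠ z → q ≠ z → Finsupp.single p 1 + Finsupp.single q 1 ≤ u := by
    intro p q z h hp hq v
    have := h v
    simp only [Finsupp.add_apply, Finsupp.single_apply] at this ⊢
    split_ifs at this ⊢ <;> simp_all
  by_cases hyy : b c1 = y ∨ t c2 = y
  · by_cases hxx : b c3 = x ∨ t c4 = x
    · obtain ⟨h1, h2, h3, h4⟩ := H c1 c2 c3 c4 h12 h34 hyy hxx
      refine ⟨_, ⟨c1, c4, h3, rfl⟩, ?_⟩
      rw [h1, add_le_add_iff_right, Finsupp.single_le_iff] at hy
      rw [h2, add_comm, add_le_add_iff_right, Finsupp.single_le_iff] at hx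
      intro v
      simp only [Finsupp.add_apply, Finsupp.single_apply]
      split_ifs with ha hb hb
      · exact absurd (ha.trans hb.symm) h4
      · subst ha; simpa using hy
      · subst hb; simpa using hx
      · simp
    · push Not at hxx
      exact ⟨_, ⟨c3, c4, h34, rfl⟩, gen _ _ _ hx hxx.1 hxx.2⟩
  · push Not at hyy
    exact ⟨_, ⟨c1, c2, h12, rfl⟩, gen _ _ _ hy hyy.1 hyy.2⟩

/-- the step relation of the columns -/
def auxStep {V C : Type*} (t b : C → V) (u w : V) : Prop := ∃ c, b c = u ∧ t c = w

theorem aux_pos_le {V C : Type*} (t b : C → V) (pos : V → ℕ)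
    (hpos : ∀ c, pos (t c) = pos (b c) + 1) {u w : V}
    (h : Relation.ReflTransGen (auxStep t b) u w) : pos u ≤ pos w := by
  induction h with
  | refl => exact le_rfl
  | tail _ h ih => obtain ⟨c, rfl, rfl⟩ := h; have := hpos c; omega

theorem aux_comparable {V C : Type*} (t b : C → V) (ht : Function.Injective t)
    (hb : Function.Injective b) {u w : V} (h : Relation.EqvGen (auxStep t b) u w) :
    Relation.ReflTransGen (auxStep t b) u w ∨ Relation.ReflTransGen (auxStep t b) w u := by
  have hr : Relator.RightUnique (auxStep t b) := by
    rintro _ _ _ ⟨c, rfl, rfl⟩ ⟨c', h, rfl⟩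
    rw [hb h]
  have hl : Relator.RightUnique (Function.swap (auxStep t b)) := by
    rintro _ _ _ ⟨c, rfl, rfl⟩ ⟨c', rfl, h⟩
    rw [ht h]
  induction h with
  | rel _ _ h => exact Or.inl (Relation.ReflTransGen.single h)
  | refl => exact Or.inl .refl
  | symm _ _ _ ih => exact ih.symm
  | trans a b c _ _ ih1 ih2 =>
    rcases ih1 with h1 | h1 <;> rcases ih2 with h2 | h2
    · exact Or.inl (h1.trans h2)
    · rw [← Relation.reflTransGen_swap] at h1 h2
      have := Relation.ReflTransGen.total_of_right_unique hl h1 h2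
      rcases this with h | h
      · exact Or.inr (Relation.reflTransGen_swap.1 h)
      · exact Or.inl (Relation.reflTransGen_swap.1 h)
    · exact Relation.ReflTransGen.total_of_right_unique hr h1 h2
    · exact Or.inr (h2.trans h1)

theorem aux_move {V C Q B : Type*} [CommMonoid Q] (t b : C → V) (pos : V → ℕ)
    (blk : V → B) (hpos : ∀ c, pos (t c) = pos (b c) + 1) (hblk : ∀ c, blk (t c) = blk (b c))
    (hlt : ∀ v w, blk v = blk w → pos v < pos w → (∃ c, b c = v) ∧ ∃ c, t c = w)
    (heq : ∀ v w, blk v = blk w → pos v = pos w → v = w)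
    (z : V → Q) (hz : ∀ c1 c2, z (t c1) * z (b c2) = z (t c2) * z (b c1)) :
    ∀ (N : ℕ) (Z : Multiset (V × V)),
      (Z.map fun e => (pos e.1 - pos e.2) + (pos e.2 - pos e.1)).sum = N →
      (∀ e ∈ Z, blk e.1 = blk e.2) →
      (Z.map fun e => pos e.1).sum = (Z.map fun e => pos e.2).sum →
      (Z.map fun e => z e.1).prod = (Z.map fun e => z e.2).prod := by
  intro N
  induction N using Nat.strong_induction_on with
  | _ N ih =>
    intro Z hN hZ hs
    by_cases h0 : ∀ e ∈ Z, pos e.1 = pos e.2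
    · congr 1
      apply Multiset.map_congr rfl
      intro e he
      rw [heq _ _ (hZ e he) (h0 e he)]
    · have ex1 : ∃ e ∈ Z, pos e.1 < pos e.2 := by
        by_contra hc
        push Not at hc
        apply h0
        by_contra h0'
        push Not at h0'
        obtain ⟨e, he, hne⟩ := h0'
        have : (Z.map fun e => pos e.2).sum < (Z.map fun e => pos e.1).sum :=
          Multiset.sum_lt_sum hc ⟨e, he, lt_of_le_of_ne (hc e he) hne.symm⟩
        omega
      have ex2 : ∃ e ∈ Z, pos e.2 < pos e.1 := by
        by_contra hc
        push Not at hc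
        obtain ⟨e, he, hne⟩ := ex1
        have : (Z.map fun e => pos e.1).sum < (Z.map fun e => pos e.2).sum :=
          Multiset.sum_lt_sum hc ⟨e, he, hne⟩
        omega
      obtain ⟨⟨p1, q1⟩, he1, h1⟩ := ex1
      obtain ⟨⟨p2, q2⟩, he2, h2⟩ := ex2
      obtain ⟨Z1, rfl⟩ := Multiset.exists_cons_of_mem he1
      have he2' : (p2, q2) ∈ Z1 := by
        rcases Multiset.mem_cons.1 he2 with h | h
        · simp only [Prod.mk.injEq] at h
          obtain ⟨rfl, rfl⟩ := h
          simp only at h1 h2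
          omega
        · exact h
      obtain ⟨Z2, rfl⟩ := Multiset.exists_cons_of_mem he2'
      have hb1 := hZ _ he1
      have hb2 := hZ _ he2
      simp only at h1 h2 hb1 hb2
      obtain ⟨⟨c, rfl⟩, -⟩ := hlt _ _ hb1 h1
      obtain ⟨-, ⟨c', rfl⟩⟩ := hlt _ _ hb2.symm h2
      have key := ih _ ?_ ((t c, q1) ::ₘ (b c', q2) ::ₘ Z2) rfl ?_ ?_
      · simp only [Multiset.map_cons, Multiset.prod_cons] at key ⊢
        rw [← key, ← mul_assoc, ← mul_assoc, hz c c', mul_comm (z (b c))]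
      · simp only [Multiset.map_cons, Multiset.sum_cons] at hN ⊢
        have := hpos c
        have := hpos c'
        omega
      · intro e he
        simp only [Multiset.mem_cons] at he
        rcases he with rfl | rfl | he
        · exact (hblk c).trans hb1
        · exact (hblk c').symm.trans hb2
        · exact hZ _ (by simp [he])
      · simp only [Multiset.map_cons, Multiset.sum_cons] at hs ⊢
        have := hpos c
        have := hpos c'
        omega

theorem aux_pair {V B : Type*} (blk : V → B) (U : Multiset V) :
    ∀ W : Multiset V, U.map blk = W.map blk →
      ∃ Z : Multiset (V × V), Z.map Prod.fst = U ∧ Z.map Prod.snd = W ∧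
        ∀ e ∈ Z, blk e.1 = blk e.2 := by
  induction U using Multiset.induction_on with
  | empty =>
    intro W h
    refine ⟨0, rfl, ?_, by simp⟩
    have : W.map blk = 0 := by simpa using h.symm
    rw [Multiset.map_eq_zero] at this
    simp [this]
  | cons a U ih =>
    intro W h
    have ha : blk a ∈ W.map blk := by rw [← h]; simp
    obtain ⟨w, hw, hwa⟩ := Multiset.mem_map.1 ha
    obtain ⟨W', rfl⟩ := Multiset.exists_cons_of_mem hw
    simp only [Multiset.map_cons, hwa, Multiset.cons_inj_right] at h
    obtain ⟨Z, h1, h2, h3⟩ := ih W' h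
    refine ⟨(a, w) ::ₘ Z, by simp [h1], by simp [h2], ?_⟩
    intro e he
    rcases Multiset.mem_cons.1 he with rfl | he
    · exact hwa.symm
    · exact h3 e he

theorem aux_monomial {V K : Type*} [Field K] (u : V →₀ ℕ) :
    (monomial u (1 : K)) = ((Finsupp.toMultiset u).map X).prod := by
  rw [Finsupp.toMultiset_map, Finsupp.prod_toMultiset] 
  rw [MvPolynomial.monomial_eq]
  rw [Finsupp.prod_mapDomain_index (by simp) (by intros; rw [pow_add])]
  simp

/-- nonzerodivisor lemma for the ideals of minors -/
theorem aux_I_nzd {V K C : Type*} [Field K] [LinearOrder C] (t b : C → V) (pos : V → ℕ)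
    (hpos : ∀ c, pos (t c) = pos (b c) + 1) (hinj : ∀ c c', pos (b c) = pos (b c') → c = c')
    (x y : V) (hxy : x ≠ y) (hp : pos x = pos y) (f : MvPolynomial V K)
    (hf : (X y - X x) * f ∈ Ideal.span { f : MvPolynomial V K | ∃ c₁ c₂ : C, c₁ < c₂ ∧
        f = X (t c₁) * X (b c₂) - X (t c₂) * X (b c₁) }) :
    f ∈ Ideal.span { f : MvPolynomial V K | ∃ c₁ c₂ : C, c₁ < c₂ ∧
        f = X (t c₁) * X (b c₂) - X (t c₂) * X (b c₁) } := by
  classical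
  set I := Ideal.span { f : MvPolynomial V K | ∃ c₁ c₂ : C, c₁ < c₂ ∧
        f = X (t c₁) * X (b c₂) - X (t c₂) * X (b c₁) } with hI
  have hbi : Function.Injective b := fun c c' h => hinj c c' (by rw [h])
  have hti : Function.Injective t := fun c c' h => hinj c c' (by
    have h1 := hpos c
    have h2 := hpos c'
    rw [h] at h1
    omega)
  let B := Quot (auxStep t b)
  let blk : V → B := Quot.mk _
  have hcmp : ∀ v w, blk v = blk w → Relation.ReflTransGen (auxStep t b) v w ∨
      Relation.ReflTransGen (auxStep t b) w v := fun v w h =>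
    aux_comparable t b hti hbi (Quot.eqvGen_exact h)
  have hlt : ∀ v w, blk v = blk w → pos v < pos w → (∃ c, b c = v) ∧ ∃ c, t c = w := by
    intro v w h hvw
    rcases hcmp v w h with h | h
    · constructor
      · rcases h.cases_head with rfl | ⟨_, ⟨c, hc, _⟩, _⟩
        · omega
        · exact ⟨c, hc⟩
      · rcases h.cases_tail with rfl | ⟨_, _, ⟨c, _, hc⟩⟩
        · omega
        · exact ⟨c, hc⟩
    · have := aux_pos_le t b pos hpos h
      omega
  have heq : ∀ v w, blk v = blk w → pos v = pos w → v = w := by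
    have : ∀ v w, Relation.ReflTransGen (auxStep t b) v w → pos v = pos w → v = w := by
      intro v w h e
      rcases h.cases_tail with rfl | ⟨m, h1, ⟨c, rfl, rfl⟩⟩
      · rfl
      · have := aux_pos_le t b pos hpos h1
        have := hpos c
        omega
    intro v w h e
    rcases hcmp v w h with h | h
    · exact this v w h e
    · exact (this w v h e.symm).symm
  have hblk : ∀ c, blk (t c) = blk (b c) := fun c => (Quot.sound ⟨c, rfl, rfl⟩).symm
  let mk := Ideal.Quotient.mk I
  have hz : ∀ c1 c2, mk (X (t c1)) * mk (X (b c2)) = mk (X (t c2)) * mk (X (b c1)) := by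
    have : ∀ c1 c2, c1 < c2 →
        mk (X (t c1)) * mk (X (b c2)) = mk (X (t c2)) * mk (X (b c1)) := by
      intro c1 c2 h
      rw [← map_mul, ← map_mul]
      exact Ideal.Quotient.eq.2 (Ideal.subset_span ⟨c1, c2, h, rfl⟩)
    intro c1 c2
    rcases lt_trichotomy c1 c2 with h | rfl | h
    · exact this _ _ h
    · rfl
    · exact (this _ _ h).symm
  let g : V → (Option B →₀ ℕ) := fun v =>
    Finsupp.single (some (blk v)) 1 + Finsupp.single none (pos v)
  let e : (V →₀ ℕ) → (Option B →₀ ℕ) := fun u => ((Finsupp.toMultiset u).map g).sum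
  have hmon : ∀ u w, e u = e w → mk (monomial u 1) = mk (monomial w 1) := by
    intro u w huw
    have c1 : ∀ (U : Multiset V) β, (U.map g).sum (some β) = (U.map blk).count β := by
      intro U β
      induction U using Multiset.induction_on with
      | empty => simp
      | cons a U ih =>
        simp only [Multiset.map_cons, Multiset.sum_cons, Finsupp.add_apply, ih,
          Multiset.count_cons, g, Finsupp.single_apply]
        simp [add_comm, eq_comm]
    have c2 : ∀ (U : Multiset V), (U.map g).sum none = (U.map pos).sum := by
      intro U
      induction U using Multiset.induction_on with
      | empty => simp
      | cons a U ih =>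
        rw [Multiset.map_cons, Multiset.sum_cons, Finsupp.add_apply, ih, Multiset.map_cons,
          Multiset.sum_cons]
        simp [g]
    have d1 : (Finsupp.toMultiset u).map blk = (Finsupp.toMultiset w).map blk := by
      ext β
      rw [← c1, ← c1]
      exact DFunLike.congr_fun huw _
    obtain ⟨Z, h1, h2, h3⟩ := aux_pair blk _ _ d1
    have d2 : ((Finsupp.toMultiset u).map pos).sum = ((Finsupp.toMultiset w).map pos).sum := by
      rw [← c2, ← c2]
      exact DFunLike.congr_fun huw _
    rw [← h1, ← h2, Multiset.map_map, Multiset.map_map] at d2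
    have := aux_move t b pos blk hpos hblk hlt heq (fun v => mk (X v)) hz _ Z rfl h3 d2
    rw [aux_monomial, aux_monomial, ← h1, ← h2]
    simpa [map_multiset_prod, Multiset.map_map] using this
  let π : MvPolynomial V K →ₐ[K] MvPolynomial (Option B) K :=
    aeval (fun v => X (some (blk v)) * X none ^ pos v)
  have hπ : ∀ u, π (monomial u 1) = monomial (e u) 1 := by
    intro u
    rw [aux_monomial]
    simp only [e]
    generalize Finsupp.toMultiset u = U
    induction U using Multiset.induction_on with
    | empty => simp
    | cons a U ih =>
      simp only [Multiset.map_cons, Multiset.prod_cons, Multiset.sum_cons, map_mul, ih]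
      have : π (X a) = monomial (g a) 1 := by
        simp only [π, g, aeval_X]
        simp [X, monomial_pow, monomial_mul]
      rw [this, monomial_mul, one_mul]
  let ψ : MvPolynomial (Option B) K →ₗ[K] (MvPolynomial V K ⧸ I) :=
    (basisMonomials (Option B) K).constr K
      (fun s => if h : ∃ u, e u = s then mk (monomial h.choose 1) else 0)
  have hψ : ∀ u, ψ (monomial (e u) 1) = mk (monomial u 1) := by
    intro u
    have : (monomial (e u) (1 : K)) = basisMonomials (Option B) K (e u) := by
      simp
    rw [this, Module.Basis.constr_basis, dif_pos ⟨u, rfl⟩]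
    exact hmon _ _ (Exists.choose_spec (⟨u, rfl⟩ : ∃ u', e u' = e u))
  have hcomp : ∀ f, ψ (π f) = mk f := by
    have : ψ ∘ₗ π.toLinearMap = (Ideal.Quotient.mkₐ K I).toLinearMap := by
      apply (basisMonomials V K).ext
      intro u
      simp only [coe_basisMonomials, LinearMap.comp_apply, AlgHom.toLinearMap_apply]
      rw [hπ, hψ]
      rfl
    intro f
    exact LinearMap.congr_fun this f
  have hker : ∀ f, π f = 0 → f ∈ I := by
    intro f h
    have := hcomp f
    rw [h, map_zero] at this
    exact Ideal.Quotient.eq_zero_iff_mem.1 this.symm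
  have hker2 : ∀ f ∈ I, π f = 0 := by
    intro f h
    have : I ≤ RingHom.ker π := by
      rw [hI, Ideal.span_le]
      rintro _ ⟨c1, c2, -, rfl⟩
      simp only [SetLike.mem_coe, RingHom.mem_ker, map_sub, map_mul, π, aeval_X, hblk, hpos]
      ring
    exact this h
  have h1 := hker2 _ hf
  rw [map_mul, mul_eq_zero] at h1
  rcases h1 with h1 | h1
  · exfalso
    simp only [map_sub, π, aeval_X, hp] at h1
    rw [← sub_mul, mul_eq_zero] at h1
    rcases h1 with h1 | h1
    · rw [sub_eq_zero] at h1
      have := X_injective h1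
      simp only [Option.some.injEq] at this
      exact hxy (heq _ _ this.symm hp)
    · exact pow_ne_zero _ (X_ne_zero _) h1
  · exact hker _ h1

/-- the image of an ideal under a substitution of variables -/
def auxMap {V K : Type*} [Field K] (σ : V → V) (N : Ideal (MvPolynomial V K)) :
    Ideal (MvPolynomial V K) :=
  Ideal.map (rename (R := K) σ) N

theorem aux_sub_rename {V K : Type*} [Field K] (σ : V → V) (N Q : Ideal (MvPolynomial V K))
    (a : MvPolynomial V K)
    (h1 : ∀ q ∈ Q, rename σ q = 0) (h2 : ∀ f, rename σ f - f ∈ Q) (h3 : rename σ a = a)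
    (h4 : ∀ f, a * f ∈ auxMap σ N → f ∈ auxMap σ N) (f : MvPolynomial V K)
    (hf : a * f ∈ N ⊔ Q) : f ∈ N ⊔ Q :=
  aux_sub_step (R := MvPolynomial V K)
    (rename (R := K) σ : MvPolynomial V K →ₐ[K] MvPolynomial V K)
    N Q a h1 h2 h3 h4 f hf

/-- the index of a variable after all identifications -/
def auxPos (n k : ℕ) (i : ℕ → ℕ) : SVar n k → ℕ :=
  Sum.elim (fun m => (m : ℕ) + 1)
    (Sum.elim (fun l => i ((l : ℕ) + 2)) (fun e => if e = 0 then i (k - 1) else i 1))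

/-- the first variable of the `l`-th element of the sequence -/
def auxY (n k : ℕ) (l : ℕ) : SVar n k :=
  if l < k - 1 then vvS n k l else if l = k - 1 then s1S n k else s2S n k

/-- the index of the second variable of the `l`-th element of the sequence -/
def auxXi (k : ℕ) (i : ℕ → ℕ) (l : ℕ) : ℕ :=
  if l < k - 1 then i (l + 2) else if l = k - 1 then i (k - 1) else i 1

/-- the substitution after `J` steps -/
def auxSig (n k : ℕ) (i : ℕ → ℕ) (J : ℕ) : SVar n k → SVar n k :=
  Sum.elim Sum.inl
    (Sum.elim (fun l => if (l : ℕ) < J then xvS n k (i ((l : ℕ) + 2)) else Sum.inr (Sum.inl l))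
      (fun e => if e = 0 then (if k - 1 < J then xvS n k (i (k - 1)) else s1S n k)
        else (if k < J then xvS n k (i 1) else s2S n k)))

theorem auxSig_x (n k : ℕ) (i : ℕ → ℕ) (J j : ℕ) : auxSig n k i J (xvS n k j) = xvS n k j := rfl

theorem auxSig_y (n k : ℕ) (i : ℕ → ℕ) (J l : ℕ) (hk : 2 ≤ k) (hl : l ≤ k) :
    auxSig n k i J (auxY n k l) = if l < J then xvS n k (auxXi k i l) else auxY n k l := by
  unfold auxY auxXi
  by_cases h1 : l < k - 1
  · simp only [h1, if_true, vvS, dif_pos, auxSig, Sum.elim_inr, Sum.elim_inl]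
  · by_cases h2 : l = k - 1
    · subst h2
      simp [s1S, auxSig]
    · have : l = k := by omega
      subst this
      simp [h1, h2, s2S, auxSig]

theorem aux_var (n k : ℕ) (hk : 2 ≤ k) (v : SVar n k) :
    (∃ j, 1 ≤ j ∧ j ≤ n + 1 ∧ v = xvS n k j) ∨ ∃ l ≤ k, v = auxY n k l := by
  rcases v with m | l | e
  · left
    refine ⟨m + 1, by omega, by omega, ?_⟩
    simp only [xvS, Nat.add_sub_cancel]
    congr 1
    ext
    simp [Nat.mod_eq_of_lt m.2]
  · right
    exact ⟨l, by omega, by simp [auxY, vvS]⟩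
  · right
    fin_cases e
    · exact ⟨k - 1, by omega, by simp [auxY, s1S]⟩
    · refine ⟨k, le_rfl, ?_⟩
      rw [auxY, if_neg (by omega), if_neg (by omega)]
      rfl

theorem auxPos_x (n k : ℕ) (i : ℕ → ℕ) (j : ℕ) (h1 : 1 ≤ j) (h2 : j ≤ n + 1) :
    auxPos n k i (xvS n k j) = j := by
  simp only [auxPos, xvS, Sum.elim_inl]
  rw [Nat.mod_eq_of_lt (by omega)]
  omega

theorem auxPos_y (n k : ℕ) (i : ℕ → ℕ) (l : ℕ) :
    auxPos n k i (auxY n k l) = auxXi k i l := by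
  unfold auxY auxXi
  by_cases h1 : l < k - 1
  · simp [h1, vvS, auxPos]
  · by_cases h2 : l = k - 1
    · subst h2
      simp [s1S, auxPos]
    · simp [h1, h2, s2S, auxPos]

theorem auxY_ne_x (n k : ℕ) (l j : ℕ) : auxY n k l ≠ xvS n k j := by
  unfold auxY
  by_cases h1 : l < k - 1
  · simp [h1, vvS, xvS]
  · by_cases h2 : l = k - 1
    · subst h2
      simp [s1S, xvS]
    · simp [h1, h2, s2S, xvS]

theorem aux_mono (k : ℕ) (i : ℕ → ℕ) (himono : ∀ r < k, i r < i (r + 1)) :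
    ∀ b ≤ k, ∀ a ≤ b, i a ≤ i b := by
  intro b
  induction b with
  | zero => intro _ a ha; rw [Nat.le_zero.1 ha]
  | succ b ih =>
    intro hb a ha
    rcases Nat.lt_or_ge b a with h | h
    · rw [show a = b + 1 by omega]
    · exact (ih (by omega) a h).trans (himono b (by omega)).le

theorem aux_find (i : ℕ → ℕ) (m : ℕ) (h0 : i 0 ≤ m) :
    ∀ k, m < i k → ∃ r < k, i r ≤ m ∧ m < i (r + 1) := by
  intro k
  induction k with
  | zero => intro h; omega
  | succ k ih =>
    intro h
    by_cases h1 : m < i k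
    · obtain ⟨r, hr, h2⟩ := ih h1
      exact ⟨r, by omega, h2⟩
    · exact ⟨k, by omega, by omega, h⟩

set_option maxHeartbeats 1000000 in
/-- data describing the columns of the matrix -/
theorem aux_main (K : Type*) [Field K] (n k : ℕ) (hk : 2 ≤ k)
    (i : ℕ → ℕ) (hi0 : i 0 = 1) (hik : i k = n + 1) (himono : ∀ r < k, i r < i (r + 1))
    (b t : Fin n → SVar n k)
    (hb : ∀ r s : ℕ, r < k → s < i (r + 1) - i r → ∀ c : Fin n, (c : ℕ) = i r - 1 + s →
      b c = if r = k - 1 ∧ s = i k - i (k - 1) - 1 then s1S n k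
              else xvS n k (i (r + 1) - 1 - s))
    (ht : ∀ r s : ℕ, r < k → s < i (r + 1) - i r → ∀ c : Fin n, (c : ℕ) = i r - 1 + s →
      t c = if s = 0 then (if r = 0 then s2S n k else vvS n k (r - 1))
              else xvS n k (i (r + 1) - s))
    (As : List (MvPolynomial (SVar n k) K))
    (hAs : As = (List.range (k + 1)).map fun l => X (auxY n k l) - X (xvS n k (auxXi k i l))) :
    IsRegSeqOnQuot (MvPolynomial (SVar n k) K) As
      (Ideal.span { f | ∃ c₁ c₂ : Fin n, c₁ < c₂ ∧ f = X (b c₁) * X (t c₂) }) ∧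
    IsRegSeqOnQuot (MvPolynomial (SVar n k) K) As
      (Ideal.span { f | ∃ c₁ c₂ : Fin n, c₁ < c₂ ∧
        f = X (t c₁) * X (b c₂) - X (t c₂) * X (b c₁) }) := by
  classical
  have mono := aux_mono k i himono
  have ex : ∀ c : Fin n, ∃ r s : ℕ, r < k ∧ s < i (r + 1) - i r ∧ (c : ℕ) = i r - 1 + s ∧
      1 ≤ i r := by
    intro c
    obtain ⟨r, hr, h1, h2⟩ := aux_find i (c + 1) (by omega) k (by omega)
    have := mono r hr.le 0 (by omega)
    exact ⟨r, c + 1 - i r, hr, by omega, by omega, by omega⟩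
  choose r s hr hs hc h1i using ex
  have hb' := fun c => hb (r c) (s c) (hr c) (hs c) c (hc c)
  have ht' := fun c => ht (r c) (s c) (hr c) (hs c) c (hc c)
  have hin : ∀ c, i (r c + 1) ≤ n + 1 := fun c => hik ▸ mono k le_rfl _ (hr c)
  have xi : ∀ l ≤ k, 1 ≤ auxXi k i l ∧ auxXi k i l ≤ n + 1 := by
    have : ∀ l ≤ k, 1 ≤ i l ∧ i l ≤ n + 1 := fun l hl =>
      ⟨hi0 ▸ mono l hl 0 (by omega), hik ▸ mono k le_rfl l hl⟩
    intro l hl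
    unfold auxXi
    split_ifs
    · exact this _ (by omega)
    · exact this _ (by omega)
    · exact this _ (by omega)
  have hs1 : s1S n k = auxY n k (k - 1) := by simp [auxY]
  have hs2 : s2S n k = auxY n k k := by
    rw [auxY, if_neg (by omega), if_neg (by omega)]
  have hvv : ∀ l < k - 1, vvS n k l = auxY n k l := fun l hl => by simp [auxY, hl]
  have pb : ∀ c, auxPos n k i (b c) = i (r c + 1) - 1 - s c := by
    intro c
    have := hs c
    have := h1i c
    have := hin c
    rw [hb' c]
    split_ifs with h
    · obtain ⟨h1, h2⟩ := h
      rw [hs1, auxPos_y, h1, Nat.sub_add_cancel (by omega)]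
      simp only [auxXi, lt_irrefl, if_false, if_true]
      rw [h1, Nat.sub_add_cancel (by omega)] at this
      have h3 := hs c
      rw [h1, Nat.sub_add_cancel (by omega)] at h3
      omega
    · exact auxPos_x _ _ _ _ (by omega) (by omega)
  have pt : ∀ c, auxPos n k i (t c) = i (r c + 1) - s c := by
    intro c
    have := hs c
    have := h1i c
    have := hin c
    have := hr c
    rw [ht' c]
    split_ifs with h h'
    · rw [hs2, auxPos_y, auxXi, if_neg (by omega), if_neg (by omega), h, h']
      simp
    · rw [hvv _ (by omega), auxPos_y, auxXi, if_pos (by omega), h]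
      rw [show r c - 1 + 2 = r c + 1 by omega]
      simp
    · exact auxPos_x _ _ _ _ (by omega) (by omega)
  have sigpos : ∀ J v, auxPos n k i (auxSig n k i J v) = auxPos n k i v := by
    intro J v
    rcases aux_var n k hk v with ⟨j, h1, h2, rfl⟩ | ⟨l, hl, rfl⟩
    · rfl
    · rw [auxSig_y n k i J l hk hl]
      split_ifs
      · rw [auxPos_y, auxPos_x _ _ _ _ (xi l hl).1 (xi l hl).2]
      · rfl
  have sigy : ∀ J v, auxSig n k i J v = auxY n k J → v = auxY n k J := by
    intro J v h
    rcases aux_var n k hk v with ⟨j, h1, h2, rfl⟩ | ⟨l, hl, rfl⟩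
    · exact absurd h.symm (auxY_ne_x n k _ _)
    · rw [auxSig_y n k i J l hk hl] at h
      split_ifs at h
      · exact absurd h.symm (auxY_ne_x n k _ _)
      · exact h
  -- block order
  have blk1 : ∀ c c', c ≤ c' → r c ≤ r c' := by
    intro c c' h
    by_contra hlt
    have := mono (r c) (hr c).le (r c' + 1) (by omega)
    have := hs c'
    have := hc c
    have := hc c'
    have := h1i c'
    have : (c : ℕ) ≤ c' := h
    omega
  have blk2 : ∀ c c', r c < r c' → i (r c + 1) ≤ i (r c') := fun c c' h =>
    mono (r c') (hr c').le _ h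
  have len : As.length = k + 1 := by simp [hAs]
  have get : ∀ l (h : l < As.length), As[l] = X (auxY n k l) - X (xvS n k (auxXi k i l)) := by
    intro l h
    subst hAs
    simp
  have common : ∀ (J : ℕ), J ≤ k → ∀ N : Ideal (MvPolynomial (SVar n k) K),
      (∀ f, (X (auxY n k J) - X (xvS n k (auxXi k i J))) * f ∈
        auxMap (auxSig n k i J) N →
        f ∈ auxMap (auxSig n k i J) N) →
      ∀ f, (X (auxY n k J) - X (xvS n k (auxXi k i J))) * f ∈
          N ⊔ Ideal.span {a | a ∈ As.take J} →
        f ∈ N ⊔ Ideal.span {a | a ∈ As.take J} := by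
    intro J hJ N h f hf
    refine aux_sub_rename (auxSig n k i J) N _ _ ?_ ?_ ?_ h f hf
    · intro q hq
      have : Ideal.span {a | a ∈ As.take J} ≤
          RingHom.ker (rename (R := K) (auxSig n k i J)) := by
        rw [Ideal.span_le]
        intro a ha
        obtain ⟨l, hl, rfl⟩ := List.mem_take_iff_getElem.1 ha
        rw [SetLike.mem_coe, RingHom.mem_ker, get]
        simp only [map_sub, rename_X]
        rw [auxSig_y n k i J l hk (by omega), auxSig_x, if_pos (by omega), sub_self]
      exact this hq
    · intro g
      have key : (Ideal.Quotient.mkₐ K (Ideal.span {a | a ∈ As.take J})).comp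
          (rename (auxSig n k i J)) = Ideal.Quotient.mkₐ K (Ideal.span {a | a ∈ As.take J}) := by
        apply MvPolynomial.algHom_ext
        intro v
        simp only [AlgHom.comp_apply, rename_X]
        rcases aux_var n k hk v with ⟨j, h1, h2, rfl⟩ | ⟨l, hl, rfl⟩
        · rfl
        · rw [auxSig_y n k i J l hk hl]
          split_ifs with hlJ
          · symm
            refine Ideal.Quotient.eq.2 (Ideal.subset_span ?_)
            rw [Set.mem_setOf_eq, List.mem_take_iff_getElem]
            exact ⟨l, by omega, get l (by omega)⟩
          · rfl
      exact Ideal.Quotient.eq.1 (AlgHom.congr_fun key g)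
    · simp only [map_sub, rename_X]
      rw [auxSig_y n k i J J hk hJ, auxSig_x, if_neg (lt_irrefl _)]
  have top : ∀ N : Ideal (MvPolynomial (SVar n k) K),
      N ≤ RingHom.ker (constantCoeff (R := K) (σ := SVar n k)) →
      N ⊔ Ideal.span {a | a ∈ As} ≠ ⊤ := by
    intro N hN h
    have h2 : N ⊔ Ideal.span {a | a ∈ As} ≤
        RingHom.ker (constantCoeff (R := K) (σ := SVar n k)) := by
      refine sup_le hN ?_
      rw [Ideal.span_le]
      intro a ha
      rw [Set.mem_setOf_eq, hAs, List.mem_map] at ha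
      obtain ⟨l, -, rfl⟩ := ha
      simp [RingHom.mem_ker]
    rw [h, top_le_iff] at h2
    exact RingHom.ker_ne_top _ h2
  constructor
  · refine ⟨?_, ?_⟩
    · intro J hJ f hf
      rw [List.get_eq_getElem, get] at hf
      have hJ' : J ≤ k := by omega
      refine common J hJ' _ ?_ f hf
      clear hf f
      have e : auxMap (auxSig n k i J)
          (Ideal.span { f : MvPolynomial (SVar n k) K |
            ∃ c₁ c₂ : Fin n, c₁ < c₂ ∧ f = X (b c₁) * X (t c₂) }) =
          Ideal.span { f : MvPolynomial (SVar n k) K | ∃ c₁ c₂ : Fin n, c₁ < c₂ ∧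
            f = X (auxSig n k i J (b c₁)) * X (auxSig n k i J (t c₂)) } := by
        rw [auxMap, Ideal.map_span]
        congr 1
        ext g
        constructor
        · rintro ⟨_, ⟨c1, c2, h, rfl⟩, rfl⟩
          exact ⟨c1, c2, h, by simp⟩
        · rintro ⟨c1, c2, h, rfl⟩
          exact ⟨_, ⟨c1, c2, h, rfl⟩, by simp⟩
      rw [e]
      intro f hf
      refine aux_M_nzd (fun c => auxSig n k i J (t c)) (fun c => auxSig n k i J (b c))
        (xvS n k (auxXi k i J)) (auxY n k J) (auxY_ne_x _ _ _ _).symm ?_ f hf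
      intro c1 c2 c3 c4 h12 h34 hy hx
      have hy' : b c1 = auxY n k J ∨ t c2 = auxY n k J := hy.imp (sigy J _) (sigy J _)
      have h12' : (c1 : ℕ) < c2 := h12
      have h34' : (c3 : ℕ) < c4 := h34
      -- the three cases
      rcases lt_trichotomy J (k - 1) with hJk | hJk | hJk
      · have hyv : auxY n k J = vvS n k J := (hvv J hJk).symm
        have hvne : vvS n k J ≠ s1S n k := by simp [vvS, hJk, s1S]
        have hvne2 : vvS n k J ≠ s2S n k := by simp [vvS, hJk, s2S]
        have hxi : auxXi k i J = i (J + 2) := by simp [auxXi, hJk]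
        have hb1 : ∀ c, b c ≠ auxY n k J := by
          intro c h
          rw [hb' c] at h
          split_ifs at h
          · rw [hyv] at h; exact hvne h.symm
          · exact auxY_ne_x _ _ _ _ h.symm
        have hy2 := hy'.resolve_left (hb1 _)
        have hc2 : s c2 = 0 ∧ r c2 = J + 1 := by
          have h := hy2
          rw [ht' c2] at h
          split_ifs at h with h1 h2
          · rw [hyv] at h; exact absurd h.symm hvne2
          · refine ⟨h1, ?_⟩
            have := hr c2
            rw [hyv] at h
            simp only [vvS, hJk, dif_pos, show r c2 - 1 < k - 1 by omega] at h
            simp at h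
            omega
          · exact absurd h.symm (auxY_ne_x _ _ _ _)
        have hxpos : auxPos n k i (xvS n k (auxXi k i J)) = i (J + 2) := by
          rw [auxPos_x _ _ _ _ (xi J hJ').1 (xi J hJ').2, hxi]
        have ht4 : auxSig n k i J (t c4) ≠ xvS n k (auxXi k i J) := by
          intro h
          have hp := congrArg (auxPos n k i) h
          rw [sigpos, hxpos, pt] at hp
          have := hs c4
          have := h1i c4
          have hs0 : s c4 = 0 := by
            by_contra hne
            rcases Nat.lt_or_ge (r c4) (J + 2) with h' | h'
            · have := mono (J + 2) (by omega) (r c4 + 1) (by omega)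
              omega
            · have := mono (r c4) (hr c4).le (J + 2) h'
              omega
          have hr4 : r c4 = J + 1 := by
            rcases lt_trichotomy (r c4) (J + 1) with h' | h' | h'
            · have := mono (J + 1) (by omega) (r c4 + 1) (by omega)
              have := himono (J + 1) (by omega)
              rw [show J + 1 + 1 = J + 2 by omega] at this
              omega
            · exact h'
            · have := mono (r c4) (hr c4).le (J + 2) h'
              omega
          have ht4 := ht' c4
          rw [if_pos hs0, if_neg (by omega), hr4, Nat.add_sub_cancel, ← hyv] at ht4
          rw [ht4, auxSig_y n k i J J hk hJ', if_neg (lt_irrefl _)] at h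
          exact auxY_ne_x _ _ _ _ h
        have hx3 := hx.resolve_right ht4
        have hp3 := congrArg (auxPos n k i) hx3
        rw [sigpos, hxpos, pb] at hp3
        have a1 := hs c3
        have a2 := h1i c3
        have hr3 : r c3 = J + 2 := by
          rcases lt_trichotomy (r c3) (J + 2) with h' | h' | h'
          · have := mono (J + 2) (by omega) (r c3 + 1) (by omega)
            omega
          · exact h'
          · have := mono (r c3) (hr c3).le (J + 2 + 1) h'
            have := himono (J + 2) (by have := hr c3; omega)
            omega
        have hs3 : (c3 : ℕ) = i (J + 2 + 1) - 2 := by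
          have q := hc c3
          have q1 := a1
          have q2 := a2
          have q3 := hp3
          rw [hr3] at q q1 q2 q3
          omega
        have hr4 : r c3 < r c4 := by
          by_contra hle
          have h' := blk1 c3 c4 h34.le
          have e4 : r c4 = J + 2 := by omega
          have q1 := hc c4
          have q2 := hs c4
          rw [e4] at q1 q2
          rw [hr3] at a2
          omega
        have hr1 : r c1 < J + 1 := by
          by_contra hle
          have h' := blk1 c1 c2 h12.le
          have e1 : r c1 = J + 1 := by omega
          have q1 := hc c1
          have q2 := hc c2
          rw [hc2.1, hc2.2] at q2
          rw [e1] at q1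
          omega
        refine ⟨hy.resolve_left (fun h => hb1 _ (sigy J _ h)), hx3, ?_, ?_⟩
        · by_contra hle
          have := blk1 c4 c1 (not_lt.1 hle)
          omega
        · intro h
          have hp := congrArg (auxPos n k i) h
          simp only [sigpos, pb, pt] at hp
          have q1 := hs c1
          have q2 := hs c4
          have q3 := blk2 c1 c4 (by omega)
          have q4 := h1i c1
          omega
      · exfalso
        have hy1 : auxY n k J = s1S n k := by rw [hJk, ← hs1]
        rw [hy1] at hy'
        rcases hy' with h | h
        · rw [hb' c1] at h
          split_ifs at h with h'
          · have q1 := hc c1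
            have q2 := hs c1
            have q3 := h1i c1
            rw [h'.1, Nat.sub_add_cancel (by omega)] at q2
            rw [h'.1] at q1 q3
            omega
          · rw [← hy1] at h
            exact auxY_ne_x _ _ _ _ h.symm
        · rw [ht' c2] at h
          have := hr c2
          split_ifs at h
          · simp [s1S, s2S] at h
          · simp [s1S, vvS, show r c2 - 1 < k - 1 by omega] at h
          · rw [← hy1] at h
            exact auxY_ne_x _ _ _ _ h.symm
      · exfalso
        have hy1 : auxY n k J = s2S n k := by rw [hs2, show J = k by omega]
        rw [hy1] at hy'
        rcases hy' with h | h
        · rw [hb' c1] at h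
          split_ifs at h
          · simp [s1S, s2S] at h
          · rw [← hy1] at h
            exact auxY_ne_x _ _ _ _ h.symm
        · rw [ht' c2] at h
          have := hr c2
          split_ifs at h with h1 h2
          · have q1 := hc c2
            rw [h1, h2, hi0] at q1
            omega
          · simp [s2S, vvS, show r c2 - 1 < k - 1 by omega] at h
          · rw [← hy1] at h
            exact auxY_ne_x _ _ _ _ h.symm
    · apply top
      rw [Ideal.span_le]
      rintro _ ⟨c1, c2, -, rfl⟩
      simp [RingHom.mem_ker]
  · refine ⟨?_, ?_⟩
    · intro J hJ f hf
      rw [List.get_eq_getElem, get] at hf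
      have hJ' : J ≤ k := by omega
      refine common J hJ' _ ?_ f hf
      clear hf f
      have e : auxMap (auxSig n k i J)
          (Ideal.span { f : MvPolynomial (SVar n k) K | ∃ c₁ c₂ : Fin n, c₁ < c₂ ∧
            f = X (t c₁) * X (b c₂) - X (t c₂) * X (b c₁) }) =
          Ideal.span { f : MvPolynomial (SVar n k) K | ∃ c₁ c₂ : Fin n, c₁ < c₂ ∧
            f = X (auxSig n k i J (t c₁)) * X (auxSig n k i J (b c₂)) -
              X (auxSig n k i J (t c₂)) * X (auxSig n k i J (b c₁)) } := by
        rw [auxMap, Ideal.map_span]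
        congr 1
        ext g
        constructor
        · rintro ⟨_, ⟨c1, c2, h, rfl⟩, rfl⟩
          exact ⟨c1, c2, h, by simp⟩
        · rintro ⟨c1, c2, h, rfl⟩
          exact ⟨_, ⟨c1, c2, h, rfl⟩, by simp⟩
      rw [e]
      intro f hf
      refine aux_I_nzd (fun c => auxSig n k i J (t c)) (fun c => auxSig n k i J (b c))
        (auxPos n k i) ?_ ?_
        (xvS n k (auxXi k i J)) (auxY n k J) (auxY_ne_x _ _ _ _).symm ?_ f hf
      · intro c
        simp only [sigpos, pb, pt]
        have := hs c
        have := h1i c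
        omega
      · intro c c' h
        simp only [sigpos, pb] at h
        have q1 := hs c
        have q2 := h1i c
        have q3 := hs c'
        have q4 := h1i c'
        have e : r c = r c' := by
          rcases lt_trichotomy (r c) (r c') with h' | h' | h'
          · have := blk2 _ _ h'
            omega
          · exact h'
          · have := blk2 _ _ h'
            omega
        have q5 := hc c
        have q6 := hc c'
        rw [e] at h q1 q5
        ext
        omega
      · rw [auxPos_y, auxPos_x _ _ _ _ (xi J hJ').1 (xi J hJ').2]
    · apply top
      rw [Ideal.span_le]
      rintro _ ⟨c1, c2, -, rfl⟩
      simp [RingHom.mem_ker]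

/-- The sequence
`𝒜 = (x_{v_0} - x_{i_2}, …, x_{v_{k-2}} - x_{i_k}, x_{s_1} - x_{i_{k-1}}, x_{s_2} - x_{i_1})`
is a regular sequence on `S/M_{Π,M}` and on `S/I_{Π,M}`, where `I_{Π,M}` (resp. `M_{Π,M}`)
is generated by the `2 × 2` minors (resp. anti-diagonals of `2 × 2` minors) of the block
matrix `A` associated to the sequence `1 = i_0 < i_1 < ⋯ < i_k = n + 1`. -/
theorem statement_13 (K : Type*) [Field K] (n k : ℕ) (hn : 2 ≤ n) (hk : 2 ≤ k)
    (i : ℕ → ℕ) (hi0 : i 0 = 1) (hik : i k = n + 1) (himono : ∀ r < k, i r < i (r + 1))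
    (A : Matrix (Fin 2) (Fin n) (MvPolynomial (SVar n k) K))
    (hA1 : ∀ r t : ℕ, r < k → t < i (r + 1) - i r → ∀ c : Fin n, (c : ℕ) = i r - 1 + t →
      A 1 c = if r = k - 1 ∧ t = i k - i (k - 1) - 1 then X (s1S n k)
              else X (xvS n k (i (r + 1) - 1 - t)))
    (hA0 : ∀ r t : ℕ, r < k → t < i (r + 1) - i r → ∀ c : Fin n, (c : ℕ) = i r - 1 + t →
      A 0 c = if t = 0 then (if r = 0 then X (s2S n k) else X (vvS n k (r - 1)))
              else X (xvS n k (i (r + 1) - t)))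
    (As : List (MvPolynomial (SVar n k) K))
    (hAs : As = ((List.range (k - 1)).map fun j => X (vvS n k j) - X (xvS n k (i (j + 2))))
      ++ [X (s1S n k) - X (xvS n k (i (k - 1))), X (s2S n k) - X (xvS n k (i 1))]) :
    IsRegSeqOnQuot (MvPolynomial (SVar n k) K) As
      (Ideal.span { f | ∃ c₁ c₂ : Fin n, c₁ < c₂ ∧ f = A 1 c₁ * A 0 c₂ }) ∧
    IsRegSeqOnQuot (MvPolynomial (SVar n k) K) As
      (Ideal.span { f | ∃ c₁ c₂ : Fin n, c₁ < c₂ ∧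
        f = A 0 c₁ * A 1 c₂ - A 0 c₂ * A 1 c₁ }) := by
  classical
  have ex : ∀ c : Fin n, ∃ b t : SVar n k, A 1 c = X b ∧ A 0 c = X t := by
    intro c
    obtain ⟨r, hr, h1, h2⟩ := aux_find i (c + 1) (by omega) k (by omega)
    have h3 := aux_mono k i himono r hr.le 0 (by omega)
    have e1 := hA1 r (c + 1 - i r) hr (by omega) c (by omega)
    have e0 := hA0 r (c + 1 - i r) hr (by omega) c (by omega)
    refine ⟨_, if ((c : ℕ) + 1 - i r) = 0 then (if r = 0 then s2S n k else vvS n k (r - 1))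
              else xvS n k (i (r + 1) - (c + 1 - i r)), e1.trans (apply_ite X _ _ _).symm, ?_⟩
    rw [e0]
    split_ifs <;> rfl
  choose b t hb ht using ex
  have main := aux_main K n k hk i hi0 hik himono b t ?_ ?_ As ?_
  · simp only [hb, ht]
    exact main
  · intro r s hr hs c hc
    apply X_injective (R := K)
    rw [← hb, hA1 r s hr hs c hc]
    split_ifs <;> rfl
  · intro r s hr hs c hc
    apply X_injective (R := K)
    rw [← ht, hA0 r s hr hs c hc]
    split_ifs <;> rfl
  · rw [hAs, show k + 1 = (k - 1) + 1 + 1 by omega, List.range_succ, List.range_succ]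
    simp only [List.map_append, List.map_cons, List.map_nil, List.append_assoc,
      List.cons_append, List.nil_append]
    congr 1
    · apply List.map_congr_left
      intro l hl
      rw [List.mem_range] at hl
      simp [auxY, auxXi, hl]
    · simp [auxY, auxXi]
end
end
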